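/- arXiv:1803.09416 — 2 statements merged into one kernel-verified Lean document; each statement's English description precedes it below -/
import Mathlib

section
/- Let G be a 2-connected claw-free simple graph of order n. If every endvertex of each induced net of G has degree at least (n-2)/3 in G, then G is hamiltonian. -/
open SimpleGraph

/-- The net: vertices 0,1,2 form a triangle, and 3,4,5 are pendant vertices
attached to 0,1,2 respectively.  Its endvertices are 3,4,5. -/
def netGraph : SimpleGraph (Fin 6) :=
  SimpleGraph.fromEdgeSet {s(0, 1), s(1, 2), s(0, 2), s(0, 3), s(1, 4), s(2, 5)}

/-- `f` is an induced copy of `G'` in `G`: an injective map which preserves and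
reflects adjacency. -/
def IsInducedCopy {W V : Type*} (G' : SimpleGraph W) (G : SimpleGraph V) (f : W → V) : Prop :=
  Function.Injective f ∧ ∀ a b : W, G'.Adj a b ↔ G.Adj (f a) (f b)

/-- A graph is claw-free if it has no induced subgraph isomorphic to `K_{1,3}`. -/
def ClawFree {V : Type*} (G : SimpleGraph V) : Prop :=
  ¬ ∃ f : (Fin 1 ⊕ Fin 3) → V, IsInducedCopy (completeBipartiteGraph (Fin 1) (Fin 3)) G f

/-- A graph is 2-connected if it has at least 3 vertices and deleting any single
vertex leaves a connected graph. -/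
def TwoConnected {V : Type*} [Fintype V] (G : SimpleGraph V) : Prop :=
  3 ≤ Fintype.card V ∧ ∀ v : V, (G.induce {w | w ≠ v}).Connected


open SimpleGraph

/-- `Seg R a b m`: there is an `R`-path from `a` to `b` whose multiset of vertices is `m`. -/
inductive Seg {V : Type*} (R : V → V → Prop) : V → V → Multiset V → Prop
  | single (a : V) : Seg R a a {a}
  | cons {a b c : V} {m : Multiset V} : R a b → Seg R b c m → Seg R a c (a ::ₘ m)

namespace Seg
variable {V : Type*} {R : V → V → Prop} {a b c d x : V} {m m' : Multiset V}

theorem append (h : Seg R a b m) (hbc : R b c) (h' : Seg R c d m') : Seg R a d (m + m') := by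
  induction h with
  | single a => exact Multiset.singleton_add a m' ▸ Seg.cons hbc h'
  | cons h1 _ ih => rw [Multiset.cons_add]; exact Seg.cons h1 (ih hbc)

theorem left_mem (h : Seg R a b m) : a ∈ m := by
  cases h <;> simp

theorem right_mem (h : Seg R a b m) : b ∈ m := by
  induction h with
  | single a => simp
  | cons _ _ ih => exact Multiset.mem_cons_of_mem ih

theorem reverse (hR : ∀ u v, R u v → R v u) (h : Seg R a b m) : Seg R b a m := by
  induction h with
  | single a => exact Seg.single a
  | @cons a b c m h1 _ ih =>
    have := ih.append (hR _ _ h1) (Seg.single a)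
    rwa [add_comm, Multiset.singleton_add] at this

theorem mono {R' : V → V → Prop} (hR : ∀ u v, R u v → R' u v) (h : Seg R a b m) :
    Seg R' a b m := by
  induction h with
  | single a => exact Seg.single a
  | cons h1 _ ih => exact Seg.cons (hR _ _ h1) ih

theorem split (h : Seg R a b m) (hx : x ∈ m) : ∃ m1 m2, m = m1 + {x} + m2 ∧
    ((m1 = 0 ∧ x = a) ∨ ∃ p, Seg R a p m1 ∧ R p x) ∧
    ((m2 = 0 ∧ x = b) ∨ ∃ q, R x q ∧ Seg R q b m2) := by
  induction h with
  | single a =>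
    have : x = a := by simpa using hx
    subst this
    exact ⟨0, 0, by simp, Or.inl ⟨rfl, rfl⟩, Or.inl ⟨rfl, rfl⟩⟩
  | @cons a b c m h1 h2 ih =>
    rcases Multiset.mem_cons.1 hx with rfl | hx
    · exact ⟨0, m, by simp, Or.inl ⟨rfl, rfl⟩, Or.inr ⟨b, h1, h2⟩⟩
    · obtain ⟨m1, m2, rfl, hl, hr⟩ := ih hx
      refine ⟨a ::ₘ m1, m2, by simp, Or.inr ?_, hr⟩
      rcases hl with ⟨rfl, rfl⟩ | ⟨p, hp, hpx⟩
      · exact ⟨a, Seg.single a, h1⟩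
      · exact ⟨p, Seg.cons h1 hp, hpx⟩

/-- From a segment to a list. -/
theorem exists_list (h : Seg R a b m) : ∃ l : List V, ((a :: l : List V) : Multiset V) = m ∧
    (a :: l).IsChain R ∧ (a :: l).getLast? = some b := by
  induction h with
  | single a => exact ⟨[], by simp, by simp, by simp⟩
  | @cons a b c m h1 h2 ih =>
    obtain ⟨l, h3, h4, h5⟩ := ih
    refine ⟨b :: l, by rw [← h3]; rfl, by simp_all, by simpa using h5⟩

theorem of_list (a : V) (l : List V) (h : (a :: l).IsChain R) :
    ∃ b, Seg R a b ((a :: l : List V) : Multiset V) := by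
  induction l generalizing a with
  | nil => exact ⟨a, Seg.single a⟩
  | cons c l ih =>
    obtain ⟨h1, h2⟩ := List.isChain_cons_cons.1 h
    obtain ⟨b, hb⟩ := ih c h2
    exact ⟨b, Seg.cons h1 hb⟩

end Seg

/-- Hamiltonian cycle, in terms of segments. -/
def HamC {V : Type*} [Fintype V] (M : SimpleGraph V) : Prop :=
  ∃ a b, M.Adj a b ∧ Seg M.Adj a b (Finset.univ : Finset V).val

theorem HamC.isHamiltonian {V : Type*} [Fintype V] [DecidableEq V] {G : SimpleGraph V}
    (h3 : 3 ≤ Fintype.card V) (h : HamC G) : G.IsHamiltonian := by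
  intro _
  obtain ⟨a, b, hab, hs⟩ := h
  obtain ⟨l, h1, h2, h3'⟩ := hs.exists_list
  have hnd : (a :: l).Nodup := by
    rw [← Multiset.coe_nodup, h1]; exact Finset.univ.nodup
  have hmem : ∀ v, v ∈ a :: l := by
    intro v; rw [← Multiset.mem_coe, h1]; exact Finset.mem_univ v
  have hlen : (a :: l).length = Fintype.card V := by
    rw [← Multiset.coe_card, h1]; rfl
  obtain ⟨p, hp⟩ : ∃ p : G.Walk a b, p.support = a :: l := by
    clear h1 hnd hmem hlen hs h3 hab
    induction l generalizing a with
    | nil =>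
      simp at h3'; subst h3'; exact ⟨Walk.nil, rfl⟩
    | cons c l ih =>
      obtain ⟨h4, h5⟩ := List.isChain_cons_cons.1 h2
      obtain ⟨p, hp⟩ := ih c h5 (by simpa using h3')
      exact ⟨Walk.cons h4 p, by simp [hp]⟩
  have hpp : p.IsPath := by rw [Walk.isPath_def, hp]; exact hnd
  refine ⟨b, Walk.cons hab.symm p, ?_⟩
  rw [Walk.isHamiltonianCycle_iff_isCycle_and_support_count_tail_eq_one]
  refine ⟨?_, ?_⟩
  · rw [Walk.cons_isCycle_iff]
    refine ⟨hpp, fun he => ?_⟩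
    have hl : p.length + 1 = (a :: l).length := by rw [← hp, Walk.length_support]
    cases hpp2 : p with
    | nil => exact hab.ne rfl
    | @cons _ c _ h q =>
      subst hpp2
      have hq := hpp
      rw [Walk.cons_isPath_iff] at hq
      rw [Walk.edges_cons, List.mem_cons] at he
      rcases he with he | he
      · have : b = c := by
          rcases Sym2.eq_iff.1 he with ⟨h1, h2⟩ | ⟨h1, h2⟩
          · exact absurd h1 hab.ne.symm
          · exact h1
        subst this
        have := hq.1
        have hq0 : q.length = 0 := Walk.nil_iff_length_eq.1 (Walk.isPath_iff_nil.1 hq.1)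
        simp at hl hlen
        omega
      · exact hq.2 (q.snd_mem_support_of_mem_edges he)
  · intro v
    simp only [Walk.support_cons, List.tail_cons, hp]
    exact List.count_eq_one_of_mem hnd (hmem v)

/-- usable form of claw-freeness -/
theorem ClawFree.claw {V : Type*} {G : SimpleGraph V} (h : ClawFree G) {c x y z : V}
    (hx : G.Adj c x) (hy : G.Adj c y) (hz : G.Adj c z) (hxy : x ≠ y) (hxz : x ≠ z) (hyz : y ≠ z) :
    G.Adj x y ∨ G.Adj x z ∨ G.Adj y z := by
  by_contra! hcon
  obtain ⟨h1, h2, h3⟩ := hcon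
  apply h
  refine ⟨Sum.elim (fun _ => c) ![x, y, z], ?_, ?_⟩
  · rintro (i | i) (j | j) hij
    · simp [Subsingleton.elim i j]
    · fin_cases j <;> simp at hij <;> simp_all
    · fin_cases i <;> simp at hij <;> simp_all
    · fin_cases i <;> fin_cases j <;> simp at hij ⊢ <;> simp_all
  · rintro (i | i) (j | j)
    · simp
    · fin_cases j <;> simp [hx, hy, hz]
    · fin_cases i <;> simp [hx.symm, hy.symm, hz.symm]
    · fin_cases i <;> fin_cases j <;> simp <;> simp_all [G.adj_comm]

theorem ClawFree.of_claw {V : Type*} {G : SimpleGraph V}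
    (h : ∀ c x y z : V, G.Adj c x → G.Adj c y → G.Adj c z → x ≠ y → x ≠ z → y ≠ z →
      G.Adj x y ∨ G.Adj x z ∨ G.Adj y z) : ClawFree G := by
  rintro ⟨f, hf, ha⟩
  have := h (f (Sum.inl 0)) (f (Sum.inr 0)) (f (Sum.inr 1)) (f (Sum.inr 2))
    ((ha _ _).1 (by simp)) ((ha _ _).1 (by simp)) ((ha _ _).1 (by simp))
    (fun e => by simpa using hf e) (fun e => by simpa using hf e) (fun e => by simpa using hf e)
  rw [← ha, ← ha, ← ha] at this
  simp at this

/-- The net hypothesis in a usable form. -/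
def NetHyp {V : Type*} [Fintype V] (G : SimpleGraph V) : Prop :=
  ∀ a b c a' b' c' : V, G.Adj a b → G.Adj b c → G.Adj a c → G.Adj a a' → G.Adj b b' → G.Adj c c' →
    ¬ G.Adj a b' → ¬ G.Adj a c' → ¬ G.Adj b a' → ¬ G.Adj b c' → ¬ G.Adj c a' → ¬ G.Adj c b' →
    ¬ G.Adj a' b' → ¬ G.Adj a' c' → ¬ G.Adj b' c' → a' ≠ b' → a' ≠ c' → b' ≠ c' →
    Fintype.card V + 1 ≤ 3 * ((G.neighborSet a').ncard + 1) ∧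
    Fintype.card V + 1 ≤ 3 * ((G.neighborSet b').ncard + 1) ∧
    Fintype.card V + 1 ≤ 3 * ((G.neighborSet c').ncard + 1)

theorem NetHyp.of_hnet {V : Type*} [Fintype V] {G : SimpleGraph V}
    (hnet : ∀ f : Fin 6 → V, IsInducedCopy netGraph G f →
      ∀ i : Fin 6, 3 ≤ (i : ℕ) →
        ((Fintype.card V : ℝ) - 2) / 3 ≤ (G.neighborSet (f i)).ncard) : NetHyp G := by
  intro a b c a' b' c' hab hbc hac haa hbb hcc h1 h2 h3 h4 h5 h6 h7 h8 h9 n1 n2 n3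
  have hind : IsInducedCopy netGraph G ![a, b, c, a', b', c'] := by
    have e1 := hab.ne
    have e2 := hbc.ne
    have e3 := hac.ne
    have e4 := haa.ne
    have e5 := hbb.ne
    have e6 := hcc.ne
    have f1 : a ≠ b' := by rintro rfl; exact h6 hac.symm
    have f2 : a ≠ c' := by rintro rfl; exact h4 hab.symm
    have f3 : b ≠ a' := by rintro rfl; exact h5 hbc.symm
    have f4 : b ≠ c' := by rintro rfl; exact h2 hab
    have f5 : c ≠ a' := by rintro rfl; exact h3 hbc
    have f6 : c ≠ b' := by rintro rfl; exact h1 hac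
    refine ⟨?_, ?_⟩
    · intro i j hij
      fin_cases i <;> fin_cases j <;> simp at hij ⊢ <;> simp_all
    · intro i j
      fin_cases i <;> fin_cases j <;> simp [netGraph] <;>
        first | assumption | (apply SimpleGraph.Adj.symm; assumption) |
          (intro hh; have := hh.symm; contradiction)
  have key : ∀ i : Fin 6, 3 ≤ (i : ℕ) →
      Fintype.card V + 1 ≤ 3 * ((G.neighborSet (![a, b, c, a', b', c'] i)).ncard + 1) := by
    intro i hi
    have := hnet _ hind i hi
    have h : (Fintype.card V : ℝ) + 1 ≤
      3 * ((G.neighborSet (![a, b, c, a', b', c'] i)).ncard + 1) := by linarith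
    exact_mod_cast h
  exact ⟨key 3 (by decide), key 4 (by decide), key 5 (by decide)⟩

open SimpleGraph
set_option linter.unusedSectionVars false
set_option linter.unusedVariables false

section EdgeLemma
variable {V : Type*} [Fintype V] {M : SimpleGraph V} {a b x y y1 y2 : V}

theorem Seg.rev {m : Multiset V} (h : Seg M.Adj a b m) : Seg M.Adj b a m :=
  h.reverse fun _ _ h => h.symm

theorem Seg.close {m : Multiset V} (h : Seg M.Adj a b m) (hm : m = (Finset.univ : Finset V).val)
    (hba : M.Adj b a) : HamC M := ⟨a, b, hba.symm, hm ▸ h⟩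

theorem ne_of_univ {p q : V} {m m' k : Multiset V} (hU : m + m' + k = (Finset.univ : Finset V).val)
    (hp : p ∈ m) (hq : q ∈ m') : p ≠ q := by
  have hnd : (m + m' + k).Nodup := hU ▸ Finset.univ.nodup
  have h2 := (Multiset.nodup_add.1 (Multiset.nodup_add.1 hnd).1).2.2
  rintro rfl
  exact Multiset.disjoint_left.1 h2 hp hq

theorem edge_cross {p q : V} {m m' : Multiset V} (h1 : Seg M.Adj a p m) (h2 : Seg M.Adj q b m')
    (hU : m + m' = (Finset.univ : Finset V).val) (hpb : M.Adj p b) (hqa : M.Adj q a) : HamC M :=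
  (h1.append hpb h2.rev).close hU hqa

theorem edge_two {p q r s : V} {m1 m2 m3 : Multiset V} (h1 : Seg M.Adj a p m1) (hpx : M.Adj p x)
    (h2 : Seg M.Adj q r m2) (h3 : Seg M.Adj s b m3) (hys : M.Adj y s)
    (hU : m1 + {x} + m2 + {y} + m3 = (Finset.univ : Finset V).val)
    (hxy : M.Adj x y) (hqb : M.Adj q b) (hra : M.Adj r a) : HamC M :=
  (((((Seg.single x).append hxy (Seg.single y)).append hys h3).append hqb.symm h2).append hra h1
    |>.close (by rw [← hU]; abel) hpx)

/-- vertices whose neighbours are all near `a` or `b` -/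
def NearAB (M : SimpleGraph V) (a b x : V) : Prop :=
  ∀ z, M.Adj x z → z = a ∨ z = b ∨ M.Adj z a ∨ M.Adj z b

theorem edge_c1 {p q r1 s1 r2 s2 : V} {m1 m2 m3 m4 : Multiset V} {Z : Set V}
    (hxa : M.Adj x a) (hxb : M.Adj x b) (h1a : M.Adj y1 a) (h1b : M.Adj y1 b)
    (h2a : M.Adj y2 a) (hx1 : M.Adj x y1) (hx2 : M.Adj x y2)
    (hx : NearAB M a b x)
    (hy1 : ∀ z, M.Adj y1 z → z ∈ Z ∨ z = a ∨ z = b ∨ M.Adj z a ∨ M.Adj z b)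
    (hy2 : ∀ z, M.Adj y2 z → z ∈ Z ∨ z = a ∨ z = b ∨ M.Adj z a ∨ M.Adj z b)
    (hZ : ∀ z ∈ Z, ∀ z' ∈ Z, z ≠ z' → M.Adj z z')
    (s1' : Seg M.Adj a p m1) (e1 : M.Adj p x) (e2 : M.Adj x q) (s2' : Seg M.Adj q r1 m2)
    (e3 : M.Adj r1 y1) (e4 : M.Adj y1 s1) (s3' : Seg M.Adj s1 r2 m3) (e5 : M.Adj r2 y2)
    (e6 : M.Adj y2 s2) (s4' : Seg M.Adj s2 b m4)
    (hU : m1 + {x} + m2 + {y1} + m3 + {y2} + m4 = (Finset.univ : Finset V).val) : HamC M := by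
  by_contra hn
  have hxs : Seg M.Adj x x {x} := Seg.single x
  have h1s : Seg M.Adj y1 y1 {y1} := Seg.single y1
  have h2s : Seg M.Adj y2 y2 {y2} := Seg.single y2
  have hend : Seg M.Adj y1 b ({y1} + m3 + {y2} + m4) :=
    ((h1s.append e4 s3').append e5 h2s).append e6 s4'
  have hmid : Seg M.Adj q b (m2 + ({y1} + m3 + {y2} + m4)) := s2'.append e3 hend
  have hqb : M.Adj q b := by
    rcases hx q e2 with h | h | h | h
    · exact absurd h.symm (ne_of_univ (k := {x} + {y1} + m3 + {y2} + m4) (by rw [← hU]; abel)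
        s1'.left_mem s2'.left_mem)
    · exact absurd h (ne_of_univ (k := {x} + {y1} + m3 + {y2} + m1) (by rw [← hU]; abel)
        s2'.left_mem s4'.right_mem)
    · exact absurd (edge_cross (s1'.append e1 hxs) hmid (by rw [← hU]; abel) hxb h) hn
    · exact h
  have hfirst : Seg M.Adj a r1 (m1 + {x} + m2) := (s1'.append e1 hxs).append e2 s2'
  have hr1 : r1 ∈ Z := by
    rcases hy1 r1 e3.symm with h | h | h | h | h
    · exact h
    · exact absurd h.symm (ne_of_univ (k := {x} + {y1} + m3 + {y2} + m4) (by rw [← hU]; abel)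
        s1'.left_mem s2'.right_mem)
    · exact absurd h (ne_of_univ (k := {x} + {y1} + m3 + {y2} + m1) (by rw [← hU]; abel)
        s2'.right_mem s4'.right_mem)
    · exact absurd (edge_two s1' e1 s2' ((s3'.append e5 h2s).append e6 s4') e4
        (by rw [← hU]; abel) hx1 hqb h) hn
    · exact absurd (edge_cross hfirst hend (by rw [← hU]; abel) h h1a) hn
  have hr2 : r2 ∈ Z := by
    rcases hy2 r2 e5.symm with h | h | h | h | h
    · exact h
    · exact absurd h.symm (ne_of_univ (k := {x} + {y1} + m2 + {y2} + m4) (by rw [← hU]; abel)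
        s1'.left_mem s3'.right_mem)
    · exact absurd h (ne_of_univ (k := {x} + {y1} + m2 + {y2} + m1) (by rw [← hU]; abel)
        s3'.right_mem s4'.right_mem)
    · exact absurd (edge_two s1' e1 ((s2'.append e3 h1s).append e4 s3') s4' e6
        (by rw [← hU]; abel) hx2 hqb h) hn
    · exact absurd (edge_cross ((hfirst.append e3 h1s).append e4 s3') (h2s.append e6 s4')
        (by rw [← hU]; abel) h h2a) hn
  have hne : r1 ≠ r2 := ne_of_univ (k := m1 + {x} + {y1} + {y2} + m4) (by rw [← hU]; abel)
    s2'.right_mem s3'.right_mem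
  exact hn <| ((((hfirst.append (hZ _ hr1 _ hr2 hne) s3'.rev).append e4.symm h1s).append h1b
    s4'.rev).append e6.symm h2s).close (by rw [← hU]; abel) h2a

theorem edge_c2 {p1 s1 p q r2 s2 : V} {m1 m2 m3 m4 : Multiset V} {Z : Set V}
    (hxa : M.Adj x a) (hxb : M.Adj x b) (h1b : M.Adj y1 b)
    (h2a : M.Adj y2 a) (hx1 : M.Adj x y1) (hx2 : M.Adj x y2)
    (hx : NearAB M a b x)
    (hy1 : ∀ z, M.Adj y1 z → z ∈ Z ∨ z = a ∨ z = b ∨ M.Adj z a ∨ M.Adj z b)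
    (hy2 : ∀ z, M.Adj y2 z → z ∈ Z ∨ z = a ∨ z = b ∨ M.Adj z a ∨ M.Adj z b)
    (hZ1 : ∀ z ∈ Z, M.Adj y1 z) (hZ2 : ∀ z ∈ Z, M.Adj y2 z)
    (s1' : Seg M.Adj a p1 m1) (e1 : M.Adj p1 y1) (e2 : M.Adj y1 s1) (s2' : Seg M.Adj s1 p m2)
    (e3 : M.Adj p x) (e4 : M.Adj x q) (s3' : Seg M.Adj q r2 m3) (e5 : M.Adj r2 y2)
    (e6 : M.Adj y2 s2) (s4' : Seg M.Adj s2 b m4)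
    (hU : m1 + {y1} + m2 + {x} + m3 + {y2} + m4 = (Finset.univ : Finset V).val) : HamC M := by
  by_contra hn
  have hxs : Seg M.Adj x x {x} := Seg.single x
  have h1s : Seg M.Adj y1 y1 {y1} := Seg.single y1
  have h2s : Seg M.Adj y2 y2 {y2} := Seg.single y2
  have hA : Seg M.Adj a p (m1 + {y1} + m2) := (s1'.append e1 h1s).append e2 s2'
  have hB : Seg M.Adj q b (m3 + {y2} + m4) := (s3'.append e5 h2s).append e6 s4'
  have hpa : M.Adj p a := by
    rcases hx p e3.symm with h | h | h | h
    · exact absurd h.symm (ne_of_univ (k := {x} + {y1} + m3 + {y2} + m4) (by rw [← hU]; abel)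
        s1'.left_mem s2'.right_mem)
    · exact absurd h (ne_of_univ (k := {x} + {y1} + m3 + {y2} + m1) (by rw [← hU]; abel)
        s2'.right_mem s4'.right_mem)
    · exact h
    · exact absurd (edge_cross hA (hxs.append e4 hB) (by rw [← hU]; abel) h hxa) hn
  have hqb : M.Adj q b := by
    rcases hx q e4 with h | h | h | h
    · exact absurd h.symm (ne_of_univ (k := {x} + {y1} + m2 + {y2} + m4) (by rw [← hU]; abel)
        s1'.left_mem s3'.left_mem)
    · exact absurd h (ne_of_univ (k := {x} + {y1} + m2 + {y2} + m1) (by rw [← hU]; abel)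
        s3'.left_mem s4'.right_mem)
    · exact absurd (edge_cross (hA.append e3 hxs) hB (by rw [← hU]; abel) hxb h) hn
    · exact h
  have hs1 : s1 ∈ Z := by
    rcases hy1 s1 e2 with h | h | h | h | h
    · exact h
    · exact absurd h.symm (ne_of_univ (k := {x} + {y1} + m3 + {y2} + m4) (by rw [← hU]; abel)
        s1'.left_mem s2'.left_mem)
    · exact absurd h (ne_of_univ (k := {x} + {y1} + m3 + {y2} + m1) (by rw [← hU]; abel)
        s2'.left_mem s4'.right_mem)
    · exact absurd (edge_cross (s1'.append e1 h1s) ((s2'.append e3 hxs).append e4 hB)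
        (by rw [← hU]; abel) h1b h) hn
    · exact absurd (edge_two s1' e1 s2' hB e4 (by rw [← hU]; abel) hx1.symm h hpa) hn
  have hr2 : r2 ∈ Z := by
    rcases hy2 r2 e5.symm with h | h | h | h | h
    · exact h
    · exact absurd h.symm (ne_of_univ (k := {x} + {y1} + m2 + {y2} + m4) (by rw [← hU]; abel)
        s1'.left_mem s3'.right_mem)
    · exact absurd h (ne_of_univ (k := {x} + {y1} + m2 + {y2} + m1) (by rw [← hU]; abel)
        s3'.right_mem s4'.right_mem)
    · exact absurd (edge_two hA e3 s3' s4' e6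
        (by rw [← hU]) hx2 hqb h) hn
    · exact absurd (edge_cross ((hA.append e3 hxs).append e4 s3') (h2s.append e6 s4')
        (by rw [← hU]; abel) h h2a) hn
  exact hn <| ((((((s1'.append e1 h1s).append (hZ1 _ hr2) s3'.rev).append hqb s4'.rev).append
    e6.symm h2s).append (hZ2 _ hs1) s2').append e3 hxs).close (by rw [← hU]; abel) hxa

/-- Split off an interior vertex `y` of the final segment, not consecutive to `x`. -/
theorem edge_split {q : V} {m1 m2 : Multiset V} (hn : ¬ HamC M)
    (h1 : Seg M.Adj a x m1) (h2 : Seg M.Adj q b m2)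
    (hU : m1 + m2 = (Finset.univ : Finset V).val)
    (hxb : M.Adj x b) (hya : M.Adj y a) (hyb : M.Adj y b) (hy : y ∈ m2) :
    ∃ m3 m4 r s, m2 = m3 + {y} + m4 ∧ Seg M.Adj q r m3 ∧ M.Adj r y ∧ M.Adj y s ∧
      Seg M.Adj s b m4 := by
  obtain ⟨m3, m4, h, hl, hr⟩ := h2.split hy
  rcases hl with ⟨_, rfl⟩ | ⟨r, hr1, hr2⟩
  · exact absurd (edge_cross h1 h2 hU hxb hya) hn
  rcases hr with ⟨_, rfl⟩ | ⟨s, hs1, hs2⟩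
  · exact absurd rfl hyb.ne
  exact ⟨m3, m4, r, s, h, hr1, hr2, hs1, hs2⟩

theorem edge_split0 (h : Seg M.Adj a b (Finset.univ : Finset V).val)
    (hya : M.Adj y a) (hyb : M.Adj y b) :
    ∃ m3 m4 r s, m3 + {y} + m4 = (Finset.univ : Finset V).val ∧ Seg M.Adj a r m3 ∧ M.Adj r y ∧
      M.Adj y s ∧ Seg M.Adj s b m4 := by
  obtain ⟨m3, m4, h, hl, hr⟩ := h.split (Finset.mem_univ y)
  rcases hl with ⟨_, rfl⟩ | ⟨r, hr1, hr2⟩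
  · exact absurd rfl hya.ne
  rcases hr with ⟨_, rfl⟩ | ⟨s, hs1, hs2⟩
  · exact absurd rfl hyb.ne
  exact ⟨m3, m4, r, s, h.symm, hr1, hr2, hs1, hs2⟩

theorem edge_simple_aux {p q : V} {m1 m2 : Multiset V}
    (hxa : M.Adj x a) (hxb : M.Adj x b) (hya : M.Adj y a) (hyb : M.Adj y b) (hxy : M.Adj x y)
    (hx : NearAB M a b x) (hy : NearAB M a b y)
    (s1' : Seg M.Adj a p m1) (e1 : M.Adj p x) (e2 : M.Adj x q) (s2' : Seg M.Adj q b m2)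
    (hU : m1 + {x} + m2 = (Finset.univ : Finset V).val) (hym : y ∈ m2) : HamC M := by
  by_contra hn
  have hxs : Seg M.Adj x x {x} := Seg.single x
  have hys : Seg M.Adj y y {y} := Seg.single y
  obtain ⟨m3, m4, r, s, rfl, hr, hry, hys', hs⟩ :=
    edge_split hn (s1'.append e1 hxs) s2' hU hxb hya hyb hym
  have hqb : M.Adj q b := by
    rcases hx q e2 with h | h | h | h
    · exact absurd h.symm (ne_of_univ (k := {x} + {y} + m4) (by rw [← hU]; abel)
        s1'.left_mem hr.left_mem)
    · exact absurd h (ne_of_univ (k := {x} + {y} + m1) (by rw [← hU]; abel)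
        hr.left_mem hs.right_mem)
    · exact absurd (edge_cross (s1'.append e1 hxs) s2' (by rw [← hU]) hxb h) hn
    · exact h
  have hra : M.Adj r a := by
    rcases hy r hry.symm with h | h | h | h
    · exact absurd h.symm (ne_of_univ (k := {x} + {y} + m4) (by rw [← hU]; abel)
        s1'.left_mem hr.right_mem)
    · exact absurd h (ne_of_univ (k := {x} + {y} + m1) (by rw [← hU]; abel)
        hr.right_mem hs.right_mem)
    · exact h
    · exact absurd (edge_cross ((s1'.append e1 hxs).append e2 hr) (hys.append hys' hs)
        (by rw [← hU]; abel) h hya) hn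
  exact hn (edge_two s1' e1 hr hs hys' (by rw [← hU]; abel) hxy hqb hra)

theorem NearAB.symm (hx : NearAB M a b x) : NearAB M b a x := by
  intro z hz
  rcases hx z hz with h | h | h | h <;> simp [h]

theorem edge_simple (hP : Seg M.Adj a b (Finset.univ : Finset V).val)
    (hxa : M.Adj x a) (hxb : M.Adj x b) (hya : M.Adj y a) (hyb : M.Adj y b) (hxy : M.Adj x y)
    (hx : NearAB M a b x) (hy : NearAB M a b y) : HamC M := by
  obtain ⟨m1, m2, p, q, hU, h1, h2, h3, h4⟩ := edge_split0 hP hxa hxb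
  have : y ∈ m1 + {x} + m2 := hU ▸ Finset.mem_univ y
  simp only [Multiset.mem_add, Multiset.mem_singleton] at this
  rcases this with (h | h) | h
  · exact edge_simple_aux hxb hxa hyb hya hxy hx.symm hy.symm h4.rev h3.symm h2.symm h1.rev
      (by rw [← hU]; abel) h
  · exact absurd h.symm hxy.ne
  · exact edge_simple_aux hxa hxb hya hyb hxy hx hy h1 h2 h3 h4 hU h

theorem edge_gen_aux1 {p q : V} {m1 m2 : Multiset V} {Z : Set V} (hn : ¬ HamC M)
    (hxa : M.Adj x a) (hxb : M.Adj x b) (h1a : M.Adj y1 a) (h1b : M.Adj y1 b)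
    (h2a : M.Adj y2 a) (h2b : M.Adj y2 b) (hx1 : M.Adj x y1) (hx2 : M.Adj x y2)
    (h12 : M.Adj y1 y2)
    (hx : NearAB M a b x)
    (hy1 : ∀ z, M.Adj y1 z → z ∈ Z ∨ z = a ∨ z = b ∨ M.Adj z a ∨ M.Adj z b)
    (hy2 : ∀ z, M.Adj y2 z → z ∈ Z ∨ z = a ∨ z = b ∨ M.Adj z a ∨ M.Adj z b)
    (hZ : ∀ z ∈ Z, ∀ z' ∈ Z, z ≠ z' → M.Adj z z')
    (s1' : Seg M.Adj a p m1) (e1 : M.Adj p x) (e2 : M.Adj x q) (s2' : Seg M.Adj q b m2)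
    (hU : m1 + {x} + m2 = (Finset.univ : Finset V).val) (h1m : y1 ∈ m2) (h2m : y2 ∈ m2) :
    False := by
  have hxs : Seg M.Adj x x {x} := Seg.single x
  obtain ⟨m3, m4, r, s, rfl, hr, hry, hys', hs⟩ :=
    edge_split hn (s1'.append e1 hxs) s2' hU hxb h1a h1b h1m
  simp only [Multiset.mem_add, Multiset.mem_singleton] at h2m
  rcases h2m with (h | h) | h
  · obtain ⟨m5, m6, h, hl, hr'⟩ := hr.split h
    rcases hl with ⟨_, rfl⟩ | ⟨r', hr1, hr2⟩
    · exact hn (edge_cross (s1'.append e1 hxs) s2' hU hxb h2a)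
    rcases hr' with ⟨_, rfl⟩ | ⟨s', hs1, hs2⟩
    · exact hn (edge_cross ((s1'.append e1 hxs).append e2 hr) ((Seg.single y1).append hys' hs)
        (by rw [← hU]; abel) h2b h1a)
    subst h
    exact hn (edge_c1 hxa hxb h2a h2b h1a hx2 hx1 hx hy2 hy1 hZ s1' e1 e2 hr1 hr2 hs1
      hs2 hry hys' hs (by rw [← hU]; abel))
  · exact h12.ne h.symm
  · obtain ⟨m5, m6, r', s', rfl, hr', hry', hys'', hs'⟩ :=
      edge_split (x := y1) hn (((s1'.append e1 hxs).append e2 hr).append hry (Seg.single y1)) hs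
        (by rw [← hU]; abel) h1b h2a h2b h
    exact hn (edge_c1 hxa hxb h1a h1b h2a hx1 hx2 hx hy1 hy2 hZ s1' e1 e2 hr hry hys'
      hr' hry' hys'' hs' (by rw [← hU]; abel))

theorem edge_gen_aux2 {p q : V} {m1 m2 : Multiset V} {Z : Set V} (hn : ¬ HamC M)
    (hxa : M.Adj x a) (hxb : M.Adj x b) (h1a : M.Adj y1 a) (h1b : M.Adj y1 b)
    (h2a : M.Adj y2 a) (h2b : M.Adj y2 b) (hx1 : M.Adj x y1) (hx2 : M.Adj x y2)
    (hx : NearAB M a b x)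
    (hy1 : ∀ z, M.Adj y1 z → z ∈ Z ∨ z = a ∨ z = b ∨ M.Adj z a ∨ M.Adj z b)
    (hy2 : ∀ z, M.Adj y2 z → z ∈ Z ∨ z = a ∨ z = b ∨ M.Adj z a ∨ M.Adj z b)
    (hZ1 : ∀ z ∈ Z, M.Adj y1 z) (hZ2 : ∀ z ∈ Z, M.Adj y2 z)
    (s1' : Seg M.Adj a p m1) (e1 : M.Adj p x) (e2 : M.Adj x q) (s2' : Seg M.Adj q b m2)
    (hU : m1 + {x} + m2 = (Finset.univ : Finset V).val) (h1m : y1 ∈ m1) (h2m : y2 ∈ m2) :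
    False := by
  have hxs : Seg M.Adj x x {x} := Seg.single x
  obtain ⟨m3, m4, r, s, rfl, hr, hry, hys', hs⟩ :=
    edge_split hn (s1'.append e1 hxs) s2' hU hxb h2a h2b h2m
  obtain ⟨m5, m6, r', s', rfl, hr', hry', hys'', hs'⟩ :=
    edge_split hn ((hxs.append e2 s2').rev) s1'.rev (by rw [← hU]; abel) hxa h1b h1a h1m
  exact hn (edge_c2 hxa hxb h1b h2a hx1 hx2 hx hy1 hy2 hZ1 hZ2 hs'.rev hys''.symm hry'.symm
    hr'.rev e1 e2 hr hry hys' hs (by rw [← hU]; abel))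

theorem edge_gen {Z : Set V} (hP : Seg M.Adj a b (Finset.univ : Finset V).val)
    (hxa : M.Adj x a) (hxb : M.Adj x b) (h1a : M.Adj y1 a) (h1b : M.Adj y1 b)
    (h2a : M.Adj y2 a) (h2b : M.Adj y2 b) (hx1 : M.Adj x y1) (hx2 : M.Adj x y2)
    (h12 : M.Adj y1 y2)
    (hx : NearAB M a b x)
    (hy1 : ∀ z, M.Adj y1 z → z ∈ Z ∨ z = a ∨ z = b ∨ M.Adj z a ∨ M.Adj z b)
    (hy2 : ∀ z, M.Adj y2 z → z ∈ Z ∨ z = a ∨ z = b ∨ M.Adj z a ∨ M.Adj z b)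
    (hZ : ∀ z ∈ Z, ∀ z' ∈ Z, z ≠ z' → M.Adj z z')
    (hZ1 : ∀ z ∈ Z, M.Adj y1 z) (hZ2 : ∀ z ∈ Z, M.Adj y2 z) : HamC M := by
  by_contra hn
  obtain ⟨m1, m2, p, q, hU, h1, h2, h3, h4⟩ := edge_split0 hP hxa hxb
  have m1' : y1 ∈ m1 + {x} + m2 := hU ▸ Finset.mem_univ y1
  have m2' : y2 ∈ m1 + {x} + m2 := hU ▸ Finset.mem_univ y2
  simp only [Multiset.mem_add, Multiset.mem_singleton] at m1' m2'
  have hswap : ∀ y, (∀ z, M.Adj y z → z ∈ Z ∨ z = a ∨ z = b ∨ M.Adj z a ∨ M.Adj z b) →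
      ∀ z, M.Adj y z → z ∈ Z ∨ z = b ∨ z = a ∨ M.Adj z b ∨ M.Adj z a := by
    intro y hy z hz
    rcases hy z hz with h | h | h | h | h <;> simp [h]
  rcases m1' with (h | h) | h
  · rcases m2' with (h' | h') | h'
    · exact edge_gen_aux1 hn hxb hxa h1b h1a h2b h2a hx1 hx2 h12 hx.symm (hswap _ hy1)
        (hswap _ hy2) hZ h4.rev h3.symm h2.symm h1.rev (by rw [← hU]; abel) h h'
    · exact hx2.ne h'.symm
    · exact edge_gen_aux2 hn hxa hxb h1a h1b h2a h2b hx1 hx2 hx hy1 hy2 hZ1 hZ2 h1 h2 h3 h4 hU h h'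
  · exact hx1.ne h.symm
  · rcases m2' with (h' | h') | h'
    · exact edge_gen_aux2 hn hxa hxb h2a h2b h1a h1b hx2 hx1 hx hy2 hy1 hZ2 hZ1 h1 h2 h3 h4 hU h' h
    · exact hx2.ne h'.symm
    · exact edge_gen_aux1 hn hxa hxb h1a h1b h2a h2b hx1 hx2 h12 hx hy1 hy2 hZ h1 h2 h3 h4 hU h h'

end EdgeLemma

open SimpleGraph
set_option linter.unusedSectionVars false
set_option linter.unusedVariables false

section Closure
variable {V : Type*} [Fintype V]

theorem Seg.eq_single {R : V → V → Prop} {a : V} {m : Multiset V} (h : Seg R a a m)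
    (hm : m.Nodup) : m = {a} := by
  cases h with
  | single a => rfl
  | cons h1 h2 => exact absurd h2.right_mem (Multiset.nodup_cons.1 hm).1

theorem seg_add_edge {M : SimpleGraph V} {a b u v : V} {m : Multiset V}
    (h : Seg (fun u v => M.Adj u v ∨ (u = a ∧ v = b) ∨ (u = b ∧ v = a)) u v m) (hm : m.Nodup) :
    Seg M.Adj u v m ∨ ∃ p q m1 m2, Seg M.Adj u p m1 ∧ Seg M.Adj q v m2 ∧ m = m1 + m2 ∧
      ((p = a ∧ q = b) ∨ (p = b ∧ q = a)) := by
  induction h with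
  | single u => exact Or.inl (Seg.single u)
  | @cons u w v m h1 h2 ih =>
    obtain ⟨hu, hm⟩ := Multiset.nodup_cons.1 hm
    rcases ih hm with h | ⟨p, q, m1, m2, h3, h4, rfl, h5⟩
    · rcases h1 with h1 | h1
      · exact Or.inl (Seg.cons h1 h)
      · exact Or.inr ⟨u, w, {u}, m, Seg.single u, h, by simp, h1⟩
    · rcases h1 with h1 | h1
      · exact Or.inr ⟨p, q, u ::ₘ m1, m2, Seg.cons h1 h3, h4, by simp, h5⟩
      · exfalso
        have hp := Multiset.mem_add.2 (Or.inl h3.right_mem : p ∈ m1 ∨ p ∈ m2)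
        have hq := Multiset.mem_add.2 (Or.inr h4.left_mem : q ∈ m1 ∨ q ∈ m2)
        rcases h1 with ⟨rfl, rfl⟩ | ⟨rfl, rfl⟩ <;> rcases h5 with ⟨rfl, rfl⟩ | ⟨rfl, rfl⟩ <;>
          contradiction

theorem hamPath_of_add_edge {M : SimpleGraph V} {a b : V} (h3 : 3 ≤ Fintype.card V)
    (hn : ¬ HamC M) (h : HamC (M ⊔ edge a b)) : Seg M.Adj a b (Finset.univ : Finset V).val := by
  have hsub : ∀ u v, (M ⊔ edge a b).Adj u v → (M.Adj u v ∨ (u = a ∧ v = b) ∨ (u = b ∧ v = a)) := by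
    intro u v h
    rw [sup_adj, edge_adj] at h
    grind
  obtain ⟨u, v, huv, hs⟩ := h
  have hnd : (Finset.univ : Finset V).val.Nodup := Finset.univ.nodup
  rcases seg_add_edge (hs.mono hsub) hnd with h | ⟨p, q, m1, m2, h1, h2, h4, h5⟩
  · rcases hsub _ _ huv with h' | ⟨rfl, rfl⟩ | ⟨rfl, rfl⟩
    · exact absurd ⟨u, v, h', h⟩ hn
    · exact h
    · exact h.rev
  · rcases hsub _ _ huv with h' | h'
    · have := h1.rev.append h' h2.rev
      rw [← h4] at this
      rcases h5 with ⟨rfl, rfl⟩ | ⟨rfl, rfl⟩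
      · exact this
      · exact this.rev
    · exfalso
      have hne : ∀ x ∈ m1, ∀ y ∈ m2, x ≠ y := fun x hx y hy =>
        ne_of_univ (k := 0) (by rw [h4]; abel) hx hy
      have e1 := hne _ h1.left_mem _ h2.right_mem
      have e2 := hne _ h1.left_mem _ h2.left_mem
      have e3 := hne _ h1.right_mem _ h2.right_mem
      have : u = p ∧ v = q := by grind
      obtain ⟨rfl, rfl⟩ := this
      rw [h4, Multiset.nodup_add] at hnd
      have c1 := h1.eq_single hnd.1
      have c2 := h2.eq_single hnd.2.1
      have : Fintype.card V = (m1 + m2).card := by rw [← h4]; rfl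
      rw [c1, c2] at this
      simp at this
      omega

/-- Local completion at `x`. -/
def completion (L : SimpleGraph V) (x : V) : SimpleGraph V where
  Adj u v := L.Adj u v ∨ (u ≠ v ∧ L.Adj x u ∧ L.Adj x v)
  symm := ⟨fun u v h => by
    rcases h with h | ⟨h1, h2, h3⟩
    · exact Or.inl h.symm
    · exact Or.inr ⟨h1.symm, h3, h2⟩⟩
  loopless := ⟨fun u h => by
    rcases h with h | ⟨h1, h2, h3⟩
    · exact L.loopless.irrefl _ h
    · exact h1 rfl⟩

theorem le_completion (L : SimpleGraph V) (x : V) : L ≤ completion L x := fun _ _ h => Or.inl h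

theorem completion_clawFree {L : SimpleGraph V} (hL : ClawFree L) (x : V) :
    ClawFree (completion L x) := by
  have key : ∀ c l1 l2 l3, (completion L x).Adj c l1 → (completion L x).Adj c l2 →
      (completion L x).Adj c l3 → l1 ≠ l2 → l1 ≠ l3 → l2 ≠ l3 → ¬ (completion L x).Adj l1 l2 →
      ¬ (completion L x).Adj l1 l3 → ¬ (completion L x).Adj l2 l3 → L.Adj c l1 := by
    intro c l1 l2 l3 h1 h2 h3 d1 d2 d3 n1 n2 n3
    by_contra hn
    simp only [completion] at h1 h2 h3 n1 n2 n3
    have hc : L.Adj x c ∧ L.Adj x l1 := by tauto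
    have hl2 : ¬ L.Adj x l2 := by tauto
    have hl3 : ¬ L.Adj x l3 := by tauto
    have e2 : x ≠ l2 := by rintro rfl; exact n1 (Or.inl hc.2.symm)
    have e3 : x ≠ l3 := by rintro rfl; exact n2 (Or.inl hc.2.symm)
    have := hL.claw (c := c) hc.1.symm (y := l2) (z := l3) (by tauto) (by tauto) e2 e3 d3
    tauto
  refine ClawFree.of_claw fun c l1 l2 l3 h1 h2 h3 d1 d2 d3 => ?_
  by_contra! hcon
  obtain ⟨n1, n2, n3⟩ := hcon
  have k1 := key c l1 l2 l3 h1 h2 h3 d1 d2 d3 n1 n2 n3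
  have k2 := key c l2 l1 l3 h2 h1 h3 d1.symm d3 d2 (fun h => n1 h.symm) n3 n2
  have k3 := key c l3 l1 l2 h3 h1 h2 d2.symm d3.symm d1 (fun h => n2 h.symm) (fun h => n3 h.symm) n1
  rcases hL.claw k1 k2 k3 d1 d2 d3 with h | h | h
  · exact n1 (Or.inl h)
  · exact n2 (Or.inl h)
  · exact n3 (Or.inl h)

theorem completion_nonham {L : SimpleGraph V} (h3 : 3 ≤ Fintype.card V) (hL : ClawFree L)
    (hn : ¬ HamC L) {x b0 c d : V} (hxb : L.Adj x b0) (hxc : L.Adj x c) (hxd : L.Adj x d)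
    (hbc : L.Adj b0 c) (hbd : L.Adj b0 d) (hcd : c ≠ d) (hncd : ¬ L.Adj c d) :
    ¬ HamC (completion L x) := by
  intro hham
  obtain ⟨M, hLM', hM⟩ := (Set.toFinite {M : SimpleGraph V | M ≤ completion L x ∧ ¬ HamC M}).exists_le_maximal
    (a := L) ⟨le_completion L x, hn⟩
  have hML : M ≤ completion L x := hM.prop.1
  have hMn : ¬ HamC M := hM.prop.2
  have hLM : ∀ {u v}, L.Adj u v → M.Adj u v := fun h => hLM' h
  -- Hamiltonian path
  have hpath : ∀ a b, L.Adj x a → L.Adj x b → a ≠ b → ¬ M.Adj a b →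
      Seg M.Adj a b (Finset.univ : Finset V).val := by
    intro a b ha hb hab hnab
    apply hamPath_of_add_edge h3 hMn
    by_contra hcon
    have hle : M ⊔ edge a b ≤ completion L x := by
      refine sup_le hML ?_
      intro u v huv
      rw [edge_adj] at huv
      rcases huv with ⟨⟨rfl, rfl⟩ | ⟨rfl, rfl⟩, _⟩
      · exact Or.inr ⟨hab, ha, hb⟩
      · exact Or.inr ⟨hab.symm, hb, ha⟩
    have := hM.le_of_ge ⟨hle, hcon⟩ le_sup_left
    exact hnab (this (by rw [sup_adj, edge_adj]; grind))
  have hMx : ∀ z, M.Adj x z → L.Adj x z := by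
    intro z hz
    rcases hML hz with h | ⟨_, h, _⟩
    · exact h
    · exact absurd rfl h.ne
  have hMout : ∀ y z, M.Adj y z → ¬ L.Adj x z → L.Adj y z := by
    intro y z hz hxz
    rcases hML hz with h | ⟨_, _, h⟩
    · exact h
    · exact absurd h hxz
  -- every vertex of A is near a or b
  have hA : ∀ a b, L.Adj x a → L.Adj x b → a ≠ b → ¬ L.Adj a b → ∀ z, L.Adj x z →
      z = a ∨ z = b ∨ L.Adj z a ∨ L.Adj z b := by
    intro a b ha hb hab hnab z hz
    by_contra! hcon
    obtain ⟨c1, c2, c3, c4⟩ := hcon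
    rcases hL.claw hz ha hb c1 c2 hab with h | h | h <;> contradiction
  have hA' : ∀ a b, L.Adj x a → L.Adj x b → a ≠ b → ¬ L.Adj a b → ∀ z, L.Adj x z →
      z = a ∨ z = b ∨ M.Adj z a ∨ M.Adj z b := by
    intro a b ha hb hab hnab z hz
    rcases hA a b ha hb hab hnab z hz with h | h | h | h
    · simp [h]
    · simp [h]
    · simp [hLM h]
    · simp [hLM h]
  have step1 : ∀ a b y, L.Adj x a → L.Adj x b → a ≠ b → L.Adj x y → L.Adj y a → L.Adj y b →
      M.Adj a b := by
    intro a b y ha hb hab hy hya hyb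
    by_contra hnab
    have hnL : ¬ L.Adj a b := fun h => hnab (hLM h)
    apply hMn
    refine edge_simple (hpath a b ha hb hab hnab) (hLM ha) (hLM hb) (hLM hya) (hLM hyb) (hLM hy)
      (fun z hz => hA' a b ha hb hab hnL z (hMx z hz)) ?_
    intro z hz
    by_cases hxz : L.Adj x z
    · exact hA' a b ha hb hab hnL z hxz
    · have hyz := hMout _ _ hz hxz
      by_cases hza : z = a
      · exact Or.inl hza
      by_cases hzb : z = b
      · exact Or.inr (Or.inl hzb)
      rcases hL.claw hyz hya hyb hza hzb hab with h | h | h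
      · simp [hLM h]
      · simp [hLM h]
      · contradiction
  have step2 : ∀ a b, L.Adj x a → L.Adj x b → a ≠ b → M.Adj a b := by
    intro a b ha hb hab
    by_contra hnab
    have hnL : ¬ L.Adj a b := fun h => hnab (hLM h)
    have hncommon : ∀ y, L.Adj x y → L.Adj y a → ¬ L.Adj y b :=
      fun y hy h1 h2 => hnab (step1 a b y ha hb hab hy h1 h2)
    -- cross edge
    have hcross : ∃ y1 y2, L.Adj x y1 ∧ L.Adj x y2 ∧ L.Adj y1 a ∧ L.Adj y2 b ∧ L.Adj y1 y2 := by
      have hcl : ∀ a b, L.Adj x a → L.Adj x b → a ≠ b → ¬ L.Adj a b →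
          (∀ y, L.Adj x y → L.Adj y a → ¬ L.Adj y b) → ∀ u v, L.Adj x u → L.Adj x v →
          u ≠ v → L.Adj u a → L.Adj v a → L.Adj u v := by
        intro a b ha hb hab hnab hnc u v hu hv huv h1 h2
        have e1 : u ≠ b := by rintro rfl; exact hnab h1.symm
        have e2 : v ≠ b := by rintro rfl; exact hnab h2.symm
        rcases hL.claw hu hv hb huv e1 e2 with h | h | h
        · exact h
        · exact absurd h (hnc u hu h1)
        · exact absurd h (hnc v hv h2)
      have hcl1 := hcl a b ha hb hab hnL hncommon
      have hcl2 := hcl b a hb ha hab.symm (fun h => hnL h.symm)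
        (fun y hy h1 h2 => hncommon y hy h2 h1)
      have hb0 := hA a b ha hb hab hnL b0 hxb
      have hc := hA a b ha hb hab hnL c hxc
      have hd := hA a b ha hb hab hnL d hxd
      have hnab' : ¬ L.Adj b a := fun h => hnL h.symm
      have k1 := hcl1 c d hxc hxd hcd
      have k2 := hcl2 c d hxc hxd hcd
      have q1 := hncommon b0 hxb
      have q2 := hncommon c hxc
      have q3 := hncommon d hxd
      have r1 : ∀ u v, L.Adj u v ↔ L.Adj v u := fun u v => ⟨fun h => h.symm, fun h => h.symm⟩
      rcases hb0 with rfl | rfl | hb0 | hb0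
      · exfalso
        grind
      · exfalso
        grind
      · by_cases h : L.Adj c b
        · exact ⟨b0, c, hxb, hxc, hb0, h, hbc⟩
        · by_cases h' : L.Adj d b
          · exact ⟨b0, d, hxb, hxd, hb0, h', hbd⟩
          · exfalso; grind
      · by_cases h : L.Adj c a
        · exact ⟨c, b0, hxc, hxb, h, hb0, hbc.symm⟩
        · by_cases h' : L.Adj d a
          · exact ⟨d, b0, hxd, hxb, h', hb0, hbd.symm⟩
          · exfalso; grind
    obtain ⟨y1, y2, hy1, hy2, h1a, h2b, h12⟩ := hcross
    have n1b : ¬ L.Adj y1 b := hncommon y1 hy1 h1a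
    have n2a : ¬ L.Adj y2 a := fun h => hncommon y2 hy2 h h2b
    have e1b : y1 ≠ b := by rintro rfl; exact hnL h1a.symm
    have e2a : y2 ≠ a := by rintro rfl; exact hnL h2b
    have h1b : M.Adj y1 b := step1 y1 b y2 hy1 hb e1b hy2 h12.symm h2b
    have h2a : M.Adj y2 a := step1 y2 a y1 hy2 ha e2a hy1 h12 h1a
    apply hMn
    refine edge_gen (Z := {z | L.Adj y1 z ∧ L.Adj y2 z ∧ ¬ L.Adj x z ∧ ¬ L.Adj z a})
      (hpath a b ha hb hab hnab) (hLM ha) (hLM hb) (hLM h1a) h1b h2a (hLM h2b) (hLM hy1) (hLM hy2)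
      (hLM h12) (fun z hz => hA' a b ha hb hab hnL z (hMx z hz)) ?_ ?_ ?_
      (fun z hz => hLM hz.1) (fun z hz => hLM hz.2.1)
    · intro z hz
      by_cases hxz : L.Adj x z
      · exact Or.inr (hA' a b ha hb hab hnL z hxz)
      have hyz := hMout _ _ hz hxz
      have d1 : z ≠ a := by rintro rfl; exact hxz ha
      have d2 : z ≠ y2 := by rintro rfl; exact hxz hy2
      rcases hL.claw hyz h1a h12 d1 d2 e2a.symm with h | h | h
      · simp [hLM h]
      · by_cases hza : L.Adj z a
        · simp [hLM hza]
        · exact Or.inl ⟨hyz, h.symm, hxz, hza⟩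
      · exact absurd h.symm n2a
    · intro z hz
      by_cases hxz : L.Adj x z
      · exact Or.inr (hA' a b ha hb hab hnL z hxz)
      have hyz := hMout _ _ hz hxz
      have d1 : z ≠ b := by rintro rfl; exact hxz hb
      have d2 : z ≠ y1 := by rintro rfl; exact hxz hy1
      rcases hL.claw hyz h2b h12.symm d1 d2 e1b.symm with h | h | h
      · simp [hLM h]
      · by_cases hza : L.Adj z a
        · simp [hLM hza]
        · exact Or.inl ⟨h.symm, hyz, hxz, hza⟩
      · exact absurd h.symm n1b
    · rintro z ⟨g1, g2, g3, g4⟩ z' ⟨g1', g2', g3', g4'⟩ hzz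
      have d1 : z ≠ a := by rintro rfl; exact g3 ha
      have d2 : z' ≠ a := by rintro rfl; exact g3' ha
      rcases hL.claw g1 g1' h1a hzz d1 d2 with h | h | h
      · exact hLM h
      · contradiction
      · contradiction
  have : completion L x ≤ M := by
    intro u v huv
    rcases huv with h | ⟨h1, h2, h3⟩
    · exact hLM h
    · exact step2 u v h2 h3 h1
  exact hMn (le_antisymm this hML ▸ hham)

/-- `a` and `b` joined by a `G`-walk inside `S`. -/
def JoinedIn' (G : SimpleGraph V) (S : Set V) (a b : V) : Prop :=
  Relation.ReflTransGen (fun u v => G.Adj u v ∧ u ∈ S ∧ v ∈ S) a b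

theorem JoinedIn'.mono {G : SimpleGraph V} {S T : Set V} {a b : V} (h : JoinedIn' G S a b)
    (hST : S ⊆ T) : JoinedIn' G T a b :=
  Relation.ReflTransGen.mono (r := fun u v => G.Adj u v ∧ u ∈ S ∧ v ∈ S)
    (p := fun u v => G.Adj u v ∧ u ∈ T ∧ v ∈ T)
    (fun _ _ h => ⟨h.1, hST h.2.1, hST h.2.2⟩) _ _ h

theorem JoinedIn'.symm {G : SimpleGraph V} {S : Set V} {a b : V} (h : JoinedIn' G S a b) :
    JoinedIn' G S b a := by
  induction h with
  | refl => exact Relation.ReflTransGen.refl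
  | tail _ h ih => exact Relation.ReflTransGen.head ⟨h.1.symm, h.2.2, h.2.1⟩ ih

def ConnGL (G L : SimpleGraph V) : Prop :=
  ∀ a b, L.Adj a b → ∃ S : Set V, a ∈ S ∧ b ∈ S ∧ L.IsClique S ∧ JoinedIn' G S a b

theorem completion_conn {G L : SimpleGraph V} (h : ConnGL G L) (x : V) :
    ConnGL G (completion L x) := by
  intro a b hab
  rcases hab with hab | ⟨hne, hxa, hxb⟩
  · obtain ⟨S, h1, h2, h3, h4⟩ := h a b hab
    exact ⟨S, h1, h2, h3.mono (le_completion L x), h4⟩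
  · obtain ⟨S, h1, h2, h3, h4⟩ := h x a hxa
    obtain ⟨T, k1, k2, k3, k4⟩ := h x b hxb
    refine ⟨S ∪ T, Or.inl h2, Or.inr k2, ?_, ?_⟩
    · have hnb : ∀ u ∈ S ∪ T, u = x ∨ L.Adj x u := by
        rintro u (hu | hu)
        · by_cases hux : u = x
          · exact Or.inl hux
          · exact Or.inr (h3 h1 hu (Ne.symm hux))
        · by_cases hux : u = x
          · exact Or.inl hux
          · exact Or.inr (k3 k1 hu (Ne.symm hux))
      intro u hu v hv huv
      rcases hnb u hu with rfl | h5 <;> rcases hnb v hv with rfl | h6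
      · exact absurd rfl huv
      · exact Or.inl h6
      · exact Or.inl h5.symm
      · exact Or.inr ⟨huv, h5, h6⟩
    · exact (h4.symm.mono Set.subset_union_left).trans (k4.mono Set.subset_union_right)

def DiamondFree (L : SimpleGraph V) : Prop :=
  ∀ x b c d, L.Adj x b → L.Adj x c → L.Adj x d → L.Adj b c → L.Adj b d → c ≠ d → L.Adj c d

theorem exists_closure {G : SimpleGraph V} (h3 : 3 ≤ Fintype.card V) (hG : ClawFree G)
    (hn : ¬ HamC G) : ∃ L, G ≤ L ∧ ClawFree L ∧ ¬ HamC L ∧ ConnGL G L ∧ DiamondFree L := by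
  have hG0 : ConnGL G G := by
    intro a b hab
    refine ⟨{a, b}, by simp, by simp, ?_, Relation.ReflTransGen.single ⟨hab, by simp, by simp⟩⟩
    rw [isClique_pair]
    exact fun _ => hab
  obtain ⟨L, hGL, hL⟩ := (Set.toFinite {L : SimpleGraph V | ClawFree L ∧ ¬ HamC L ∧
    ConnGL G L}).exists_le_maximal (a := G) ⟨hG, hn, hG0⟩
  obtain ⟨l1, l2, l3⟩ := hL.prop
  refine ⟨L, hGL, l1, l2, l3, ?_⟩
  intro x b c d hxb hxc hxd hbc hbd hcd
  by_contra hncd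
  have := hL.le_of_ge ⟨completion_clawFree l1 x,
    completion_nonham h3 l1 l2 hxb hxc hxd hbc hbd hcd hncd, completion_conn l3 x⟩
    (le_completion L x)
  exact hncd (this (Or.inr ⟨hcd, hxc, hxd⟩))

end Closure

open SimpleGraph
set_option linter.unusedSectionVars false
set_option linter.unusedVariables false

section NetAbstract
variable {W : Type*}

theorem exists_levels (H : SimpleGraph W) (hH : H.Connected) (T : Set W) (hT : T.Nonempty) :
    ∃ δ : W → ℕ, (∀ v, δ v = 0 ↔ v ∈ T) ∧ (∀ u v, H.Adj u v → δ v ≤ δ u + 1) ∧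
      ∀ n v, δ v = n → ∃ c : ℕ → W, c n = v ∧ (∀ i ≤ n, δ (c i) = i) ∧
        ∀ i < n, H.Adj (c i) (c (i + 1)) := by
  obtain ⟨t, ht⟩ := hT
  have hne : ∀ v, {n | ∃ s ∈ T, ∃ w : H.Walk s v, w.length = n}.Nonempty := by
    intro v
    obtain ⟨w⟩ := hH.preconnected t v
    exact ⟨w.length, t, ht, w, rfl⟩
  let δ : W → ℕ := fun v => sInf {n | ∃ s ∈ T, ∃ w : H.Walk s v, w.length = n}
  have hmem : ∀ v, ∃ s ∈ T, ∃ w : H.Walk s v, w.length = δ v := fun v => Nat.sInf_mem (hne v)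
  have hle : ∀ v s, s ∈ T → ∀ w : H.Walk s v, δ v ≤ w.length := fun v s hs w =>
    Nat.sInf_le ⟨s, hs, w, rfl⟩
  have h0 : ∀ v, δ v = 0 ↔ v ∈ T := by
    intro v
    constructor
    · intro h
      obtain ⟨s, hs, w, hw⟩ := hmem v
      rw [h] at hw
      rw [← Walk.eq_of_length_eq_zero hw]
      exact hs
    · intro h
      have := hle v v h Walk.nil
      simpa using this
  have h1 : ∀ u v, H.Adj u v → δ v ≤ δ u + 1 := by
    intro u v huv
    obtain ⟨s, hs, w, hw⟩ := hmem u
    have := hle v s hs (w.concat huv)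
    rwa [Walk.length_concat, hw] at this
  refine ⟨δ, h0, h1, ?_⟩
  intro n
  induction n with
  | zero => exact fun v hv => ⟨fun _ => v, rfl, fun i hi => by simp_all, fun i hi => by omega⟩
  | succ n ih =>
    intro v hv
    obtain ⟨s, hs, w, hw⟩ := hmem v
    have hw1 : 0 < w.length := by omega
    obtain ⟨u, w', huv, hww⟩ : ∃ u, ∃ w' : H.Walk s u, ∃ h : H.Adj u v, w = w'.concat h := by
      cases w with
      | nil => simp at hw1
      | cons h p =>
        obtain ⟨x, q, h', he⟩ := Walk.exists_cons_eq_concat h p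
        exact ⟨x, q, h', he⟩
    have hl : w'.length = n := by rw [hww, Walk.length_concat] at hw; omega
    have hu : δ u = n := by
      have a1 := hle u s hs w'
      have a2 := h1 u v huv
      omega
    obtain ⟨c, c1, c2, c3⟩ := ih u hu
    refine ⟨fun i => if i ≤ n then c i else v, by simp, ?_, ?_⟩
    · intro i hi
      by_cases h : i ≤ n
      · simp [h, c2 i h]
      · simp [h, hv]; omega
    · intro i hi
      by_cases h : i + 1 ≤ n
      · simp [h, show i ≤ n by omega]; exact c3 i (by omega)
      · have : i = n := by omega
        subst this
        simp [c1, huv]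


/-- position of the vertex `e` with respect to the pendant vertex `g` -/
def PosN (H : SimpleGraph W) (g1 g2 g3 g e : W) : Prop :=
  e = g ∨ H.Adj g e ∨ ∃ u v, H.Adj e u ∧ H.Adj e v ∧ u ≠ v ∧ ¬ H.Adj u v ∧
    (u ≠ g1 ∧ u ≠ g2 ∧ u ≠ g3) ∧ (v ≠ g1 ∧ v ≠ g2 ∧ v ≠ g3)

theorem net_abstract (H : SimpleGraph W) (hH : H.Connected) (hcl : ClawFree H)
    {g1 g2 g3 t1 t2 t3 : W} (hg1 : ∀ w, H.Adj g1 w → w = t1) (hg2 : ∀ w, H.Adj g2 w → w = t2)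
    (hg3 : ∀ w, H.Adj g3 w → w = t3) (h12 : g1 ≠ g2) (h13 : g1 ≠ g3) (h23 : g2 ≠ g3)
    (n13 : ¬ H.Adj g1 g3) (n23 : ¬ H.Adj g2 g3) (Q : W → Prop)
    (hQ : ∀ a b c a' b' c', H.Adj a b → H.Adj b c → H.Adj a c → H.Adj a a' → H.Adj b b' →
      H.Adj c c' → ¬ H.Adj a b' → ¬ H.Adj a c' → ¬ H.Adj b a' → ¬ H.Adj b c' → ¬ H.Adj c a' →
      ¬ H.Adj c b' → ¬ H.Adj a' b' → ¬ H.Adj a' c' → ¬ H.Adj b' c' → a' ≠ b' → a' ≠ c' → b' ≠ c' →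
      Q a' ∧ Q b' ∧ Q c') :
    ∃ e1 e2 e3, Q e1 ∧ Q e2 ∧ Q e3 ∧ PosN H g1 g2 g3 g1 e1 ∧ PosN H g1 g2 g3 g2 e2 ∧
      PosN H g1 g2 g3 g3 e3 ∧
      (∀ z, (z = e1 ∨ H.Adj z e1) → (z = e2 ∨ H.Adj z e2) → False) ∧
      (∀ z, (z = e1 ∨ H.Adj z e1) → (z = e3 ∨ H.Adj z e3) → False) ∧
      (∀ z, (z = e2 ∨ H.Adj z e2) → (z = e3 ∨ H.Adj z e3) → False) := by
  obtain ⟨δ, d0, d1, d2⟩ := exists_levels H hH {g1} ⟨g1, rfl⟩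
  obtain ⟨p, pE, pd, padj⟩ := d2 _ g2 rfl
  set E := δ g2 with hE
  have p0 : p 0 = g1 := (d0 _).1 (pd 0 (Nat.zero_le _))
  have hd : ∀ u v, H.Adj u v → δ v ≤ δ u + 1 ∧ δ u ≤ δ v + 1 := fun u v h => ⟨d1 u v h, d1 v u h.symm⟩
  have pne : ∀ i j, i ≤ E → j ≤ E → i ≠ j → p i ≠ p j := by
    intro i j hi hj hij h
    have := pd i hi
    rw [h, pd j hj] at this
    exact hij this.symm
  have pna : ∀ i j, i ≤ E → j ≤ E → i + 2 ≤ j → ¬ H.Adj (p i) (p j) := by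
    intro i j hi hj hij h
    have := hd _ _ h
    rw [pd i hi, pd j hj] at this
    omega
  have pna' : ∀ i j, i ≤ E → j ≤ E → i + 2 ≤ j → ¬ H.Adj (p j) (p i) :=
    fun i j hi hj hij h => pna i j hi hj hij h.symm
  have g3P : ∀ i ≤ E, p i ≠ g3 := by
    intro i hi h
    rcases Nat.eq_zero_or_pos i with rfl | hi0
    · exact h13 (p0.symm.trans h)
    rcases Nat.eq_or_lt_of_le hi with rfl | hiE
    · exact h23 (pE.symm.trans h)
    have a1 := padj (i - 1) (by omega)
    have a2 := padj i hiE
    rw [show i - 1 + 1 = i by omega, h] at a1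
    rw [h] at a2
    exact pne (i - 1) (i + 1) (by omega) (by omega) (by omega)
      ((hg3 _ a1.symm).trans (hg3 _ a2).symm)
  obtain ⟨η, e0, e1, e2⟩ := exists_levels H hH {v | ∃ i ≤ E, p i = v} ⟨_, 0, Nat.zero_le _, rfl⟩
  obtain ⟨c, cF, cd, cadj⟩ := e2 _ g3 rfl
  set F := η g3 with hF
  have he : ∀ u v, H.Adj u v → η v ≤ η u + 1 ∧ η u ≤ η v + 1 := fun u v h => ⟨e1 u v h, e1 v u h.symm⟩
  have pη : ∀ i ≤ E, η (p i) = 0 := fun i hi => (e0 _).2 ⟨i, hi, rfl⟩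
  have hF0 : F ≠ 0 := by
    intro h
    obtain ⟨i, hi, hpi⟩ := (e0 g3).1 h
    exact g3P i hi hpi
  have hF1 : F ≠ 1 := by
    intro h
    obtain ⟨i, hi, hpi⟩ := (e0 _).1 (cd 0 (Nat.zero_le _))
    have a := cadj 0 (by omega)
    rw [← hpi, show c (0 + 1) = g3 by rw [← cF, h]] at a
    rcases Nat.eq_zero_or_pos i with rfl | hi0
    · rw [p0] at a; exact n13 a
    rcases Nat.eq_or_lt_of_le hi with rfl | hiE
    · rw [pE] at a; exact n23 a
    have a1 := padj (i - 1) (by omega)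
    have a2 := padj i hiE
    rw [show i - 1 + 1 = i by omega] at a1
    have ht := hg3 _ a.symm
    rcases hcl.claw a1.symm a2 a (pne _ _ (by omega) (by omega) (by omega)) (g3P _ (by omega))
      (g3P _ (by omega)) with h | h | h
    · exact pna (i - 1) (i + 1) (by omega) (by omega) (by omega) h
    · exact pne (i - 1) i (by omega) (by omega) (by omega) ((hg3 _ h.symm).trans ht.symm)
    · exact pne (i + 1) i (by omega) (by omega) (by omega) ((hg3 _ h.symm).trans ht.symm)
  have hloc : ∀ y y', (∀ j ≤ E, y ≠ p j) → (∃ j ≤ E, H.Adj y (p j)) → H.Adj y y' →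
      (∀ j ≤ E, ¬ H.Adj y' (p j)) → (∀ j ≤ E, y' ≠ p j) →
      ∃ i, i + 3 ≤ E ∧ H.Adj y (p (i + 1)) ∧ H.Adj y (p (i + 2)) ∧
        ∀ j ≤ E, H.Adj y (p j) → j = i + 1 ∨ j = i + 2 := by
    classical
    intro y y' hy hex hyy hn hne
    have hE1 : 0 < E := by
      rcases Nat.eq_zero_or_pos E with h | h
      · exact absurd ((d0 _).1 (hE.symm.trans h)).symm h12
      · exact h
    have hy0 : ¬ H.Adj y (p 0) := by
      intro h
      have a := padj 0 hE1
      rw [p0] at h a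
      exact hy (0 + 1) (by omega) ((hg1 _ h.symm).trans (hg1 _ a).symm)
    have hyE : ¬ H.Adj y (p E) := by
      intro h
      have a := padj (E - 1) (by omega)
      rw [show E - 1 + 1 = E by omega] at a
      rw [pE] at h a
      exact hy (E - 1) (by omega) ((hg2 _ h.symm).trans (hg2 _ a.symm).symm)
    let i := Nat.find hex
    obtain ⟨hi, hyi⟩ : i ≤ E ∧ H.Adj y (p i) := Nat.find_spec hex
    have hmin : ∀ j < i, ¬ H.Adj y (p j) := fun j hj h =>
      Nat.find_min hex hj ⟨by omega, h⟩
    have hi0 : i ≠ 0 := by intro h; rw [h] at hyi; exact hy0 hyi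
    have hiE : i ≠ E := by intro h; rw [h] at hyi; exact hyE hyi
    have a1 := padj (i - 1) (by omega)
    have a2 := padj i (by omega)
    rw [show i - 1 + 1 = i by omega] at a1
    have hyi1 : H.Adj y (p (i + 1)) := by
      rcases hcl.claw a1.symm a2 hyi.symm (pne _ _ (by omega) (by omega) (by omega))
        (hy _ (by omega)).symm (hy _ (by omega)).symm with h | h | h
      · exact absurd h (pna (i - 1) (i + 1) (by omega) (by omega) (by omega))
      · exact absurd h.symm (hmin _ (by omega))
      · exact h.symm
    have hiE1 : i + 1 ≠ E := by intro h; rw [h] at hyi1; exact hyE hyi1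
    refine ⟨i - 1, by omega, ?_, ?_, ?_⟩
    · rwa [show i - 1 + 1 = i by omega]
    · rwa [show i - 1 + 2 = i + 1 by omega]
    · intro j hj hyj
      by_contra hcon
      have hj2 : i + 2 ≤ j := by
        by_contra h
        exact hmin j (by omega) hyj
      rcases hcl.claw hyi hyj hyy (pne _ _ (by omega) (by omega) (by omega))
        (hne _ (by omega)).symm (hne _ (by omega)).symm with h | h | h
      · exact pna i j (by omega) (by omega) (by omega) h
      · exact hn _ (by omega) h.symm
      · exact hn _ (by omega) h.symm
  -- facts about c
  have hF2 : 2 ≤ F := by omega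
  have cne : ∀ i j, i ≤ F → j ≤ F → i ≠ j → c i ≠ c j := by
    intro i j hi hj hij h
    have := cd i hi
    rw [h, cd j hj] at this
    exact hij this.symm
  have cna : ∀ i j, i ≤ F → j ≤ F → i + 2 ≤ j → ¬ H.Adj (c i) (c j) := by
    intro i j hi hj hij h
    have := he _ _ h
    rw [cd i hi, cd j hj] at this
    omega
  have cP : ∀ i, 0 < i → i ≤ F → ∀ j ≤ E, c i ≠ p j := by
    intro i hi hiF j hj h
    have := pη j hj
    rw [← h, cd i hiF] at this
    omega
  have cnP : ∀ i, 2 ≤ i → i ≤ F → ∀ j ≤ E, ¬ H.Adj (c i) (p j) := by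
    intro i hi hiF j hj h
    have := he _ _ h
    rw [pη j hj, cd i hiF] at this
    omega
  have c01 := cadj 0 (by omega)
  have c12 := cadj 1 (by omega)
  norm_num at c01 c12
  obtain ⟨i, hi3, hc1, hc2, hc⟩ := hloc (c 1) (c 2) (cP 1 (by omega) (by omega))
    (by
      obtain ⟨a, ha, hpa⟩ := (e0 _).1 (cd 0 (Nat.zero_le _))
      exact ⟨a, ha, by rw [hpa]; exact c01.symm⟩) c12 (cnP 2 (by omega) (by omega))
    (cP 2 (by omega) (by omega))
  have hcn : ∀ j ≤ E, j ≠ i + 1 → j ≠ i + 2 → ¬ H.Adj (c 1) (p j) := by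
    intro j hj h1 h2 h
    rcases hc j hj h with h | h <;> contradiction
  have q1 := padj i (by omega)
  have q2 := padj (i + 1) (by omega)
  have q3 := padj (i + 2) (by omega)
  have cnP' : ∀ i, 2 ≤ i → i ≤ F → ∀ j ≤ E, ¬ H.Adj (p j) (c i) :=
    fun i hi hiF j hj h => cnP i hi hiF j hj h.symm
  obtain ⟨Q1, Q2, Q3⟩ := hQ (p (i + 1)) (p (i + 2)) (c 1) (p i) (p (i + 3)) (c 2) q2 hc2.symm
    hc1.symm q1.symm q3 c12 (pna _ _ (by omega) (by omega) (by omega)) (cnP' 2 le_rfl hF2 _ (by omega))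
    (pna' _ _ (by omega) (by omega) (by omega)) (cnP' 2 le_rfl hF2 _ (by omega))
    (hcn _ (by omega) (by omega) (by omega)) (hcn _ (by omega) (by omega) (by omega))
    (pna _ _ (by omega) (by omega) (by omega)) (cnP' 2 le_rfl hF2 _ (by omega))
    (cnP' 2 le_rfl hF2 _ (by omega)) (pne _ _ (by omega) (by omega) (by omega))
    (cP 2 (by omega) hF2 _ (by omega)).symm (cP 2 (by omega) hF2 _ (by omega)).symm
  have pg : ∀ j, 0 < j → j < E → p j ≠ g1 ∧ p j ≠ g2 ∧ p j ≠ g3 := by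
    intro j h1 h2
    refine ⟨?_, ?_, g3P _ h2.le⟩
    · rw [← p0]; exact pne _ _ (by omega) (by omega) (by omega)
    · rw [← pE]; exact pne _ _ (by omega) (by omega) (by omega)
  have cg : ∀ j, 0 < j → j < F → c j ≠ g1 ∧ c j ≠ g2 ∧ c j ≠ g3 := by
    intro j h1 h2
    refine ⟨?_, ?_, ?_⟩
    · rw [← p0]; exact cP _ (by omega) (by omega) _ (by omega)
    · rw [← pE]; exact cP _ (by omega) (by omega) _ (by omega)
    · rw [← cF]; exact cne _ _ (by omega) (by omega) (by omega)
  have Pos1 : PosN H g1 g2 g3 g1 (p i) := by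
    by_cases hi0 : i = 0
    · left; rw [hi0, p0]
    by_cases hi1 : i = 1
    · right; left; rw [hi1, ← p0]; exact padj 0 (by omega)
    right; right
    have := padj (i - 1) (by omega)
    rw [show i - 1 + 1 = i by omega] at this
    exact ⟨p (i - 1), p (i + 1), this.symm, q1, pne _ _ (by omega) (by omega) (by omega),
      pna _ _ (by omega) (by omega) (by omega), pg _ (by omega) (by omega),
      pg _ (by omega) (by omega)⟩
  have Pos2 : PosN H g1 g2 g3 g2 (p (i + 3)) := by
    by_cases hi0 : i + 3 = E
    · left; rw [hi0, pE]
    have := padj (i + 3) (by omega)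
    by_cases hi1 : i + 4 = E
    · right; left
      rw [show i + 3 + 1 = E by omega, pE] at this
      exact this.symm
    right; right
    exact ⟨p (i + 2), p (i + 3 + 1), q3.symm, this, pne _ _ (by omega) (by omega) (by omega),
      pna _ _ (by omega) (by omega) (by omega), pg _ (by omega) (by omega),
      pg _ (by omega) (by omega)⟩
  have Pos3 : ∀ j, 2 ≤ j → j ≤ F → PosN H g1 g2 g3 g3 (c j) := by
    intro j hj hjF
    by_cases hi0 : j = F
    · left; rw [hi0, cF]
    have a := cadj j (by omega)
    by_cases hi1 : j + 1 = F
    · right; left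
      rw [hi1, cF] at a
      exact a.symm
    have b := cadj (j - 1) (by omega)
    rw [show j - 1 + 1 = j by omega] at b
    right; right
    exact ⟨c (j - 1), c (j + 1), b.symm, a, cne _ _ (by omega) (by omega) (by omega),
      cna _ _ (by omega) (by omega) (by omega), cg _ (by omega) (by omega),
      cg _ (by omega) (by omega)⟩
  have D12 : ∀ z, (z = p i ∨ H.Adj z (p i)) → (z = p (i + 3) ∨ H.Adj z (p (i + 3))) → False := by
    intro z h1 h2
    have k1 : δ z ≤ i + 1 := by
      rcases h1 with rfl | h1
      · rw [pd i (by omega)]; omega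
      · have := (hd _ _ h1).2; rwa [pd i (by omega)] at this
    have k2 : i + 2 ≤ δ z := by
      rcases h2 with rfl | h2
      · rw [pd _ (by omega)]; omega
      · have := (hd _ _ h2).1; rw [pd _ (by omega)] at this; omega
    omega
  have Dc3 : 3 ≤ F → ∀ j ≤ E, ∀ z, (z = p j ∨ H.Adj z (p j)) → (z = c 3 ∨ H.Adj z (c 3)) → False := by
    intro hF3 j hj z h1 h2
    have k1 : η z ≤ 1 := by
      rcases h1 with rfl | h1
      · rw [pη j hj]; omega
      · have := (he _ _ h1).2; rwa [pη j hj] at this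
    have k2 : 2 ≤ η z := by
      rcases h2 with rfl | h2
      · rw [cd _ (by omega)]; omega
      · have := (he _ _ h2).1; rw [cd _ (by omega)] at this; omega
    omega
  by_cases hz : ∃ z, (z = c 2 ∨ H.Adj z (c 2)) ∧ ((z = p i ∨ H.Adj z (p i)) ∨
      (z = p (i + 3) ∨ H.Adj z (p (i + 3))))
  swap
  · refine ⟨p i, p (i + 3), c 2, Q1, Q2, Q3, Pos1, Pos2, Pos3 2 le_rfl hF2, D12, ?_, ?_⟩
    · exact fun z h1 h2 => hz ⟨z, h2, Or.inl h1⟩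
    · exact fun z h1 h2 => hz ⟨z, h2, Or.inr h1⟩
  obtain ⟨z, hz2, hz3⟩ := hz
  suffices hmain : 3 ≤ F ∧ Q (c 3) from
    ⟨p i, p (i + 3), c 3, Q1, Q2, hmain.2, Pos1, Pos2, Pos3 3 (by omega) hmain.1, D12,
      Dc3 hmain.1 i (by omega), Dc3 hmain.1 (i + 3) (by omega)⟩
  have hzc2 : H.Adj z (c 2) := by
    rcases hz2 with rfl | h
    · exfalso
      rcases hz3 with (h | h) | (h | h)
      · exact cP 2 (by omega) hF2 _ (by omega) h
      · exact cnP 2 (by omega) hF2 _ (by omega) h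
      · exact cP 2 (by omega) hF2 _ (by omega) h
      · exact cnP 2 (by omega) hF2 _ (by omega) h
    · exact h
  have hzP : ∀ j ≤ E, z ≠ p j := by
    rintro j hj rfl
    exact cnP' 2 (by omega) hF2 _ (by omega) hzc2
  have hze : H.Adj z (p i) ∨ H.Adj z (p (i + 3)) := by
    rcases hz3 with (h | h) | (h | h)
    · exact absurd h (hzP _ (by omega))
    · exact Or.inl h
    · exact absurd h (hzP _ (by omega))
    · exact Or.inr h
  have hzc1 : z ≠ c 1 := by
    rintro rfl
    rcases hze with h | h
    · exact hcn _ (by omega) (by omega) (by omega) h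
    · exact hcn _ (by omega) (by omega) (by omega) h
  have hF3 : 3 ≤ F := by
    by_contra hcon
    have : F = 2 := by omega
    have hc2 : c 2 = g3 := by rw [← cF, this]
    rw [hc2] at hzc2 c12
    exact hzc1 ((hg3 _ hzc2.symm).trans (hg3 _ c12.symm).symm)
  refine ⟨hF3, ?_⟩
  have c23 := cadj 2 (by omega)
  norm_num at c23
  obtain ⟨l, hl3, hl1, hl2, hl⟩ := hloc z (c 2) hzP
    (by
      rcases hze with h | h
      · exact ⟨_, by omega, h⟩
      · exact ⟨_, by omega, h⟩) hzc2 (cnP 2 (by omega) (by omega)) (cP 2 (by omega) (by omega))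
  have hzc3 : ¬ H.Adj z (c 3) := by
    intro h
    rcases hze with h' | h'
    · exact Dc3 hF3 _ (by omega) z (Or.inr h') (Or.inr h)
    · exact Dc3 hF3 _ (by omega) z (Or.inr h') (Or.inr h)
  have hzne3 : z ≠ c 3 := by
    rintro rfl
    exact cnP 3 (by omega) hF3 _ (by omega) hl1
  have n13' := cna 1 3 (by omega) (by omega) (by omega)
  have hc1z : H.Adj (c 1) z := by
    rcases hcl.claw c12.symm hzc2.symm c23 hzc1.symm (cne _ _ (by omega) (by omega) (by omega))
      hzne3 with h | h | h
    · exact h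
    · contradiction
    · contradiction
  have hzn : ∀ j ≤ E, j ≠ l + 1 → j ≠ l + 2 → ¬ H.Adj z (p j) := by
    intro j hj h1 h2 h
    rcases hl j hj h with h | h <;> contradiction
  rcases hze with hzi | hzi
  · have hil := hl _ (by omega) hzi
    exact (hQ (c 1) (c 2) z (p (i + 2)) (c 3) (p (l + 1)) c12 hzc2.symm hc1z hc2 c23 hl1 n13'
      (hcn _ (by omega) (by omega) (by omega)) (cnP 2 (by omega) hF2 _ (by omega))
      (cnP 2 (by omega) hF2 _ (by omega)) (hzn _ (by omega) (by omega) (by omega)) hzc3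
      (cnP' 3 (by omega) hF3 _ (by omega)) (pna' _ _ (by omega) (by omega) (by omega))
      (cnP 3 (by omega) hF3 _ (by omega)) (cP 3 (by omega) hF3 _ (by omega)).symm
      (pne _ _ (by omega) (by omega) (by omega)) (cP 3 (by omega) hF3 _ (by omega))).2.1
  · have hil := hl _ (by omega) hzi
    exact (hQ (c 1) (c 2) z (p (i + 1)) (c 3) (p (l + 2)) c12 hzc2.symm hc1z hc1 c23 hl2 n13'
      (hcn _ (by omega) (by omega) (by omega)) (cnP 2 (by omega) hF2 _ (by omega))
      (cnP 2 (by omega) hF2 _ (by omega)) (hzn _ (by omega) (by omega) (by omega)) hzc3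
      (cnP' 3 (by omega) hF3 _ (by omega)) (pna _ _ (by omega) (by omega) (by omega))
      (cnP 3 (by omega) hF3 _ (by omega)) (cP 3 (by omega) hF3 _ (by omega)).symm
      (pne _ _ (by omega) (by omega) (by omega)) (cP 3 (by omega) hF3 _ (by omega))).2.1

end NetAbstract

open SimpleGraph
set_option linter.unusedSectionVars false
set_option linter.unusedVariables false

section NetLemma
variable {V : Type*} [Fintype V]

/-- the block (maximal clique) spanned by an edge -/
def cl (L : SimpleGraph V) (a b : V) : Set V := {v | (v = a ∨ L.Adj a v) ∧ (v = b ∨ L.Adj b v)}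

/-- closed neighbourhood -/
def CN (L : SimpleGraph V) (a : V) : Set V := {v | v = a ∨ L.Adj a v}

/-- Properties of blocks. -/
structure Blk (L : SimpleGraph V) (U : Set V) : Prop where
  clique : ∀ u ∈ U, ∀ v ∈ U, u ≠ v → L.Adj u v
  mem : ∀ c ∈ U, ∀ d ∈ U, c ≠ d → ∀ v, v ∈ CN L c → v ∈ CN L d → v ∈ U

theorem left_mem_cl {L : SimpleGraph V} {a b : V} (h : L.Adj a b) : a ∈ cl L a b :=
  ⟨Or.inl rfl, Or.inr h.symm⟩

theorem right_mem_cl {L : SimpleGraph V} {a b : V} (h : L.Adj a b) : b ∈ cl L a b :=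
  ⟨Or.inr h, Or.inl rfl⟩

theorem cl_blk {L : SimpleGraph V} (hD : DiamondFree L) {a b : V} (hab : L.Adj a b) :
    Blk L (cl L a b) := by
  have hcl : ∀ u ∈ cl L a b, ∀ v ∈ cl L a b, u ≠ v → L.Adj u v := by
    rintro u ⟨hu1, hu2⟩ v ⟨hv1, hv2⟩ huv
    rcases hu1 with rfl | hu1
    · exact hv1.resolve_left huv.symm
    rcases hu2 with rfl | hu2
    · exact hv2.resolve_left huv.symm
    rcases hv1 with rfl | hv1
    · exact hu1.symm
    rcases hv2 with rfl | hv2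
    · exact hu2.symm
    exact hD a b u v hab hu1 hv1 hu2 hv2 huv
  have key : ∀ c ∈ cl L a b, ∀ d ∈ cl L a b, c ≠ d → ∀ v, v ∈ CN L c → v ∈ CN L d →
      ∀ x ∈ cl L a b, v = x ∨ L.Adj x v := by
    intro c hc d hd hcd v h1 h2 x hx
    by_cases hvx : v = x
    · exact Or.inl hvx
    right
    rcases h1 with rfl | h1
    · exact hcl x hx v hc (Ne.symm hvx)
    rcases h2 with rfl | h2
    · exact hcl x hx v hd (Ne.symm hvx)
    by_cases hxc : x = c
    · exact hxc ▸ h1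
    by_cases hxd : x = d
    · exact hxd ▸ h2
    exact (hD c d v x (hcl c hc d hd hcd) h1 (hcl c hc x hx (Ne.symm hxc)) h2
      (hcl d hd x hx (Ne.symm hxd)) hvx).symm
  refine ⟨hcl, ?_⟩
  intro c hc d hd hcd v h1 h2
  exact ⟨key c hc d hd hcd v h1 h2 a (left_mem_cl hab), key c hc d hd hcd v h1 h2 b (right_mem_cl hab)⟩

theorem Blk.joined {G L : SimpleGraph V} {U : Set V} (hU : Blk L U) (hC : ConnGL G L) {u v : V}
    (hu : u ∈ U) (hv : v ∈ U) : JoinedIn' G U u v := by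
  by_cases huv : u = v
  · subst huv; exact Relation.ReflTransGen.refl
  obtain ⟨S, h1, h2, h3, h4⟩ := hC u v (hU.clique u hu v hv huv)
  refine h4.mono ?_
  intro w hw
  refine hU.mem u hu v hv huv w ?_ ?_
  · by_cases h : w = u
    · exact Or.inl h
    · exact Or.inr (h3 h1 hw (Ne.symm h))
  · by_cases h : w = v
    · exact Or.inl h
    · exact Or.inr (h3 h2 hw (Ne.symm h))

/-- two blocks sharing two vertices -/
theorem Blk.disj {L : SimpleGraph V} {U P : Set V} (hU : Blk L U) (hP : Blk L P) {t f v : V}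
    (htU : t ∈ U) (htP : t ∈ P) (hfP : f ∈ P) (hfU : f ∉ U) (hvU : v ∈ U) (hvP : v ∈ P) : v = t := by
  by_contra hvt
  apply hfU
  refine hU.mem v hvU t htU hvt f ?_ ?_
  · by_cases h : f = v
    · exact Or.inl h
    · exact Or.inr (hP.clique v hvP f hfP (Ne.symm h))
  · by_cases h : f = t
    · exact Or.inl h
    · exact Or.inr (hP.clique t htP f hfP (Ne.symm h))

theorem exists_fhat {G L : SimpleGraph V} (hG : ClawFree G) (hGL : G ≤ L) (hC : ConnGL G L)
    {P : Set V} (hP : Blk L P) {t f : V} (ht : t ∈ P) (hf : f ∈ P) (htf : t ≠ f) :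
    ∃ g ∈ P, G.Adj t g ∧ (g = f ∨ ∀ w, G.Adj g w → w ∈ P) := by
  by_cases hadj : G.Adj t f
  · exact ⟨f, hf, hadj, Or.inl rfl⟩
  have hj := hP.joined hC ht hf
  have key : ∀ b, JoinedIn' G P t b → b ≠ t → ¬ G.Adj t b →
      ∃ g g', G.Adj g g' ∧ g ∈ P ∧ g' ∈ P ∧ G.Adj t g ∧ g' ≠ t ∧ ¬ G.Adj t g' := by
    intro b hb
    induction hb with
    | refl => exact fun h => absurd rfl h
    | @tail b c _ h ih =>
      intro hc1 hc2
      by_cases hbt : b = t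
      · subst hbt; exact absurd h.1 hc2
      by_cases hb2 : G.Adj t b
      · exact ⟨b, c, h.1, h.2.1, h.2.2, hb2, hc1, hc2⟩
      · exact ih hbt hb2
  obtain ⟨g, g', h1, h2, h3, h4, h5, h6⟩ := key f hj htf.symm hadj
  refine ⟨g, h2, h4, Or.inr ?_⟩
  intro w hw
  by_contra hwP
  have e1 : t ≠ w := by rintro rfl; exact hwP ht
  have e2 : g' ≠ w := by rintro rfl; exact hwP h3
  rcases hG.claw h4.symm h1 hw h5.symm e1 e2 with h | h | h
  · exact h6 h
  · exact hwP (hP.mem g h2 t ht h4.ne.symm w (Or.inr (hGL hw)) (Or.inr (hGL h)))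
  · exact hwP (hP.mem g h2 g' h3 h1.ne w (Or.inr (hGL hw)) (Or.inr (hGL h)))

theorem reachable_of_joined {G : SimpleGraph V} {U U' : Set V} (hUU : U ⊆ U') {a b : V}
    (h : JoinedIn' G U a b) (ha : a ∈ U') (hb : b ∈ U') :
    (G.induce U').Reachable ⟨a, ha⟩ ⟨b, hb⟩ := by
  induction h with
  | refl => exact Reachable.refl _
  | @tail b c _ h ih =>
    exact (ih (hUU h.2.1)).trans (Adj.reachable (by simpa using h.1))

theorem ncard_three (A B C : Set V) : A.ncard + B.ncard + C.ncard ≤ (A ∪ B ∪ C).ncard +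
    (A ∩ B).ncard + (A ∩ C).ncard + (B ∩ C).ncard := by
  have h1 := Set.ncard_union_add_ncard_inter A B
  have h2 := Set.ncard_union_add_ncard_inter (A ∪ B) C
  have h3 : (A ∪ B) ∩ C = (A ∩ C) ∪ (B ∩ C) := Set.union_inter_distrib_right A B C
  have h4 := Set.ncard_union_le (A ∩ C) (B ∩ C)
  rw [h3] at h2
  omega

theorem CN_ncard (G : SimpleGraph V) (e : V) : (CN G e).ncard = (G.neighborSet e).ncard + 1 := by
  have : CN G e = insert e (G.neighborSet e) := by
    ext w; simp [CN]
  rw [this, Set.ncard_insert_of_notMem (by simp)]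

theorem net_lemma {G L : SimpleGraph V} (hG : ClawFree G) (hGL : G ≤ L) (hL : ClawFree L)
    (hD : DiamondFree L) (hC : ConnGL G L) (hN : NetHyp G) {U : Set V} (hU : Blk L U)
    {t1 t2 t3 f1 f2 f3 : V}
    (ht1 : t1 ∈ U) (ht2 : t2 ∈ U) (ht3 : t3 ∈ U) (t12 : t1 ≠ t2) (t13 : t1 ≠ t3) (t23 : t2 ≠ t3)
    (a1 : L.Adj t1 f1) (a2 : L.Adj t2 f2) (a3 : L.Adj t3 f3)
    (f1U : f1 ∉ U) (f2U : f2 ∉ U) (f3U : f3 ∉ U)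
    (n12 : ¬ L.Adj f1 f2) (n13 : ¬ L.Adj f1 f3) (n23 : ¬ L.Adj f2 f3)
    (d12 : f1 ≠ f2) (d13 : f1 ≠ f3) (d23 : f2 ≠ f3) :
    Fintype.card V + 1 ≤ (U ∪ CN L f1 ∪ CN L f2 ∪ CN L f3).ncard + (CN L f1 ∩ CN L f2).ncard +
      (CN L f1 ∩ CN L f3).ncard + (CN L f2 ∩ CN L f3).ncard := by
  have hP : ∀ t f, L.Adj t f → Blk L (cl L t f) := fun t f h => cl_blk hD h
  have hg : ∀ t f, L.Adj t f → t ∈ U → f ∉ U → ∃ g ∈ cl L t f, G.Adj t g ∧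
      (g = f ∨ ∀ w, G.Adj g w → w ∈ cl L t f) := fun t f h _ _ =>
    exists_fhat hG hGL hC (hP t f h) (left_mem_cl h) (right_mem_cl h) h.ne
  -- facts on g
  have hgU : ∀ t f g, L.Adj t f → t ∈ U → f ∉ U → g ∈ cl L t f → G.Adj t g → g ∉ U := by
    intro t f g h1 h2 h3 h4 h5 h6
    exact h5.ne (hU.disj (hP t f h1) h2 (left_mem_cl h1) (right_mem_cl h1) h3 h6 h4).symm
  have hgt : ∀ t f g, L.Adj t f → t ∈ U → f ∉ U → g ∈ cl L t f → G.Adj t g →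
      ∀ u ∈ U, G.Adj g u → u = t := by
    intro t f g h1 h2 h3 h4 h5 u hu hgu
    by_contra hut
    exact hgU t f g h1 h2 h3 h4 h5 (hU.mem u hu t h2 hut g (Or.inr (hGL hgu.symm)) (Or.inr (hGL h5)))
  have hPP : ∀ t t' f f', L.Adj t f → L.Adj t' f' → t ∈ U → t' ∈ U → t ≠ t' → f ∉ U → f' ∉ U →
      ∀ v, v ∈ cl L t f → v ∈ cl L t' f' → False := by
    intro t t' f f' h h' ht ht' htt hf hf' v hv hv'
    have hvU : v ∈ U := hU.mem t ht t' ht' htt v hv.1 hv'.1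
    have e1 := hU.disj (hP t f h) ht (left_mem_cl h) (right_mem_cl h) hf hvU hv
    have e2 := hU.disj (hP t' f' h') ht' (left_mem_cl h') (right_mem_cl h') hf' hvU hv'
    exact htt (e1.symm.trans e2)
  have hgg : ∀ t t' f f' g g', L.Adj t f → L.Adj t' f' → t ∈ U → t' ∈ U → t ≠ t' → f ∉ U → f' ∉ U →
      ¬ L.Adj f f' →
      g ∈ cl L t f → g' ∈ cl L t' f' → (g = f ∨ ∀ w, G.Adj g w → w ∈ cl L t f) →
      (g' = f' ∨ ∀ w, G.Adj g' w → w ∈ cl L t' f') → ¬ G.Adj g g' := by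
    intro t t' f f' g g' h h' ht ht' htt hf hf' hn hg hg' hh hh' hadj
    rcases hh with rfl | hh
    · rcases hh' with rfl | hh'
      · exact hn (hGL hadj)
      · exact hPP t t' g f' h h' ht ht' htt hf hf' g hg (hh' _ hadj.symm)
    · exact hPP t t' f f' h h' ht ht' htt hf hf' g' (hh _ hadj) hg'
  obtain ⟨g1, m1, b1, k1⟩ := hg t1 f1 a1 ht1 f1U
  obtain ⟨g2, m2, b2, k2⟩ := hg t2 f2 a2 ht2 f2U
  obtain ⟨g3, m3, b3, k3⟩ := hg t3 f3 a3 ht3 f3U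
  have u1 := hgU _ _ _ a1 ht1 f1U m1 b1
  have u2 := hgU _ _ _ a2 ht2 f2U m2 b2
  have u3 := hgU _ _ _ a3 ht3 f3U m3 b3
  have v1 := hgt _ _ _ a1 ht1 f1U m1 b1
  have v2 := hgt _ _ _ a2 ht2 f2U m2 b2
  have v3 := hgt _ _ _ a3 ht3 f3U m3 b3
  have w12 := hgg _ _ _ _ _ _ a1 a2 ht1 ht2 t12 f1U f2U n12 m1 m2 k1 k2
  have w13 := hgg _ _ _ _ _ _ a1 a3 ht1 ht3 t13 f1U f3U n13 m1 m3 k1 k3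
  have w23 := hgg _ _ _ _ _ _ a2 a3 ht2 ht3 t23 f2U f3U n23 m2 m3 k2 k3
  have x12 : g1 ≠ g2 := by
    rintro rfl; exact hPP _ _ _ _ a1 a2 ht1 ht2 t12 f1U f2U _ m1 m2
  have x13 : g1 ≠ g3 := by
    rintro rfl; exact hPP _ _ _ _ a1 a3 ht1 ht3 t13 f1U f3U _ m1 m3
  have x23 : g2 ≠ g3 := by
    rintro rfl; exact hPP _ _ _ _ a2 a3 ht2 ht3 t23 f2U f3U _ m2 m3
  set U' : Set V := U ∪ {g1, g2, g3} with hU'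
  have hUU : U ⊆ U' := Set.subset_union_left
  have hm1 : g1 ∈ U' := by simp [hU']
  have hm2 : g2 ∈ U' := by simp [hU']
  have hm3 : g3 ∈ U' := by simp [hU']
  have hmU : ∀ w ∈ U', w ∈ U ∨ w = g1 ∨ w = g2 ∨ w = g3 := by
    intro w hw
    rcases hw with h | h
    · exact Or.inl h
    · right; simpa using h
  have z1 : ∀ w ∈ U', G.Adj g1 w → w = t1 := by
    intro w hw h
    rcases hmU w hw with h' | rfl | rfl | rfl
    · exact v1 w h' h
    · exact absurd rfl h.ne
    · exact absurd h w12
    · exact absurd h w13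
  have z2 : ∀ w ∈ U', G.Adj g2 w → w = t2 := by
    intro w hw h
    rcases hmU w hw with h' | rfl | rfl | rfl
    · exact v2 w h' h
    · exact absurd h.symm w12
    · exact absurd rfl h.ne
    · exact absurd h w23
  have z3 : ∀ w ∈ U', G.Adj g3 w → w = t3 := by
    intro w hw h
    rcases hmU w hw with h' | rfl | rfl | rfl
    · exact v3 w h' h
    · exact absurd h.symm w13
    · exact absurd h.symm w23
    · exact absurd rfl h.ne
  have hconn : (G.induce U').Connected := by
    have hr : ∀ w (hw : w ∈ U'), (G.induce U').Reachable ⟨t1, hUU ht1⟩ ⟨w, hw⟩ := by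
      have hrU : ∀ w (hw : w ∈ U), (G.induce U').Reachable ⟨t1, hUU ht1⟩ ⟨w, hUU hw⟩ :=
        fun w hw => reachable_of_joined hUU (hU.joined hC ht1 hw) _ _
      intro w hw
      rcases hmU w hw with h' | rfl | rfl | rfl
      · exact hrU w h'
      · exact (hrU t1 ht1).trans (Adj.reachable (by simpa using b1))
      · exact (hrU t2 ht2).trans (Adj.reachable (by simpa using b2))
      · exact (hrU t3 ht3).trans (Adj.reachable (by simpa using b3))
    haveI : Nonempty U' := ⟨⟨t1, hUU ht1⟩⟩
    exact ⟨fun u v => (hr u.1 u.2).symm.trans (hr v.1 v.2)⟩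
  have hcl' : ClawFree (G.induce U') := by
    apply ClawFree.of_claw
    intro c x y z h1 h2 h3 e1 e2 e3
    exact hG.claw (c := (c : V)) h1 h2 h3 (fun h => e1 (Subtype.ext h)) (fun h => e2 (Subtype.ext h))
      (fun h => e3 (Subtype.ext h))
  obtain ⟨e1, e2, e3, Q1, Q2, Q3, P1, P2, P3, D12, D13, D23⟩ := net_abstract (G.induce U') hconn hcl'
    (g1 := ⟨g1, hm1⟩) (g2 := ⟨g2, hm2⟩) (g3 := ⟨g3, hm3⟩) (t1 := ⟨t1, hUU ht1⟩)
    (t2 := ⟨t2, hUU ht2⟩) (t3 := ⟨t3, hUU ht3⟩)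
    (fun w h => Subtype.ext (z1 w.1 w.2 h)) (fun w h => Subtype.ext (z2 w.1 w.2 h))
    (fun w h => Subtype.ext (z3 w.1 w.2 h)) (fun h => x12 (congrArg Subtype.val h))
    (fun h => x13 (congrArg Subtype.val h)) (fun h => x23 (congrArg Subtype.val h))
    w13 w23 (fun e => Fintype.card V + 1 ≤ 3 * ((G.neighborSet (e : V)).ncard + 1))
    (by
      intro a b c a' b' c' h1 h2 h3 h4 h5 h6 c1 c2 c3 c4 c5 c6 c7 c8 c9 o1 o2 o3
      exact hN a b c a' b' c' h1 h2 h3 h4 h5 h6 c1 c2 c3 c4 c5 c6 c7 c8 c9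
        (fun h => o1 (Subtype.ext h)) (fun h => o2 (Subtype.ext h)) (fun h => o3 (Subtype.ext h)))
  have hnbt : ∀ t t' f, t ∈ U → t' ∈ U → t ≠ t' → f ∉ U → L.Adj t f → CN G t ⊆ U ∪ CN L f := by
    intro t t' f ht ht' htt hf htf w hw
    rcases hw with rfl | hw
    · exact Or.inl ht
    by_contra hcon
    rw [Set.mem_union, not_or] at hcon
    obtain ⟨c1, c2⟩ := hcon
    have hfw : f ≠ w := fun h => c2 (Or.inl h.symm)
    have e1 : w ≠ t' := by rintro rfl; exact c1 ht'
    have e2 : f ≠ t' := by rintro rfl; exact hf ht'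
    rcases hL.claw (hGL hw) htf (hU.clique t ht t' ht' htt) hfw.symm e1 e2 with h | h | h
    · exact c2 (Or.inr h.symm)
    · exact c1 (hU.mem t ht t' ht' htt w (Or.inr (hGL hw)) (Or.inr h.symm))
    · exact hf (hU.mem t ht t' ht' htt f (Or.inr htf) (Or.inr h.symm))
  have hinner : ∀ e : V, e ∈ U' → (∃ u v, u ∈ U ∧ v ∈ U ∧ G.Adj e u ∧ G.Adj e v ∧ u ≠ v ∧
      ¬ G.Adj u v) → CN G e ⊆ U := by
    rintro e he ⟨u, v, hu, hv, heu, hev, huv, hnuv⟩ w hw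
    have heU : e ∈ U := by
      rcases hmU e he with h' | rfl | rfl | rfl
      · exact h'
      · exact absurd ((v1 u hu heu).trans (v1 v hv hev).symm) huv
      · exact absurd ((v2 u hu heu).trans (v2 v hv hev).symm) huv
      · exact absurd ((v3 u hu heu).trans (v3 v hv hev).symm) huv
    rcases hw with rfl | hw
    · exact heU
    by_contra hwU
    have o1 : u ≠ w := by rintro rfl; exact hwU hu
    have o2 : v ≠ w := by rintro rfl; exact hwU hv
    rcases hG.claw heu hev hw huv o1 o2 with h | h | h
    · exact hnuv h
    · exact hwU (hU.mem e heU u hu heu.ne w (Or.inr (hGL hw)) (Or.inr (hGL h)))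
    · exact hwU (hU.mem e heU v hv hev.ne w (Or.inr (hGL hw)) (Or.inr (hGL h)))
  have hcov : ∀ t t' f g (e : U') (hgm : g ∈ U'), t ∈ U → t' ∈ U → t ≠ t' → f ∉ U → L.Adj t f →
      g ∈ cl L t f → (g = f ∨ ∀ w, G.Adj g w → w ∈ cl L t f) →
      (∀ w ∈ U', G.Adj g w → w = t) →
      PosN (G.induce U') ⟨g1, hm1⟩ ⟨g2, hm2⟩ ⟨g3, hm3⟩ ⟨g, hgm⟩ e → CN G (e : V) ⊆ U ∪ CN L f := by
    intro t t' f g e hgm ht ht' htt hf htf hgc hgd hgt hpos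
    rcases hpos with rfl | h | ⟨u, v, h1, h2, h3, h4, h5, h6⟩
    · intro w hw
      right
      rcases hgd with rfl | hgd
      · rcases hw with rfl | hw
        · exact Or.inl rfl
        · exact Or.inr (hGL hw)
      · rcases hw with rfl | hw
        · exact hgc.2
        · exact (hgd w hw).2
    · have := hgt e.1 e.2 h
      rw [this]
      exact hnbt t t' f ht ht' htt hf htf
    · have huU : ∀ u : U', (u ≠ ⟨g1, hm1⟩ ∧ u ≠ ⟨g2, hm2⟩ ∧ u ≠ ⟨g3, hm3⟩) → (u : V) ∈ U := by
        rintro ⟨u, hu⟩ ⟨o1, o2, o3⟩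
        rcases hmU u hu with h' | rfl | rfl | rfl
        · exact h'
        · exact absurd rfl o1
        · exact absurd rfl o2
        · exact absurd rfl o3
      exact (hinner e.1 e.2 ⟨u, v, huU u h5, huU v h6, h1, h2, fun h => h3 (Subtype.ext h), h4⟩).trans
        Set.subset_union_left
  have c1 := hcov t1 t2 f1 g1 e1 hm1 ht1 ht2 t12 f1U a1 m1 k1 z1 P1
  have c2 := hcov t2 t1 f2 g2 e2 hm2 ht2 ht1 t12.symm f2U a2 m2 k2 z2 P2
  have c3 := hcov t3 t1 f3 g3 e3 hm3 ht3 ht1 t13.symm f3U a3 m3 k3 z3 P3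
  have hinter : ∀ (e e' : U') (f f' : V), CN G (e : V) ⊆ U ∪ CN L f → CN G (e' : V) ⊆ U ∪ CN L f' →
      (∀ z, (z = e ∨ (G.induce U').Adj z e) → (z = e' ∨ (G.induce U').Adj z e') → False) →
      CN G (e : V) ∩ CN G (e' : V) ⊆ CN L f ∩ CN L f' := by
    rintro e e' f f' h1 h2 h3 w ⟨hw, hw'⟩
    have hwU : w ∉ U := by
      intro hwU
      refine h3 ⟨w, hUU hwU⟩ ?_ ?_
      · rcases hw with h | h
        · exact Or.inl (Subtype.ext h)
        · exact Or.inr h.symm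
      · rcases hw' with h | h
        · exact Or.inl (Subtype.ext h)
        · exact Or.inr h.symm
    exact ⟨(h1 hw).resolve_left hwU, (h2 hw').resolve_left hwU⟩
  have i12 := Set.ncard_le_ncard (hinter e1 e2 f1 f2 c1 c2 D12)
  have i13 := Set.ncard_le_ncard (hinter e1 e3 f1 f3 c1 c3 D13)
  have i23 := Set.ncard_le_ncard (hinter e2 e3 f2 f3 c2 c3 D23)
  have hun : CN G (e1 : V) ∪ CN G (e2 : V) ∪ CN G (e3 : V) ⊆ U ∪ CN L f1 ∪ CN L f2 ∪ CN L f3 := by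
    rintro w ((hw | hw) | hw)
    · rcases c1 hw with h | h <;> simp [h]
    · rcases c2 hw with h | h <;> simp [h]
    · rcases c3 hw with h | h <;> simp [h]
  have i0 := Set.ncard_le_ncard hun
  have h3 := ncard_three (CN G (e1 : V)) (CN G (e2 : V)) (CN G (e3 : V))
  rw [CN_ncard, CN_ncard, CN_ncard] at h3
  omega

end NetLemma

open SimpleGraph
set_option linter.unusedSectionVars false
set_option linter.unusedVariables false

section RootGraph
variable {V : Type*} [Fintype V]

/-- `H` is a (triangle-free) root graph of `L`, the edges of `H` being labelled by `V`; `sc` is the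
spider condition. -/
structure Root {V W : Type*} (L : SimpleGraph V) (H : SimpleGraph W) (e : V → Sym2 W) : Prop where
  edge : ∀ v, e v ∈ H.edgeSet
  surj : ∀ x y, H.Adj x y → ∃ v, e v = s(x, y)
  inj : Function.Injective e
  adj : ∀ u v, L.Adj u v ↔ u ≠ v ∧ ∃ x, x ∈ e u ∧ x ∈ e v
  tf : ∀ x y z, H.Adj x y → H.Adj y z → H.Adj x z → False
  sc : ∀ u p1 p2 p3 q1 q2 q3, [u, p1, p2, p3, q1, q2, q3].Nodup →
    H.Adj u p1 → H.Adj u p2 → H.Adj u p3 → H.Adj p1 q1 → H.Adj p2 q2 → H.Adj p3 q3 →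
    {v | u ∉ e v ∧ p1 ∉ e v ∧ p2 ∉ e v ∧ p3 ∉ e v ∧ q1 ∉ e v ∧ q2 ∉ e v ∧ q3 ∉ e v}.ncard + 1 ≤
      {v | (p1 ∈ e v ∨ q1 ∈ e v) ∧ (p2 ∈ e v ∨ q2 ∈ e v)}.ncard +
      {v | (p1 ∈ e v ∨ q1 ∈ e v) ∧ (p3 ∈ e v ∨ q3 ∈ e v)}.ncard +
      {v | (p2 ∈ e v ∨ q2 ∈ e v) ∧ (p3 ∈ e v ∨ q3 ∈ e v)}.ncard

theorem Blk.eq {L : SimpleGraph V} {X Y : Set V} (hX : Blk L X) (hY : Blk L Y) {c d : V}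
    (hcd : c ≠ d) (h1 : c ∈ X) (h2 : d ∈ X) (h3 : c ∈ Y) (h4 : d ∈ Y) : X = Y := by
  have cn : ∀ {X : Set V}, Blk L X → ∀ c ∈ X, ∀ x ∈ X, x ∈ CN L c := by
    intro X hX c hc x hx
    by_cases h : x = c
    · exact Or.inl h
    · exact Or.inr (hX.clique c hc x hx (Ne.symm h))
  ext x
  exact ⟨fun hx => hY.mem c h3 d h4 hcd x (cn hX c h1 x hx) (cn hX d h2 x hx),
    fun hx => hX.mem c h1 d h2 hcd x (cn hY c h3 x hx) (cn hY d h4 x hx)⟩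

theorem exists_two_blocks {L : SimpleGraph V} (hL : ClawFree L) (hD : DiamondFree L) (v : V)
    (hv : ∃ b, L.Adj v b) : ∃ A B : Set V, A ≠ B ∧ v ∈ A ∧ v ∈ B ∧ Blk L A ∧ Blk L B ∧
      ∀ w, w ∈ CN L v ↔ w ∈ A ∨ w ∈ B := by
  obtain ⟨b, hb⟩ := hv
  by_cases hc : ∃ c, L.Adj v c ∧ c ∉ cl L v b
  · obtain ⟨c, hc, hcA⟩ := hc
    refine ⟨cl L v b, cl L v c, ?_, left_mem_cl hb, left_mem_cl hc, cl_blk hD hb, cl_blk hD hc, ?_⟩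
    · intro h; exact hcA (h ▸ right_mem_cl hc)
    · intro w
      constructor
      · rintro (rfl | hw)
        · exact Or.inl (left_mem_cl hb)
        · by_contra hcon
          push Not at hcon
          have hwb : ¬ (w = b ∨ L.Adj b w) := fun h => hcon.1 ⟨Or.inr hw, h⟩
          have hwc : ¬ (w = c ∨ L.Adj c w) := fun h => hcon.2 ⟨Or.inr hw, h⟩
          have hcb : ¬ (c = b ∨ L.Adj b c) := fun h => hcA ⟨Or.inr hc, h⟩
          push Not at hwb hwc hcb
          rcases hL.claw hb hc hw (Ne.symm hcb.1) (Ne.symm hwb.1) (Ne.symm hwc.1) with h | h | h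
          · exact hcb.2 h
          · exact hwb.2 h
          · exact hwc.2 h
      · rintro (h | h)
        · exact h.1
        · exact h.1
  · push Not at hc
    refine ⟨cl L v b, {v}, ?_, left_mem_cl hb, rfl, cl_blk hD hb, ⟨?_, ?_⟩, ?_⟩
    · intro h
      have : b ∈ ({v} : Set V) := h ▸ right_mem_cl hb
      exact hb.ne this.symm
    · rintro u rfl v rfl h; exact absurd rfl h
    · rintro u rfl v rfl h; exact absurd rfl h
    · intro w
      constructor
      · rintro (rfl | hw)
        · exact Or.inr rfl
        · exact Or.inl (hc w hw)
      · rintro (h | h)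
        · exact h.1
        · exact Or.inl h

theorem exists_root {G L : SimpleGraph V} (hG : ClawFree G) (hGL : G ≤ L) (hL : ClawFree L)
    (hD : DiamondFree L) (hC : ConnGL G L) (hN : NetHyp G) (hnb : ∀ v, ∃ b, L.Adj v b) :
    ∃ (H : SimpleGraph (Set V)) (e : V → Sym2 (Set V)), Root L H e := by
  choose A B hAB hvA hvB bA bB hcn using fun v => exists_two_blocks hL hD v (hnb v)
  set e : V → Sym2 (Set V) := fun v => s(A v, B v) with he
  have mem_e : ∀ v X, X ∈ e v ↔ X = A v ∨ X = B v := by intro v X; simp [he]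
  have hblk : ∀ v X, X ∈ e v → Blk L X := by
    intro v X h
    rcases (mem_e v X).1 h with rfl | rfl
    · exact bA v
    · exact bB v
  have hself : ∀ v X, X ∈ e v → v ∈ X := by
    intro v X h
    rcases (mem_e v X).1 h with rfl | rfl
    · exact hvA v
    · exact hvB v
  have hmem : ∀ v X, X ∈ e v → ∀ w ∈ X, X ∈ e w := by
    intro v X hX w hw
    by_cases hvw : v = w
    · exact hvw ▸ hX
    have h1 := (hblk v X hX).clique w hw v (hself v X hX) (Ne.symm hvw)
    rcases (hcn w v).1 (Or.inr h1) with h | h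
    · have := (hblk v X hX).eq (bA w) hvw (hself v X hX) hw h (hvA w)
      exact (mem_e w X).2 (Or.inl this)
    · have := (hblk v X hX).eq (bB w) hvw (hself v X hX) hw h (hvB w)
      exact (mem_e w X).2 (Or.inr this)
  have hinj : Function.Injective e := by
    intro u v huv
    by_contra hne
    refine hAB u ((bA u).eq (bB u) hne (hvA u) ?_ (hvB u) ?_)
    · exact hself v _ (huv ▸ (mem_e u _).2 (Or.inl rfl))
    · exact hself v _ (huv ▸ (mem_e u _).2 (Or.inr rfl))
  have hadj : ∀ u v, L.Adj u v ↔ u ≠ v ∧ ∃ x, x ∈ e u ∧ x ∈ e v := by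
    intro u v
    constructor
    · intro h
      refine ⟨h.ne, ?_⟩
      rcases (hcn u v).1 (Or.inr h) with h' | h'
      · exact ⟨A u, (mem_e u _).2 (Or.inl rfl), hmem u _ ((mem_e u _).2 (Or.inl rfl)) v h'⟩
      · exact ⟨B u, (mem_e u _).2 (Or.inr rfl), hmem u _ ((mem_e u _).2 (Or.inr rfl)) v h'⟩
    · rintro ⟨hne, X, h1, h2⟩
      exact (hblk u X h1).clique u (hself u X h1) v (hself v X h2) hne
  have hadjH : ∀ x y, (fromEdgeSet (Set.range e)).Adj x y ↔ ∃ v, e v = s(x, y) := by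
    intro x y
    rw [fromEdgeSet_adj]
    constructor
    · rintro ⟨⟨v, hv⟩, _⟩; exact ⟨v, hv⟩
    · rintro ⟨v, hv⟩
      refine ⟨⟨v, hv⟩, ?_⟩
      rintro rfl
      have h1 : A v = x := by
        have : A v ∈ s(x, x) := hv ▸ (mem_e v _).2 (Or.inl rfl)
        simpa using this
      have h2 : B v = x := by
        have : B v ∈ s(x, x) := hv ▸ (mem_e v _).2 (Or.inr rfl)
        simpa using this
      exact hAB v (h1.trans h2.symm)
  have three : ∀ v X Y Z, X ∈ e v → Y ∈ e v → Z ∈ e v → X ≠ Y → Y ≠ Z → X ≠ Z → False := by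
    intro v X Y Z h1 h2 h3
    rw [mem_e] at h1 h2 h3
    grind
  refine ⟨fromEdgeSet (Set.range e), e, ?_, ?_, hinj, hadj, ?_, ?_⟩
  · intro v
    exact (hadjH _ _).2 ⟨v, rfl⟩
  · intro x y h
    exact (hadjH x y).1 h
  · intro X Y Z h1 h2 h3
    have n1 := h1.ne
    have n2 := h2.ne
    have n3 := h3.ne
    obtain ⟨a, ha⟩ := (hadjH _ _).1 h1
    obtain ⟨b, hb⟩ := (hadjH _ _).1 h2
    obtain ⟨c, hc⟩ := (hadjH _ _).1 h3
    have aX : X ∈ e a := by simp [ha]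
    have aY : Y ∈ e a := by simp [ha]
    have bY : Y ∈ e b := by simp [hb]
    have bZ : Z ∈ e b := by simp [hb]
    have cX : X ∈ e c := by simp [hc]
    have cZ : Z ∈ e c := by simp [hc]
    have hab : a ≠ b := by rintro rfl; exact three _ X Y Z aX aY bZ n1 n2 n3
    have hac : a ≠ c := by rintro rfl; exact three _ X Y Z aX aY cZ n1 n2 n3
    have hbc : b ≠ c := by rintro rfl; exact three _ X Y Z cX bY bZ n1 n2 n3
    have h := (hblk a Y aY).mem a (hself a Y aY) b (hself b Y bY) hab c
      (Or.inr ((hadj a c).2 ⟨hac, X, aX, cX⟩)) (Or.inr ((hadj b c).2 ⟨hbc, Z, bZ, cZ⟩))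
    exact three c X Y Z cX (hmem a Y aY c h) cZ n1 n2 n3
  · intro u p1 p2 p3 q1 q2 q3 hnd hu1 hu2 hu3 h1 h2 h3
    obtain ⟨t1, t1e⟩ := (hadjH _ _).1 hu1
    obtain ⟨t2, t2e⟩ := (hadjH _ _).1 hu2
    obtain ⟨t3, t3e⟩ := (hadjH _ _).1 hu3
    obtain ⟨f1, f1e⟩ := (hadjH _ _).1 h1
    obtain ⟨f2, f2e⟩ := (hadjH _ _).1 h2
    obtain ⟨f3, f3e⟩ := (hadjH _ _).1 h3
    simp only [List.nodup_cons, List.mem_cons, List.not_mem_nil, or_false, not_or, List.nodup_nil,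
      and_true] at hnd
    obtain ⟨⟨k1, k2, k3, k4, k5, k6⟩, ⟨k7, k8, k9, k10, k11⟩, ⟨k12, k13, k14, k15⟩,
      ⟨k16, k17, k18⟩, ⟨k19, k20⟩, k21, _⟩ := hnd
    have hUe : u ∈ e t1 := by simp [t1e]
    have hUm : ∀ w, w ∈ u ↔ u ∈ e w := fun w => ⟨hmem t1 u hUe w, hself w u⟩
    have hCN : ∀ f p q, e f = s(p, q) → CN L f = {v | p ∈ e v ∨ q ∈ e v} := by
      intro f p q hf
      ext v
      constructor
      · rintro (rfl | h)
        · left; simp [hf]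
        · obtain ⟨_, x, hx1, hx2⟩ := (hadj _ _).1 h
          rw [hf, Sym2.mem_iff] at hx1
          rcases hx1 with rfl | rfl
          · exact Or.inl hx2
          · exact Or.inr hx2
      · intro h
        by_cases hvf : v = f
        · exact Or.inl hvf
        · refine Or.inr ((hadj _ _).2 ⟨Ne.symm hvf, ?_⟩)
          rcases h with h | h
          · exact ⟨p, by simp [hf], h⟩
          · exact ⟨q, by simp [hf], h⟩
    have nadj : ∀ f g p q p' q', e f = s(p, q) → e g = s(p', q') → p ≠ p' → p ≠ q' → q ≠ p' →
        q ≠ q' → ¬ L.Adj f g ∧ f ≠ g := by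
      intro f g p q p' q' hf hg a1 a2 a3 a4
      have : ∀ x, x ∈ e f → x ∈ e g → False := by
        intro x hx1 hx2
        rw [hf, Sym2.mem_iff] at hx1
        rw [hg, Sym2.mem_iff] at hx2
        grind
      refine ⟨fun h => ?_, ?_⟩
      · obtain ⟨_, x, hx1, hx2⟩ := (hadj _ _).1 h
        exact this x hx1 hx2
      · rintro rfl; exact this p (by simp [hf]) (by simp [hf])
    have tf : ∀ t f p q, e t = s(u, p) → e f = s(p, q) → u ≠ p → u ≠ q → L.Adj t f ∧ f ∉ u := by
      intro t f p q ht hf a1 a2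
      have hfu : f ∉ u := by
        intro h
        have := (hUm f).1 h
        rw [hf, Sym2.mem_iff] at this
        grind
      refine ⟨(hadj _ _).2 ⟨?_, p, by simp [ht], by simp [hf]⟩, hfu⟩
      rintro rfl
      exact hfu ((hUm t).2 (by simp [ht]))
    have tt : ∀ t t' p p', e t = s(u, p) → e t' = s(u, p') → p ≠ p' → u ≠ p → u ≠ p' → t ≠ t' := by
      intro t t' p p' h1 h2 h3 h4 h5
      rintro rfl
      rw [h1] at h2
      exact h3 (by simpa [h4, h5] using h2)
    obtain ⟨a1, f1U⟩ := tf t1 f1 p1 q1 t1e f1e k1 k4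
    obtain ⟨a2, f2U⟩ := tf t2 f2 p2 q2 t2e f2e k2 k5
    obtain ⟨a3, f3U⟩ := tf t3 f3 p3 q3 t3e f3e k3 k6
    obtain ⟨n12, d12⟩ := nadj f1 f2 p1 q1 p2 q2 f1e f2e k7 k10 (Ne.symm k13) k19
    obtain ⟨n13, d13⟩ := nadj f1 f3 p1 q1 p3 q3 f1e f3e k8 k11 (Ne.symm k16) k20
    obtain ⟨n23, d23⟩ := nadj f2 f3 p2 q2 p3 q3 f2e f3e k12 k15 (Ne.symm k17) k21
    have key := net_lemma hG hGL hL hD hC hN (hblk t1 u hUe) (t1 := t1) (t2 := t2) (t3 := t3)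
      ((hUm t1).2 hUe) ((hUm t2).2 (by simp [t2e])) ((hUm t3).2 (by simp [t3e]))
      (tt _ _ _ _ t1e t2e k7 k1 k2) (tt _ _ _ _ t1e t3e k8 k1 k3) (tt _ _ _ _ t2e t3e k12 k2 k3)
      a1 a2 a3 f1U f2U f3U n12 n13 n23 d12 d13 d23
    have hcompl : (u ∪ CN L f1 ∪ CN L f2 ∪ CN L f3)ᶜ =
        {v | u ∉ e v ∧ p1 ∉ e v ∧ p2 ∉ e v ∧ p3 ∉ e v ∧ q1 ∉ e v ∧ q2 ∉ e v ∧ q3 ∉ e v} := by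
      ext v
      rw [hCN f1 _ _ f1e, hCN f2 _ _ f2e, hCN f3 _ _ f3e]
      simp only [Set.mem_compl_iff, Set.mem_union, Set.mem_ofPred_eq, hUm]
      tauto
    have hcard := Set.ncard_add_ncard_compl (u ∪ CN L f1 ∪ CN L f2 ∪ CN L f3)
    rw [hcompl, Nat.card_eq_fintype_card] at hcard
    rw [hCN f1 _ _ f1e, hCN f2 _ _ f2e, hCN f3 _ _ f3e] at key hcard
    have i12 : ({v | p1 ∈ e v ∨ q1 ∈ e v} ∩ {v | p2 ∈ e v ∨ q2 ∈ e v} : Set V) =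
      {v | (p1 ∈ e v ∨ q1 ∈ e v) ∧ (p2 ∈ e v ∨ q2 ∈ e v)} := rfl
    have i13 : ({v | p1 ∈ e v ∨ q1 ∈ e v} ∩ {v | p3 ∈ e v ∨ q3 ∈ e v} : Set V) =
      {v | (p1 ∈ e v ∨ q1 ∈ e v) ∧ (p3 ∈ e v ∨ q3 ∈ e v)} := rfl
    have i23 : ({v | p2 ∈ e v ∨ q2 ∈ e v} ∩ {v | p3 ∈ e v ∨ q3 ∈ e v} : Set V) =
      {v | (p2 ∈ e v ∨ q2 ∈ e v) ∧ (p3 ∈ e v ∨ q3 ∈ e v)} := rfl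
    rw [i12, i13, i23] at key
    omega

end RootGraph

open SimpleGraph
set_option linter.unusedSectionVars false
set_option linter.unusedVariables false
set_option linter.unusedSimpArgs false

section Core
variable {V W : Type*} [Fintype V]

/-- `x` has a neighbour in `J`. -/
def Att (H : SimpleGraph W) (J : Set W) (x : W) : Prop := ∃ j ∈ J, H.Adj x j

theorem seg_edges_card {L : SimpleGraph V} {H : SimpleGraph W} {e : V → Sym2 W} (hR : Root L H e)
    {a b : W} {m : Multiset W} (h : Seg H.Adj a b m) (hm : m.Nodup) :
    m.card ≤ {v | ∀ x ∈ e v, x ∈ m}.ncard + 1 := by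
  induction h with
  | single a => simp
  | @cons a b c m h1 h2 ih =>
    obtain ⟨hm1, hm2⟩ := Multiset.nodup_cons.1 hm
    have ih := ih hm2
    obtain ⟨v, hv⟩ := hR.surj a b h1
    have hlt : {v | ∀ x ∈ e v, x ∈ m} ⊂ {v | ∀ x ∈ e v, x ∈ a ::ₘ m} := by
      refine Set.ssubset_iff_exists.2 ⟨?_, v, ?_, ?_⟩
      · intro w hw x hx
        exact Multiset.mem_cons_of_mem (hw x hx)
      · intro x hx
        rw [hv, Sym2.mem_iff] at hx
        rcases hx with rfl | rfl
        · exact Multiset.mem_cons_self _ _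
        · exact Multiset.mem_cons_of_mem h2.left_mem
      · intro hw
        exact hm1 (hw a (by simp [hv]))
    have := Set.ncard_lt_ncard hlt (Set.toFinite _)
    rw [Multiset.card_cons]
    omega

/-- The configuration of the main argument. -/
structure Conf (H : SimpleGraph W) (Z : Finset W) (S J : Set W) (u p1 p2 q1 q2 m1 m2 : W)
    (o1 o2 M : Multiset W) : Prop where
  hZ : ∀ z ∈ Z, z ∈ S ∧ z ∉ J
  hJc : ∀ x ∈ J, ∀ y, y ∉ Z → H.Adj x y → y ∈ J
  cov : ∀ a b m, Seg H.Adj a b m → m.Nodup → (∀ z ∈ Z, z ∈ m) → (∀ x ∈ m, x ∈ S ∧ x ∉ J) →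
    Att H J a → Att H J b → False
  hu : Att H J u
  up1 : H.Adj u p1
  up2 : H.Adj u p2
  pq1 : H.Adj p1 q1
  pq2 : H.Adj p2 q2
  hM : Seg H.Adj m1 m2 M
  hZe : Z.val = u ::ₘ p1 ::ₘ p2 ::ₘ (o1 + o2 + M)
  s1 : (o1 = {q1} ∧ H.Adj q1 m1 ∧ ¬ Att H J q1) ∨ (o1 = 0 ∧ H.Adj p1 m1 ∧ q1 ∉ Z)
  s2 : (o2 = {q2} ∧ H.Adj q2 m2 ∧ ¬ Att H J q2) ∨ (o2 = 0 ∧ H.Adj p2 m2 ∧ q2 ∉ Z)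
  c1 : q1 ∈ S ∨ ∀ y ∈ S, H.Adj y q1 → y = p1
  c2 : q2 ∈ S ∨ ∀ y ∈ S, H.Adj y q2 → y = p2
  c12 : q1 ∈ S ∨ q2 ∈ S
  hq : q1 ≠ q2
  n1 : ¬ Att H J p1
  n2 : ¬ Att H J p2

variable {H : SimpleGraph W} {Z : Finset W} {S J : Set W} {u p1 p2 q1 q2 m1 m2 : W}
    {o1 o2 M : Multiset W}

theorem Conf.swap (h : Conf H Z S J u p1 p2 q1 q2 m1 m2 o1 o2 M) :
    Conf H Z S J u p2 p1 q2 q1 m2 m1 o2 o1 M :=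
  { hZ := h.hZ, hJc := h.hJc, cov := h.cov, hu := h.hu, up1 := h.up2, up2 := h.up1, pq1 := h.pq2,
    pq2 := h.pq1, hM := h.hM.reverse (fun _ _ h => h.symm),
    hZe := by rw [h.hZe, add_comm o1 o2, Multiset.cons_swap p1 p2],
    s1 := h.s2, s2 := h.s1, c1 := h.c2, c2 := h.c1, c12 := h.c12.symm, hq := h.hq.symm,
    n1 := h.n2, n2 := h.n1 }

theorem Conf.nd (h : Conf H Z S J u p1 p2 q1 q2 m1 m2 o1 o2 M) :
    (u ::ₘ p1 ::ₘ p2 ::ₘ q1 ::ₘ q2 ::ₘ M).Nodup := by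
  have h0 : (u ::ₘ p1 ::ₘ p2 ::ₘ (o1 + o2 + M)).Nodup := h.hZe ▸ Z.nodup
  have hm : ∀ x, x ∈ Z ↔ x ∈ (u ::ₘ p1 ::ₘ p2 ::ₘ (o1 + o2 + M)) := fun x => by
    rw [← h.hZe]; rfl
  have hq := h.hq
  rcases h.s1 with ⟨rfl, _, _⟩ | ⟨rfl, _, hq1⟩ <;> rcases h.s2 with ⟨rfl, _, _⟩ | ⟨rfl, _, hq2⟩
  · simpa [and_assoc, or_assoc] using h0
  · rw [hm] at hq2
    simp [and_assoc, or_assoc] at hq2 h0 ⊢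
    grind
  · rw [hm] at hq1
    simp [and_assoc, or_assoc] at hq1 h0 ⊢
    grind
  · rw [hm] at hq1 hq2
    simp [and_assoc, or_assoc] at hq1 hq2 h0 ⊢
    grind

theorem Conf.mem (h : Conf H Z S J u p1 p2 q1 q2 m1 m2 o1 o2 M) : u ∈ Z ∧ p1 ∈ Z ∧ p2 ∈ Z ∧
    (∀ x ∈ M, x ∈ Z) ∧ (∀ x ∈ o1, x = q1) ∧ (∀ x ∈ o2, x = q2) ∧
    ∀ x ∈ Z, x = u ∨ x = p1 ∨ x = p2 ∨ x ∈ o1 ∨ x ∈ o2 ∨ x ∈ M := by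
  have hm : ∀ x, x ∈ Z ↔ x ∈ (u ::ₘ p1 ::ₘ p2 ::ₘ (o1 + o2 + M)) := fun x => by
    rw [← h.hZe]; rfl
  refine ⟨(hm _).2 (by simp), (hm _).2 (by simp), (hm _).2 (by simp), fun x hx => (hm _).2 (by simp [hx]),
    ?_, ?_, ?_⟩
  · rcases h.s1 with ⟨rfl, _, _⟩ | ⟨rfl, _, _⟩ <;> simp
  · rcases h.s2 with ⟨rfl, _, _⟩ | ⟨rfl, _, _⟩ <;> simp
  · intro x hx
    rw [hm] at hx
    simpa [or_assoc] using hx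

theorem Conf.q1J (h : Conf H Z S J u p1 p2 q1 q2 m1 m2 o1 o2 M) : q1 ∉ J :=
  fun hh => h.n1 ⟨q1, hh, h.pq1⟩

theorem Conf.q1Att (h : Conf H Z S J u p1 p2 q1 q2 m1 m2 o1 o2 M) : ¬ Att H J q1 := by
  rcases h.s1 with ⟨_, _, h1⟩ | ⟨_, _, h1⟩
  · exact h1
  · rintro ⟨j, hj, hqj⟩
    exact h.q1J (h.hJc j hj q1 h1 hqj.symm)

/-- chord `p1 q2`, `M` a single vertex -/
theorem Conf.pathA (h : Conf H Z S J u p1 p2 q1 q2 m1 m2 o1 o2 M) {v : W} (hM : M = {v})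
    (hv : Att H J v) (hc : H.Adj p1 q2) : False := by
  have nd := h.nd
  obtain ⟨e1, e2, e3, e4, e5, e6, e7⟩ := h.mem
  have hm1 : m1 = v := by have := h.hM.left_mem; rw [hM] at this; simpa using this
  subst hM hm1
  have hZ := h.hZ
  have hqS : q2 ∈ S := by
    rcases h.c2 with h1 | h1
    · exact h1
    · have := h1 p1 (hZ p1 e2).1 hc
      subst this; simp at nd
  have hqJ := h.swap.q1J
  have t1 : Seg H.Adj p1 u (p1 ::ₘ q2 ::ₘ p2 ::ₘ {u}) :=
    Seg.cons hc (Seg.cons h.pq2.symm (Seg.cons h.up2.symm (Seg.single u)))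
  simp [and_assoc, or_assoc] at nd
  have hmZ := e4 m1 (by simp)
  rcases h.s1 with ⟨ho, h1, _⟩ | ⟨ho, h1, _⟩
  · have hq1 : q1 ∈ Z := by
      have : q1 ∈ Z.val := by rw [h.hZe, ho]; simp
      exact this
    refine h.cov _ _ _ (Seg.cons h1.symm (Seg.cons h.pq1.symm t1)) ?_ ?_ ?_ hv h.hu
    · simp [and_assoc, or_assoc]; grind
    · intro z hz
      have := e7 z hz
      simp at this ⊢
      grind
    · intro z hz
      simp at hz
      grind
  · refine h.cov _ _ _ (Seg.cons h1.symm t1) ?_ ?_ ?_ hv h.hu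
    · simp [and_assoc, or_assoc]; grind
    · intro z hz
      have := e7 z hz
      simp [ho] at this ⊢
      grind
    · intro z hz
      simp at hz
      grind

/-- chord `q1 q2`, `M` a single vertex, `q1` off the cycle -/
theorem Conf.pathC (h : Conf H Z S J u p1 p2 q1 q2 m1 m2 o1 o2 M) {v : W} (hM : M = {v})
    (hv : Att H J v) (hc : H.Adj q1 q2) (ho : o1 = 0) (h1 : H.Adj p1 m1) : False := by
  have nd := h.nd
  obtain ⟨e1, e2, e3, e4, e5, e6, e7⟩ := h.mem
  have hm1 : m1 = v := by have := h.hM.left_mem; rw [hM] at this; simpa using this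
  subst hM hm1
  have hZ := h.hZ
  have hS : q1 ∈ S ∧ q2 ∈ S := by
    simp [and_assoc, or_assoc] at nd
    rcases h.c12 with h1 | h1
    · refine ⟨h1, ?_⟩
      rcases h.c2 with h2 | h2
      · exact h2
      · have := h2 q1 h1 hc; grind
    · refine ⟨?_, h1⟩
      rcases h.c1 with h2 | h2
      · exact h2
      · have := h2 q2 h1 hc.symm; grind
  have hqJ := h.swap.q1J
  have hqJ' := h.q1J
  simp [and_assoc, or_assoc] at nd
  have hmZ := e4 m1 (by simp)
  refine h.cov _ _ _ (Seg.cons h1.symm (Seg.cons h.pq1 (Seg.cons hc (Seg.cons h.pq2.symm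
    (Seg.cons h.up2.symm (Seg.single u)))))) ?_ ?_ ?_ hv h.hu
  · simp [and_assoc, or_assoc]; grind
  · intro z hz
    have := e7 z hz
    simp [ho] at this ⊢
    grind
  · intro z hz
    simp at hz
    grind

/-- both chords, `M` two vertices -/
theorem Conf.pathB (h : Conf H Z S J u p1 p2 q1 q2 m1 m2 o1 o2 M) (hM : M = {m1, m2})
    (hv : Att H J m1) (hmm : H.Adj m1 m2) (hc : H.Adj p1 q2) (hc' : H.Adj p2 q1) : False := by
  have nd := h.nd
  obtain ⟨e1, e2, e3, e4, e5, e6, e7⟩ := h.mem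
  subst hM
  have hZ := h.hZ
  have hqS : q2 ∈ S := by
    rcases h.c2 with h1 | h1
    · exact h1
    · have := h1 p1 (hZ p1 e2).1 hc
      subst this; simp at nd
  have hqS' : q1 ∈ S := by
    rcases h.c1 with h1 | h1
    · exact h1
    · have := h1 p2 (hZ p2 e3).1 hc'
      subst this; simp at nd
  have hqJ := h.swap.q1J
  have hqJ' := h.q1J
  simp [and_assoc, or_assoc] at nd
  have hmZ := e4 m1 (by simp)
  have hmZ2 := e4 m2 (by simp)
  rcases h.s2 with ⟨ho, h1, _⟩ | ⟨ho, h1, _⟩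
  · refine h.cov _ _ _ (Seg.cons hmm (Seg.cons h1.symm (Seg.cons hc.symm (Seg.cons h.pq1
      (Seg.cons hc'.symm (Seg.cons h.up2.symm (Seg.single u))))))) ?_ ?_ ?_ hv h.hu
    · simp [and_assoc, or_assoc]; grind
    · intro z hz
      have := e7 z hz
      simp at this ⊢
      grind
    · intro z hz
      simp at hz
      grind
  · refine h.cov _ _ _ (Seg.cons hmm (Seg.cons h1.symm (Seg.cons hc' (Seg.cons h.pq1.symm
      (Seg.cons h.up1.symm (Seg.single u)))))) ?_ ?_ ?_ hv h.hu
    · simp [and_assoc, or_assoc]; grind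
    · intro z hz
      have := e7 z hz
      simp [ho] at this ⊢
      grind
    · intro z hz
      simp at hz
      grind

theorem Conf.contra {L : SimpleGraph V} {e : V → Sym2 W} (hR : Root L H e)
    (h : Conf H Z S J u p1 p2 q1 q2 m1 m2 o1 o2 M) {v j j' : W} (hvM : v ∈ M) (hv : Att H J v)
    (hj : j ∈ J) (hj' : j' ∈ J) (huj : H.Adj u j) (hjj : H.Adj j j') : False := by
  classical
  have nd := h.nd
  obtain ⟨e1, e2, e3, e4, e5, e6, e7⟩ := h.mem
  have hZ := h.hZ
  have hq1 := h.q1J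
  have hq2 := h.swap.q1J
  have g1 := h.q1Att
  have g2 := h.swap.q1Att
  have ndM : M.Nodup := by
    simp [and_assoc, or_assoc] at nd
    grind
  have hjM : ∀ x ∈ M, x ∉ J := fun x hx => (hZ x (e4 x hx)).2
  have hnd7 : [u, p1, p2, j, q1, q2, j'].Nodup := by
    have := hjj.ne
    have := (hZ u e1).2
    have := (hZ p1 e2).2
    have := (hZ p2 e3).2
    simp [and_assoc, or_assoc] at nd ⊢
    grind
  have key := hR.sc u p1 p2 j q1 q2 j' hnd7 h.up1 h.up2 huj h.pq1 h.pq2 hjj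
  have n12 : ¬ H.Adj p1 p2 := fun hh => hR.tf _ _ _ h.up1 hh h.up2
  have two : ∀ v x y, x ∈ e v → y ∈ e v → x ≠ y → e v = s(x, y) ∧ H.Adj x y := by
    intro v x y hx hy hxy
    have := (Sym2.mem_and_mem_iff hxy).1 ⟨hx, hy⟩
    exact ⟨this, by have h2 := hR.edge v; rw [this] at h2; exact h2⟩
  have empt : ∀ p q, ¬ Att H J p → ¬ Att H J q → p ∉ J → q ∉ J →
      {v | (p ∈ e v ∨ q ∈ e v) ∧ (j ∈ e v ∨ j' ∈ e v)} = ∅ := by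
    intro p q hp hq hpJ hqJ
    rw [Set.eq_empty_iff_forall_notMem]
    have : ∀ x y v, x ∉ J → ¬ Att H J x → y ∈ J → x ∈ e v → y ∈ e v → False := by
      intro x y v h1 h2 h3 h4 h5
      exact h2 ⟨y, h3, (two v x y h4 h5 (by rintro rfl; exact h1 h3)).2⟩
    rintro v ⟨h1 | h1, h2 | h2⟩
    · exact this _ _ _ hpJ hp hj h1 h2
    · exact this _ _ _ hpJ hp hj' h1 h2
    · exact this _ _ _ hqJ hq hj h1 h2
    · exact this _ _ _ hqJ hq hj' h1 h2
  rw [empt p1 q1 h.n1 g1 (hZ p1 e2).2 hq1, empt p2 q2 h.n2 g2 (hZ p2 e3).2 hq2] at key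
  have hsub : {v | ∀ x ∈ e v, x ∈ M} ⊆
      {v | u ∉ e v ∧ p1 ∉ e v ∧ p2 ∉ e v ∧ j ∉ e v ∧ q1 ∉ e v ∧ q2 ∉ e v ∧ j' ∉ e v} := by
    intro w hw
    have hw : ∀ x ∈ e w, x ∈ M := hw
    simp [and_assoc, or_assoc] at nd
    refine ⟨fun hh => ?_, fun hh => ?_, fun hh => ?_, fun hh => ?_, fun hh => ?_, fun hh => ?_,
      fun hh => ?_⟩
    all_goals have := hw _ hh
    all_goals grind
  have hle := Set.ncard_le_ncard hsub (Set.toFinite _)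
  have hcard := seg_edges_card hR h.hM ndM
  simp only [Set.ncard_empty, add_zero] at key
  have hM1 : 1 ≤ M.card := Multiset.card_pos_iff_exists_mem.2 ⟨v, hvM⟩
  have hbound : M.card ≤ {v | (p1 ∈ e v ∨ q1 ∈ e v) ∧ (p2 ∈ e v ∨ q2 ∈ e v)}.ncard := by omega
  clear key hcard hle hsub hnd7
  -- the chord set
  have d12 : p1 ≠ p2 := by rintro rfl; simp at nd
  have d1 : p1 ≠ q2 := by rintro rfl; simp at nd
  have d2 : p2 ≠ q1 := by rintro rfl; simp at nd
  have sub1 : ∀ v, v ∈ {v | (p1 ∈ e v ∨ q1 ∈ e v) ∧ (p2 ∈ e v ∨ q2 ∈ e v)} →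
      (e v = s(p1, q2) ∧ H.Adj p1 q2) ∨ (e v = s(p2, q1) ∧ H.Adj p2 q1) ∨
      (e v = s(q1, q2) ∧ H.Adj q1 q2) := by
    rintro v ⟨h1 | h1, h2 | h2⟩
    · exact absurd (two v _ _ h1 h2 d12).2 n12
    · exact Or.inl (two v _ _ h1 h2 d1)
    · exact Or.inr (Or.inl (two v _ _ h2 h1 d2))
    · exact Or.inr (Or.inr (two v _ _ h1 h2 h.hq))
  have one : ∀ z : Sym2 W, {v | e v = z}.ncard ≤ 1 := by
    intro z
    rw [Set.ncard_le_one (Set.toFinite _)]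
    intro a ha b hb
    exact hR.inj (Eq.trans ha (Eq.symm hb))
  have single : M.card = 1 → M = {v} := by
    intro hh
    obtain ⟨w, rfl⟩ := Multiset.card_eq_one.1 hh
    simp at hvM; rw [hvM]
  by_cases hqq : H.Adj q1 q2
  · have x1 : ¬ H.Adj p1 q2 := fun hh => hR.tf _ _ _ h.pq1 hqq hh
    have x2 : ¬ H.Adj p2 q1 := fun hh => hR.tf _ _ _ h.pq2 hqq.symm hh
    have : {v | (p1 ∈ e v ∨ q1 ∈ e v) ∧ (p2 ∈ e v ∨ q2 ∈ e v)} ⊆ {v | e v = s(q1, q2)} := by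
      intro v hv
      rcases sub1 v hv with hh | hh | hh
      · exact absurd hh.2 x1
      · exact absurd hh.2 x2
      · exact hh.1
    have := (Set.ncard_le_ncard this (Set.toFinite _)).trans (one _)
    have hMv := single (by omega)
    rcases h.s1 with ⟨ho, h1, _⟩ | ⟨ho, h1, _⟩
    · rcases h.s2 with ⟨ho', h1', _⟩ | ⟨ho', h1', _⟩
      · have k1 : m1 = v := by have := h.hM.left_mem; rw [hMv] at this; simpa using this
        have k2 : m2 = v := by have := h.hM.right_mem; rw [hMv] at this; simpa using this
        rw [k1] at h1
        rw [k2] at h1'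
        exact hR.tf _ _ _ hqq h1' h1
      · exact h.swap.pathC hMv hv hqq.symm ho' h1'
    · exact h.pathC hMv hv hqq ho h1
  · have : {v | (p1 ∈ e v ∨ q1 ∈ e v) ∧ (p2 ∈ e v ∨ q2 ∈ e v)} ⊆
        {v | e v = s(p1, q2) ∧ H.Adj p1 q2} ∪ {v | e v = s(p2, q1) ∧ H.Adj p2 q1} := by
      intro v hv
      rcases sub1 v hv with hh | hh | hh
      · exact Or.inl hh
      · exact Or.inr hh
      · exact absurd hh.2 hqq
    have hb := (Set.ncard_le_ncard this (Set.toFinite _)).trans (Set.ncard_union_le _ _)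
    have o1' : {v | e v = s(p1, q2) ∧ H.Adj p1 q2}.ncard ≤ 1 :=
      (Set.ncard_le_ncard (fun v hv => hv.1) (Set.toFinite _)).trans (one s(p1, q2))
    have o2' : {v | e v = s(p2, q1) ∧ H.Adj p2 q1}.ncard ≤ 1 :=
      (Set.ncard_le_ncard (fun v hv => hv.1) (Set.toFinite _)).trans (one s(p2, q1))
    by_cases y1 : H.Adj p1 q2
    · by_cases hM1' : M.card = 1
      · exact h.pathA (single hM1') hv y1
      by_cases y2 : H.Adj p2 q1
      · have hM2 : M.card = 2 := by omega
        obtain ⟨hMe, hmm⟩ : M = {m1, m2} ∧ H.Adj m1 m2 := by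
          have := h.hM
          cases this with
          | single => simp at hM2
          | cons k1 k2 =>
            cases k2 with
            | single => exact ⟨rfl, k1⟩
            | cons k3 k4 => 
              cases k4 <;> simp at hM2
        have hvm : v = m1 ∨ v = m2 := by rw [hMe] at hvM; simpa using hvM
        rcases hvm with rfl | rfl
        · exact h.pathB hMe hv hmm y1 y2
        · exact h.swap.pathB (by rw [hMe, Multiset.pair_comm]) hv hmm.symm y2 y1
      · have : {v | e v = s(p2, q1) ∧ H.Adj p2 q1} = ∅ := by simp [y2]
        rw [this, Set.ncard_empty] at hb
        omega
    · have : {v | e v = s(p1, q2) ∧ H.Adj p1 q2} = ∅ := by simp [y1]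
      rw [this, Set.ncard_empty] at hb
      by_cases y2 : H.Adj p2 q1
      · exact h.swap.pathA (single (by omega)) hv y2
      · have : {v | e v = s(p2, q1) ∧ H.Adj p2 q1} = ∅ := by simp [y2]
        rw [this, Set.ncard_empty] at hb
        omega

end Core

open SimpleGraph
set_option linter.unusedSectionVars false
set_option linter.unusedVariables false
set_option linter.unusedSimpArgs false

section CycSec
variable {V W : Type*} [Fintype V]

theorem Seg.forall_mem {R : W → W → Prop} {P : W → Prop} {a b : W} {m : Multiset W}
    (h : Seg R a b m) (ha : P a) (hR : ∀ x y, R x y → P y) : ∀ x ∈ m, P x := by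
  induction h with
  | single a => intro x hx; rw [Multiset.mem_singleton] at hx; exact hx ▸ ha
  | cons h1 _ ih =>
    intro x hx
    rcases Multiset.mem_cons.1 hx with rfl | hx
    · exact ha
    · exact ih (hR _ _ h1) x hx

theorem seg_of_rtg {R : W → W → Prop} {a b : W} (h : Relation.ReflTransGen R a b) :
    ∃ m, m.Nodup ∧ Seg R a b m := by
  induction h using Relation.ReflTransGen.head_induction_on with
  | refl => exact ⟨{b}, by simp, Seg.single b⟩
  | @head a c h1 _ ih =>
    obtain ⟨m, hm, hs⟩ := ih
    by_cases ha : a ∈ m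
    · obtain ⟨m1, m2, rfl, hl, hr⟩ := hs.split ha
      have hn : (a ::ₘ m2).Nodup := by
        refine Multiset.nodup_of_le ?_ hm
        rw [add_assoc, ← Multiset.singleton_add]
        exact Multiset.le_add_left _ _
      rcases hr with ⟨rfl, rfl⟩ | ⟨q, h2, h3⟩
      · exact ⟨{a}, by simp, Seg.single a⟩
      · exact ⟨a ::ₘ m2, hn, Seg.cons h2 h3⟩
    · exact ⟨a ::ₘ m, Multiset.nodup_cons.2 ⟨ha, hm⟩, Seg.cons h1 hs⟩

theorem seg_of_joined {H : SimpleGraph W} {J : Set W} {x y : W} (h : JoinedIn' H J x y)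
    (hx : x ∈ J) : ∃ m, m.Nodup ∧ Seg H.Adj x y m ∧ ∀ z ∈ m, z ∈ J := by
  obtain ⟨m, hm, hs⟩ := seg_of_rtg h
  exact ⟨m, hm, hs.mono fun _ _ h => h.1, hs.forall_mem (P := fun z => z ∈ J) hx fun _ _ h => h.2.2⟩

/-- the vertex set `Z` is spanned by a cycle of `H` -/
def IsCyc (H : SimpleGraph W) (Z : Finset W) : Prop :=
  3 ≤ Z.card ∧ ∃ a b, H.Adj b a ∧ Seg H.Adj a b Z.val

theorem IsCyc.rotate {H : SimpleGraph W} {Z : Finset W} (h : IsCyc H Z) {u : W} (hu : u ∈ Z) :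
    ∃ b, H.Adj b u ∧ Seg H.Adj u b Z.val := by
  obtain ⟨_, a, b, hba, hs⟩ := h
  obtain ⟨m1, m2, he, hl, hr⟩ := hs.split (x := u) hu
  rcases hl with ⟨rfl, rfl⟩ | ⟨p, hp, hpu⟩
  · exact ⟨b, hba, hs⟩
  · refine ⟨p, hpu, ?_⟩
    rw [he]
    rcases hr with ⟨rfl, rfl⟩ | ⟨q, hq, hqs⟩
    · have := Seg.cons hba hp
      rwa [add_zero, add_comm, Multiset.singleton_add]
    · have := (Seg.cons hq hqs).append hba hp
      rwa [add_assoc, add_comm, Multiset.singleton_add]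

/-- number of edges met by `Z` -/
noncomputable def dom (e : V → Sym2 W) (Z : Finset W) : ℕ := {v | ∃ x ∈ Z, x ∈ e v}.ncard

/-- maximal cycle -/
structure MaxCyc (H : SimpleGraph W) (e : V → Sym2 W) (S R : Set W) (Z : Finset W) : Prop where
  cyc : IsCyc H Z
  sub : ∀ z ∈ Z, z ∈ S
  RZ : ∀ r ∈ R, r ∈ Z
  max : ∀ Z', IsCyc H Z' → (∀ z ∈ Z', z ∈ S) → (∀ r ∈ R, r ∈ Z') → dom e Z' ≤ dom e Z
  leave : ∀ x ∈ S, ∀ y, y ∉ S → H.Adj x y → x ∈ R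
  out : ∀ r ∈ R, ∃ b, b ∉ S ∧ H.Adj r b
  Rss : ∀ r ∈ R, ∀ r' ∈ R, r = r'

/-- a nontrivial component of the complement of `Z` -/
structure Comp (H : SimpleGraph W) (Z : Finset W) (S J : Set W) : Prop where
  hJZ : ∀ x ∈ J, x ∉ Z
  hJS : ∀ x ∈ J, x ∈ S
  hJc : ∀ x ∈ J, ∀ y, y ∉ Z → H.Adj x y → y ∈ J
  conn : ∀ x ∈ J, ∀ y ∈ J, JoinedIn' H J x y
  nt : ∀ x ∈ J, ∃ y ∈ J, H.Adj x y

variable {L : SimpleGraph V} {H : SimpleGraph W} {e : V → Sym2 W} {S R J : Set W} {Z : Finset W}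

theorem Comp.cycle (hJ : Comp H Z S J) {a b : W} {m : Multiset W} (h : Seg H.Adj a b m)
    (hm : m.Nodup) (hd : ∀ x ∈ m, x ∉ J) (h2 : 2 ≤ m.card) (ha : Att H J a) (hb : Att H J b) :
    ∃ Z' : Finset W, IsCyc H Z' ∧ (∀ x ∈ m, x ∈ Z') ∧ (∀ x ∈ Z', x ∈ m ∨ x ∈ J) ∧
      ∃ j ∈ J, j ∈ Z' := by
  obtain ⟨ja, hja, haj⟩ := ha
  obtain ⟨jb, hjb, hbj⟩ := hb
  obtain ⟨q, hq, hqs, hqJ⟩ := seg_of_joined (hJ.conn jb hjb ja hja) hjb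
  have hnd : (m + q).Nodup := by
    refine Multiset.nodup_add.2 ⟨hm, hq, ?_⟩
    rw [Multiset.disjoint_left]
    intro x hx hx'
    exact hd x hx (hqJ x hx')
  have hs := h.append hbj hqs
  refine ⟨⟨m + q, hnd⟩, ⟨?_, a, ja, haj.symm, hs⟩, ?_, ?_, jb, hjb, ?_⟩
  · have : 1 ≤ q.card := Multiset.card_pos_iff_exists_mem.2 ⟨_, hqs.left_mem⟩
    simp only [Finset.card_mk, Multiset.card_add]
    omega
  · intro x hx
    exact Multiset.mem_add.2 (Or.inl hx)
  · intro x hx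
    rcases Multiset.mem_add.1 hx with h | h
    · exact Or.inl h
    · exact Or.inr (hqJ x h)
  · exact Multiset.mem_add.2 (Or.inr hqs.left_mem)

theorem cov_aux (hR : Root L H e) (hZ : MaxCyc H e S R Z) (hJ : Comp H Z S J) {Z' : Finset W}
    (h1 : IsCyc H Z') (hS : ∀ z ∈ Z', z ∈ S) (hRZ : ∀ r ∈ R, r ∈ Z') {j : W} (hj : j ∈ J) (hjZ : j ∈ Z') :
    ∃ v, (∃ x ∈ Z, x ∈ e v) ∧ ¬ ∃ x ∈ Z', x ∈ e v := by
  by_contra hcon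
  push Not at hcon
  obtain ⟨j', hj', hjj⟩ := hJ.nt j hj
  obtain ⟨w, hw⟩ := hR.surj j j' hjj
  have hlt : {v | ∃ x ∈ Z, x ∈ e v} ⊂ {v | ∃ x ∈ Z', x ∈ e v} := by
    refine Set.ssubset_iff_exists.2 ⟨fun v hv => ?_, w, ⟨j, hjZ, by simp [hw]⟩, ?_⟩
    · exact hcon v hv
    · rintro ⟨x, hx, hxw⟩
      rw [hw, Sym2.mem_iff] at hxw
      rcases hxw with rfl | rfl
      · exact hJ.hJZ x hj hx
      · exact hJ.hJZ x hj' hx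
  have := Set.ncard_lt_ncard hlt (Set.toFinite _)
  have h2 := hZ.max Z' h1 hS hRZ
  unfold dom at h2
  omega

theorem cov (hR : Root L H e) (hZ : MaxCyc H e S R Z) (hJ : Comp H Z S J) (a b : W) (m : Multiset W)
    (h : Seg H.Adj a b m) (hm : m.Nodup) (hZm : ∀ z ∈ Z, z ∈ m) (hd : ∀ x ∈ m, x ∈ S ∧ x ∉ J)
    (ha : Att H J a) (hb : Att H J b) : False := by
  have hle : Z.val ≤ m := (Multiset.le_iff_subset Z.nodup).2 hZm
  have hc : 3 ≤ m.card := hZ.cyc.1.trans (Multiset.card_le_card hle)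
  obtain ⟨Z', h1, h2, h3, j, hj, hjZ⟩ := hJ.cycle h hm (fun x hx => (hd x hx).2) (by omega) ha hb
  obtain ⟨v, ⟨x, hx, hxv⟩, hv⟩ := cov_aux hR hZ hJ h1 (fun z hz => by
    rcases h3 z hz with h | h
    · exact (hd z h).1
    · exact hJ.hJS z h) (fun r hr => h2 r (hZm r (hZ.RZ r hr))) hj hjZ
  exact hv ⟨x, h2 x (hZm x hx), hxv⟩

theorem excl (hR : Root L H e) (hZ : MaxCyc H e S R Z) (hJ : Comp H Z S J) {a b p : W} {m : Multiset W}
    (h : Seg H.Adj a b m) (hm : Z.val = p ::ₘ m) (hp : ¬ Att H J p)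
    (ha : Att H J a) (hb : Att H J b) :
    ∃ q, H.Adj p q ∧ q ∉ Z ∧ (q ∈ S ∨ (p ∈ R ∧ q ∉ S)) := by
  have hmem : ∀ x, x ∈ Z ↔ x = p ∨ x ∈ m := by
    intro x
    have : x ∈ Z ↔ x ∈ Z.val := Iff.rfl
    rw [this, hm, Multiset.mem_cons]
  by_cases hpR : p ∈ R
  · obtain ⟨q, hq, hpq⟩ := hZ.out p hpR
    exact ⟨q, hpq, fun h => hq (hZ.sub q h), Or.inr ⟨hpR, hq⟩⟩
  have hnd : (p ::ₘ m).Nodup := hm ▸ Z.nodup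
  have hc : 3 ≤ (p ::ₘ m).card := by rw [← hm]; exact hZ.cyc.1
  rw [Multiset.card_cons] at hc
  obtain ⟨Z', h1, h2, h3, j, hj, hjZ⟩ := hJ.cycle h (Multiset.nodup_cons.1 hnd).2
    (fun x hx hxJ => hJ.hJZ x hxJ ((hmem x).2 (Or.inr hx))) (by omega) ha hb
  obtain ⟨v, ⟨x, hx, hxv⟩, hv⟩ := cov_aux hR hZ hJ h1 (fun z hz => by
    rcases h3 z hz with h | h
    · exact hZ.sub z ((hmem z).2 (Or.inr h))
    · exact hJ.hJS z h) (fun r hr => by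
      rcases (hmem r).1 (hZ.RZ r hr) with rfl | h
      · exact absurd hr hpR
      · exact h2 r h) hj hjZ
  have hxp : x = p := by
    rcases (hmem x).1 hx with h | h
    · exact h
    · exact absurd ⟨x, h2 x h, hxv⟩ hv
  subst hxp
  obtain ⟨q, hq⟩ := Sym2.mem_iff_exists.1 hxv
  have hadj : H.Adj x q := by have := hR.edge v; rw [hq] at this; exact this
  have hqZ : q ∉ Z := by
    intro h
    rcases (hmem q).1 h with rfl | h
    · exact hadj.ne rfl
    · exact hv ⟨q, h2 q h, by simp [hq]⟩
  refine ⟨q, hadj, hqZ, Or.inl ?_⟩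
  by_contra hqS
  exact hpR (hZ.leave x (hZ.sub x hx) q hqS hadj)

theorem side {z zl p v : W} {I : Multiset W} (hs : Seg H.Adj z zl I) (hpz : H.Adj p z) (hv : v ∈ I)
    (hva : Att H J v) (hIS : ∀ x ∈ I, x ∈ S)
    (hx : Att H J z → ∃ q, H.Adj p q ∧ q ∉ Z ∧ (q ∈ S ∨ (p ∈ R ∧ q ∉ S))) :
    ∃ q m o M, I = o + M ∧ Seg H.Adj m zl M ∧ v ∈ M ∧ H.Adj p q ∧
      ((o = {q} ∧ H.Adj q m ∧ ¬ Att H J q) ∨ (o = 0 ∧ H.Adj p m ∧ q ∉ Z ∧ Att H J m)) ∧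
      (q ∈ S ∨ (p ∈ R ∧ q ∉ S)) := by
  by_cases hz : Att H J z
  · obtain ⟨q, h1, h2, h3⟩ := hx hz
    exact ⟨q, z, 0, I, by simp, hs, hv, h1, Or.inr ⟨rfl, hpz, h2, hz⟩, h3⟩
  · cases hs with
    | single =>
      rw [Multiset.mem_singleton] at hv
      exact absurd (hv ▸ hva) hz
    | @cons _ c _ M h1 h2 =>
      refine ⟨z, c, {z}, M, by simp, h2, ?_, hpz, Or.inl ⟨rfl, h1, hz⟩, Or.inl (hIS z (by simp))⟩
      rcases Multiset.mem_cons.1 hv with rfl | h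
      · exact absurd hva hz
      · exact h

theorem cyc_unique (hR : Root L H e) (hZ : MaxCyc H e S R Z) (hJ : Comp H Z S J) {u v : W}
    (hu : u ∈ Z) (hv : v ∈ Z) (hua : Att H J u) (hva : Att H J v) : u = v := by
  by_contra huv
  have rv : ∀ {a b : W} {m : Multiset W}, Seg H.Adj a b m → Seg H.Adj b a m :=
    fun h => h.reverse fun _ _ h => h.symm
  obtain ⟨p2, hp2, hs⟩ := hZ.cyc.rotate hu
  have hc3 := hZ.cyc.1
  obtain ⟨p1, z, zl, I, hZe, up1, h1z, hI, hzl⟩ : ∃ p1 z zl I, Z.val = u ::ₘ p2 ::ₘ p1 ::ₘ I ∧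
      H.Adj u p1 ∧ H.Adj p1 z ∧ Seg H.Adj z zl I ∧ H.Adj zl p2 := by
    generalize hZv : Z.val = mz at hs
    have hcz : 3 ≤ mz.card := by rw [← hZv]; exact hc3
    cases hs with
    | single => simp at hcz
    | @cons _ p1 _ m k1 k2 =>
      have k2 := rv k2
      cases k2 with
      | single => simp at hcz
      | @cons _ zl _ m' k3 k4 =>
        have k4 := rv k4
        cases k4 with
        | single => exact (hR.tf _ _ _ hp2 k1 k3).elim
        | @cons _ z _ I k5 k6 => exact ⟨p1, z, zl, I, rfl, k1, k5, k6, k3.symm⟩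
  have hmem : ∀ x, x ∈ Z ↔ x = u ∨ x = p2 ∨ x = p1 ∨ x ∈ I := by
    intro x
    have : x ∈ Z ↔ x ∈ Z.val := Iff.rfl
    rw [this, hZe]; simp
  have hnd : (u ::ₘ p2 ::ₘ p1 ::ₘ I).Nodup := hZe ▸ Z.nodup
  have hJn : ∀ x ∈ Z, x ∈ S ∧ x ∉ J := fun x hx => ⟨hZ.sub x hx, fun h => hJ.hJZ x h hx⟩
  have n1 : ¬ Att H J p1 := by
    intro ha
    refine cov hR hZ hJ _ _ _ ((Seg.cons h1z hI).append hzl (Seg.cons hp2 (Seg.single u))) ?_ ?_ ?_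
      ha hua
    · have : p1 ::ₘ I + p2 ::ₘ {u} = Z.val := by
        rw [hZe]; simp only [← Multiset.singleton_add]; abel
      rw [this]; exact Z.nodup
    · intro x hx; have := (hmem x).1 hx; simp; grind
    · intro x hx; refine hJn x ((hmem x).2 ?_); simp at hx; grind
  have n2 : ¬ Att H J p2 := by
    intro ha
    refine cov hR hZ hJ _ _ _ ((Seg.cons hzl.symm (rv hI)).append h1z.symm
      (Seg.cons up1.symm (Seg.single u))) ?_ ?_ ?_ ha hua
    · have : p2 ::ₘ I + p1 ::ₘ {u} = Z.val := by
        rw [hZe]; simp only [← Multiset.singleton_add]; abel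
      rw [this]; exact Z.nodup
    · intro x hx; have := (hmem x).1 hx; simp; grind
    · intro x hx; refine hJn x ((hmem x).2 ?_); simp at hx; grind
  have hvI : v ∈ I := by
    rcases (hmem v).1 hv with rfl | rfl | rfl | h
    · exact absurd rfl huv
    · exact absurd hva n2
    · exact absurd hva n1
    · exact h
  have hIS : ∀ x ∈ I, x ∈ S := fun x hx => hZ.sub x ((hmem x).2 (by simp [hx]))
  have x1 : Att H J z → ∃ q, H.Adj p1 q ∧ q ∉ Z ∧ (q ∈ S ∨ (p1 ∈ R ∧ q ∉ S)) := by
    intro ha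
    refine excl hR hZ hJ (hI.append hzl (Seg.cons hp2 (Seg.single u))) ?_ n1 ha hua
    rw [hZe]; simp only [← Multiset.singleton_add]; abel
  have x2 : Att H J zl → ∃ q, H.Adj p2 q ∧ q ∉ Z ∧ (q ∈ S ∨ (p2 ∈ R ∧ q ∉ S)) := by
    intro ha
    refine excl hR hZ hJ ((rv hI).append h1z.symm (Seg.cons up1.symm (Seg.single u))) ?_ n2 ha hua
    rw [hZe]; simp only [← Multiset.singleton_add]; abel
  obtain ⟨q1, m1, o1, M1, hI1, hs1, hv1, pq1, d1, c1⟩ := side hI h1z hvI hva hIS x1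
  obtain ⟨q2, m2, o2, M, hI2, hs2, hv2, pq2, d2, c2⟩ := side (rv hs1) hzl.symm hv1 hva
    (fun x hx => hIS x (by rw [hI1]; simp [hx])) x2
  have hp12 : p1 ≠ p2 := by rintro rfl; simp at hnd
  have cc : ∀ p q, (q ∈ S ∨ (p ∈ R ∧ q ∉ S)) → (q ∈ S ∨ ∀ y ∈ S, H.Adj y q → y = p) := by
    intro p q h
    rcases h with h | ⟨h, h'⟩
    · exact Or.inl h
    · right
      intro y hy hyq
      exact hZ.Rss y (hZ.leave y hy q h' hyq) p h
  have c12 : q1 ∈ S ∨ q2 ∈ S := by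
    rcases c1 with h | ⟨h, _⟩
    · exact Or.inl h
    · rcases c2 with h' | ⟨h', _⟩
      · exact Or.inr h'
      · exact absurd (hZ.Rss _ h _ h') hp12
  have hIe : I = o1 + (o2 + M) := by rw [hI1, hI2]
  have hq : q1 ≠ q2 := by
    rintro rfl
    rcases d1 with ⟨o1e, _, _⟩ | ⟨o1e, _, hq1, ha1⟩
    · rcases d2 with ⟨o2e, _, _⟩ | ⟨o2e, _, hq2, ha2⟩
      · rw [hIe, o1e, o2e] at hnd
        simp at hnd
      · exact hq2 ((hmem q1).2 (by simp [hIe, o1e]))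
    · rcases d2 with ⟨o2e, _, _⟩ | ⟨o2e, hp2m, hq2, ha2⟩
      · exact hq1 ((hmem q1).2 (by simp [hIe, o2e]))
      · have hIM : I = M := by rw [hIe, o1e, o2e]; simp
        subst hIM
        have hqS : q1 ∈ S := by tauto
        have hqJ : q1 ∉ J := fun h => n1 ⟨q1, h, pq1⟩
        refine cov hR hZ hJ _ _ _ (Seg.cons up1 (Seg.cons pq1 (Seg.cons pq2.symm
          (Seg.cons hp2m hs2)))) ?_ ?_ ?_ hua ha1
        · rw [hmem] at hq1
          simp at hnd hq1 ⊢
          grind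
        · intro x hx; have := (hmem x).1 hx; simp; grind
        · intro x hx
          by_cases hxq : x = q1
          · subst hxq; exact ⟨hqS, hqJ⟩
          · refine hJn x ((hmem x).2 ?_); simp at hx; grind
  have conf : Conf H Z S J u p1 p2 q1 q2 m1 m2 o1 o2 M :=
    { hZ := hJn, hJc := hJ.hJc, cov := cov hR hZ hJ, hu := hua, up1 := up1, up2 := hp2.symm,
      pq1 := pq1, pq2 := pq2, hM := rv hs2,
      hZe := by rw [hZe, hIe, Multiset.cons_swap p1 p2, add_assoc],
      s1 := by
        rcases d1 with h | ⟨h, h', h'', _⟩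
        · exact Or.inl h
        · exact Or.inr ⟨h, h', h''⟩
      s2 := by
        rcases d2 with h | ⟨h, h', h'', _⟩
        · exact Or.inl h
        · exact Or.inr ⟨h, h', h''⟩
      c1 := cc p1 q1 c1, c2 := cc p2 q2 c2, c12 := c12, hq := hq, n1 := n1, n2 := n2 }
  obtain ⟨j, hj, huj⟩ := hua
  obtain ⟨j', hj', hjj⟩ := hJ.nt j hj
  exact conf.contra hR hv2 hva hj hj' huj hjj

end CycSec

open SimpleGraph
set_option linter.unusedSectionVars false
set_option linter.unusedVariables false
set_option linter.unusedSimpArgs false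

theorem Seg.eq_single' {W : Type*} {R : W → W → Prop} {a : W} {m : Multiset W} (h : Seg R a a m)
    (hm : m.Nodup) : m = {a} := by
  cases h with
  | single a => rfl
  | cons h1 h2 => exact absurd h2.right_mem (Multiset.nodup_cons.1 hm).1

section Glue
variable {V W : Type*} [Fintype V] [DecidableEq V]

/-- `Y` is empty (and `a = b`), or `Y` is spanned by a path of `L` from an edge at `a` to an edge
at `b`. -/
def QS (L : SimpleGraph V) (e : V → Sym2 W) (a b : W) (Y : Finset V) : Prop :=
  (Y = ∅ ∧ a = b) ∨ ∃ u v, Seg L.Adj u v Y.val ∧ a ∈ e u ∧ b ∈ e v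

variable {L : SimpleGraph V} {H : SimpleGraph W} {e : V → Sym2 W} {S R J : Set W} {Z : Finset W}

theorem QS.trans (hR : Root L H e) {a b c : W} {X Y : Finset V} (h1 : QS L e a b X)
    (h2 : QS L e b c Y) (hd : Disjoint X Y) : QS L e a c (X ∪ Y) := by
  rcases h1 with ⟨rfl, rfl⟩ | ⟨u, v, hs, hu, hv⟩
  · simpa using h2
  rcases h2 with ⟨rfl, rfl⟩ | ⟨u', v', hs', hu', hv'⟩
  · rw [Finset.union_empty]; exact Or.inr ⟨u, v, hs, hu, hv⟩
  · right
    refine ⟨u, v', ?_, hu, hv'⟩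
    rw [← Finset.disjUnion_eq_union X Y hd]
    refine hs.append ((hR.adj v u').2 ⟨?_, b, hv, hu'⟩) hs'
    rintro rfl
    exact Finset.disjoint_left.1 hd hs.right_mem hs'.left_mem

theorem QS.empty {a : W} : QS L e a a ∅ := Or.inl ⟨rfl, rfl⟩

theorem QS.edge {a b : W} {v : V} (ha : a ∈ e v) (hb : b ∈ e v) : QS L e a b {v} :=
  Or.inr ⟨v, v, Seg.single v, ha, hb⟩

theorem QS.star (hR : Root L H e) {z : W} {X : Finset V} (h : ∀ v ∈ X, z ∈ e v) : QS L e z z X := by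
  induction X using Finset.induction_on with
  | empty => exact QS.empty
  | insert v X hv ih =>
    rw [Finset.insert_eq]
    refine (QS.edge (h v (by simp)) (h v (by simp))).trans hR
      (ih fun w hw => h w (by simp [hw])) (by simpa using hv)

theorem QS.fiber (hR : Root L H e) {ι : Type*} [DecidableEq ι] {z : W} {X : Finset V} (c : V → ι)
    (h : ∀ i, QS L e z z (X.filter fun v => c v = i)) : QS L e z z X := by
  have key : ∀ s : Finset ι, QS L e z z (X.filter fun v => c v ∈ s) := by
    intro s
    induction s using Finset.induction_on with
    | empty => simpa using QS.empty
    | insert i s hi ih =>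
      have : (X.filter fun v => c v ∈ insert i s) =
          (X.filter fun v => c v = i) ∪ (X.filter fun v => c v ∈ s) := by
        ext v; simp; tauto
      rw [this]
      refine (h i).trans hR ih ?_
      rw [Finset.disjoint_left]
      intro v h1 h2
      simp at h1 h2
      exact hi (h1.2 ▸ h2.2)
  have := key (X.image c)
  rwa [Finset.filter_true_of_mem (fun v hv => Finset.mem_image_of_mem c hv)] at this

theorem glue_path [DecidableEq W] (hR : Root L H e) {a b : W} {m : Multiset W} (h : Seg H.Adj a b m) (hm : m.Nodup) :
    ∃ E : Finset V, (∀ v ∈ E, ∀ x ∈ e v, x ∈ m) ∧ ∀ X : W → Finset V,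
      (∀ z z', z ≠ z' → Disjoint (X z) (X z')) → (∀ z, Disjoint (X z) E) →
      (∀ z ∈ m, QS L e z z (X z)) → QS L e a b (E ∪ m.toFinset.biUnion X) := by
  induction h with
  | single a =>
    refine ⟨∅, by simp, ?_⟩
    intro X _ _ h
    simpa using h a (by simp)
  | @cons a b c m h1 h2 ih =>
    obtain ⟨ham, hm'⟩ := Multiset.nodup_cons.1 hm
    obtain ⟨E, hE, hX⟩ := ih hm'
    obtain ⟨v, hv⟩ := hR.surj a b h1
    have hvE : v ∉ E := fun h => ham (hE v h a (by simp [hv]))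
    refine ⟨insert v E, ?_, ?_⟩
    · intro w hw x hx
      rcases Finset.mem_insert.1 hw with rfl | hw
      · rw [hv, Sym2.mem_iff] at hx
        rcases hx with rfl | rfl
        · simp
        · exact Multiset.mem_cons_of_mem h2.left_mem
      · exact Multiset.mem_cons_of_mem (hE w hw x hx)
    · intro X d1 d2 hq
      have d2' : ∀ z, v ∉ X z ∧ Disjoint (X z) E := by
        intro z; have := d2 z; rw [Finset.disjoint_insert_right] at this; exact this
      have k1 := hX X d1 (fun z => (d2' z).2) (fun z hz => hq z (Multiset.mem_cons_of_mem hz))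
      have k2 := (hq a (by simp)).trans hR (QS.edge (L := L) (e := e) (a := a) (b := b) (v := v) (by simp [hv]) (by simp [hv]))
        (by simpa using (d2' a).1)
      have k3 := k2.trans hR k1 (by
        rw [Finset.disjoint_left]
        intro w hw hw'
        simp only [Finset.mem_union, Finset.mem_singleton, Finset.mem_biUnion,
          Multiset.mem_toFinset] at hw hw'
        rcases hw with hw | rfl
        · rcases hw' with hw' | ⟨z, hz, hw'⟩
          · exact Finset.disjoint_left.1 (d2' a).2 hw hw'
          · exact Finset.disjoint_left.1 (d1 a z (by rintro rfl; exact ham hz)) hw hw'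
        · rcases hw' with hw' | ⟨z, hz, hw'⟩
          · exact hvE hw'
          · exact (d2' z).1 hw')
      convert k3 using 1
      ext w
      simp only [Finset.mem_union, Finset.mem_singleton, Finset.mem_biUnion, Finset.mem_insert,
          Multiset.mem_toFinset, Multiset.mem_cons]
      constructor
      · rintro ((h | h) | ⟨z, rfl | hz, h⟩)
        · tauto
        · tauto
        · tauto
        · exact Or.inr (Or.inr ⟨z, hz, h⟩)
      · rintro ((h | h) | h | ⟨z, hz, h⟩)
        · exact Or.inr ⟨a, Or.inl rfl, h⟩
        · tauto
        · tauto
        · exact Or.inr ⟨z, Or.inr hz, h⟩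

theorem glue_cycle [DecidableEq W] (hR : Root L H e) (hZ : IsCyc H Z) {z0 : W} (hz0 : z0 ∈ Z) :
    ∃ E : Finset V, (∀ v ∈ E, ∀ x ∈ e v, x ∈ Z) ∧ ∀ X : W → Finset V,
      (∀ z z', z ≠ z' → Disjoint (X z) (X z')) → (∀ z, Disjoint (X z) E) →
      (∀ z ∈ Z, QS L e z z (X z)) → QS L e z0 z0 (E ∪ Z.biUnion X) := by
  obtain ⟨b, hb, hs⟩ := hZ.rotate hz0
  have h3 : 3 ≤ Z.val.card := hZ.1
  have hndZ : Z.val.Nodup := Z.nodup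
  have hmZ : ∀ x, x ∈ Z ↔ x ∈ Z.val := fun x => Iff.rfl
  generalize Z.val = mz at hs h3 hndZ hmZ
  cases hs with
  | single => simp at h3
  | @cons _ p _ m h1 h2 =>
    obtain ⟨hzm, hm⟩ := Multiset.nodup_cons.1 hndZ
    have hpb : p ≠ b := by
      rintro rfl
      rw [h2.eq_single' hm] at h3
      simp at h3
    obtain ⟨E, hE, hX⟩ := glue_path hR h2 hm
    obtain ⟨v0, hv0⟩ := hR.surj _ _ h1
    obtain ⟨v1, hv1⟩ := hR.surj _ _ hb
    have h0E : v0 ∉ E := fun h => hzm (hE v0 h z0 (by simp [hv0]))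
    have h1E : v1 ∉ E := fun h => hzm (hE v1 h z0 (by simp [hv1]))
    have h01 : v0 ≠ v1 := by
      rintro rfl
      rw [hv0] at hv1
      have := h1.ne
      have := hb.ne
      rw [Sym2.eq_iff] at hv1
      grind
    refine ⟨insert v0 (insert v1 E), ?_, ?_⟩
    · intro w hw x hx
      rw [hmZ]
      rcases Finset.mem_insert.1 hw with rfl | hw
      · rw [hv0, Sym2.mem_iff] at hx
        rcases hx with rfl | rfl
        · simp
        · exact Multiset.mem_cons_of_mem h2.left_mem
      rcases Finset.mem_insert.1 hw with rfl | hw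
      · rw [hv1, Sym2.mem_iff] at hx
        rcases hx with rfl | rfl
        · exact Multiset.mem_cons_of_mem h2.right_mem
        · simp
      · exact Multiset.mem_cons_of_mem (hE w hw x hx)
    · intro X d1 d2 hq
      have d2' : ∀ z, v0 ∉ X z ∧ v1 ∉ X z ∧ Disjoint (X z) E := by
        intro z; have := d2 z
        rw [Finset.disjoint_insert_right, Finset.disjoint_insert_right] at this; exact this
      have k1 := hX X d1 (fun z => (d2' z).2.2) (fun z hz => hq z ((hmZ z).2 (Multiset.mem_cons_of_mem hz)))
      have k2 := (hq z0 hz0).trans hR (QS.edge (L := L) (e := e) (a := z0) (b := p) (v := v0)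
        (by simp [hv0]) (by simp [hv0])) (by simpa using (d2' z0).1)
      have k3 := k2.trans hR k1 (by
        rw [Finset.disjoint_left]
        intro w hw hw'
        simp only [Finset.mem_union, Finset.mem_singleton, Finset.mem_biUnion,
          Multiset.mem_toFinset] at hw hw'
        rcases hw with hw | rfl
        · rcases hw' with hw' | ⟨z, hz, hw'⟩
          · exact Finset.disjoint_left.1 (d2' z0).2.2 hw hw'
          · exact Finset.disjoint_left.1 (d1 z0 z (by rintro rfl; exact hzm hz)) hw hw'
        · rcases hw' with hw' | ⟨z, hz, hw'⟩
          · exact h0E hw'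
          · exact (d2' z).1 hw')
      have k4 := k3.trans hR (QS.edge (L := L) (e := e) (a := b) (b := z0) (v := v1)
        (by simp [hv1]) (by simp [hv1])) (by
        rw [Finset.disjoint_singleton_right]
        simp only [Finset.mem_union, Finset.mem_singleton, Finset.mem_biUnion,
          Multiset.mem_toFinset]
        rintro ((h | h) | h | ⟨z, hz, h⟩)
        · exact (d2' z0).2.1 h
        · exact h01 h.symm
        · exact h1E h
        · exact (d2' z).2.1 h)
      convert k4 using 1
      ext w
      simp only [Finset.mem_union, Finset.mem_singleton, Finset.mem_biUnion, Finset.mem_insert,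
          Multiset.mem_toFinset]
      constructor
      · rintro ((h | h | h) | ⟨z, hz, h⟩)
        · tauto
        · tauto
        · tauto
        · rw [hmZ, Multiset.mem_cons] at hz
          rcases hz with rfl | hz
          · tauto
          · exact Or.inl (Or.inr (Or.inr ⟨z, hz, h⟩))
      · rintro (((h | h) | h | ⟨z, hz, h⟩) | h)
        · exact Or.inr ⟨z0, hz0, h⟩
        · tauto
        · tauto
        · exact Or.inr ⟨z, (hmZ z).2 (Multiset.mem_cons_of_mem hz), h⟩
        · tauto

end Glue

open SimpleGraph
set_option linter.unusedSectionVars false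
set_option linter.unusedVariables false
set_option linter.unusedSimpArgs false

section Main
variable {V W : Type*} [Fintype V] [DecidableEq V]
variable {L : SimpleGraph V} {H : SimpleGraph W} {e : V → Sym2 W} {S R J : Set W} {Z : Finset W}

theorem Root.other (hR : Root L H e) {v : V} {x : W} (hx : x ∈ e v) :
    ∃ y, e v = s(x, y) ∧ H.Adj x y := by
  obtain ⟨y, hy⟩ := Sym2.mem_iff_exists.1 hx
  refine ⟨y, hy, ?_⟩
  have := hR.edge v
  rw [hy] at this
  exact this

theorem exists_comp (hZ : MaxCyc H e S R Z) {x y : W} (hxS : x ∈ S) (hx : x ∉ Z) (hy : y ∉ Z)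
    (hxy : H.Adj x y) : ∃ J, Comp H Z S J ∧ x ∈ J := by
  refine ⟨{w | JoinedIn' H {w | w ∉ Z} x w}, ⟨?_, ?_, ?_, ?_, ?_⟩, Relation.ReflTransGen.refl⟩
  · intro w hw
    rcases Relation.ReflTransGen.cases_tail hw with rfl | ⟨c, _, h⟩
    · exact hx
    · exact h.2.2
  · intro w hw
    have hw : JoinedIn' H {w | w ∉ Z} x w := hw
    induction hw with
    | refl => exact hxS
    | @tail b c h1 h2 ih =>
      by_contra hc
      exact h2.2.1 (hZ.RZ _ (hZ.leave b (ih h1) c hc h2.1))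
  · intro w hw z hz hwz
    have hwZ : w ∉ Z := by
      rcases Relation.ReflTransGen.cases_tail hw with rfl | ⟨c, _, h⟩
      · exact hx
      · exact h.2.2
    exact Relation.ReflTransGen.tail hw ⟨hwz, hwZ, hz⟩
  · have key : ∀ w, JoinedIn' H {w | w ∉ Z} x w → JoinedIn' H {w | JoinedIn' H {w | w ∉ Z} x w} x w := by
      intro w hw
      induction hw with
      | refl => exact Relation.ReflTransGen.refl
      | tail h1 h2 ih => exact ih.tail ⟨h2.1, h1, h1.tail h2⟩
    have sy : ∀ (T : Set W) (a b : W), JoinedIn' H T a b → JoinedIn' H T b a := by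
      intro T a b h
      induction h with
      | refl => exact Relation.ReflTransGen.refl
      | tail _ h ih => exact Relation.ReflTransGen.head ⟨h.1.symm, h.2.2, h.2.1⟩ ih
    intro a ha b hb
    exact Relation.ReflTransGen.trans (sy _ _ _ (key a ha)) (key b hb)
  · intro w hw
    rcases Relation.ReflTransGen.cases_tail hw with rfl | ⟨c, hc, h⟩
    · exact ⟨y, Relation.ReflTransGen.single ⟨hxy, hx, hy⟩, hxy⟩
    · exact ⟨c, hc, h.1.symm⟩

theorem Comp.eq {J' : Set W} (h : Comp H Z S J) (h' : Comp H Z S J') {x : W} (hx : x ∈ J)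
    (hx' : x ∈ J') : J = J' := by
  have key : ∀ {J J' : Set W}, Comp H Z S J → Comp H Z S J' → x ∈ J → x ∈ J' → J ⊆ J' := by
    intro J J' h h' hx hx' y hy
    have := h.conn x hx y hy
    induction this with
    | refl => exact hx'
    | @tail b c h1 h2 ih => exact h'.hJc b (ih h2.2.1) c (h.hJZ c hy) h2.1
  exact (key h h' hx hx').antisymm (key h' h hx' hx)

theorem Comp.eq_of_edge {J' : Set W} (hR : Root L H e) (h : Comp H Z S J) (h' : Comp H Z S J') {v : V}
    (h1 : ∃ x ∈ J, x ∈ e v) (h2 : ∃ x ∈ J', x ∈ e v) : J = J' := by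
  obtain ⟨x, hx, hxv⟩ := h1
  obtain ⟨y, hy, hyv⟩ := h2
  by_cases hxy : x = y
  · subst hxy; exact h.eq h' hx hy
  · have := (Sym2.mem_and_mem_iff hxy).1 ⟨hxv, hyv⟩
    have hadj : H.Adj x y := by have h2 := hR.edge v; rw [this] at h2; exact h2
    exact h.eq h' (h.hJc x hx y (h'.hJZ y hy) hadj) hy

theorem exists_att (hR : Root L H e)
    (hcon : ∀ P : V → Prop, (∀ u v, L.Adj u v → P u → P v) → ∀ a b, P a → P b)
    (hZ : MaxCyc H e S R Z) (hJ : Comp H Z S J) (hne : ∃ x, x ∈ J) : ∃ z ∈ Z, Att H J z := by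
  by_contra hno
  push Not at hno
  obtain ⟨x, hx⟩ := hne
  obtain ⟨y, hy, hxy⟩ := hJ.nt x hx
  obtain ⟨v, hv⟩ := hR.surj x y hxy
  obtain ⟨_, a, b, hba, hs⟩ := hZ.cyc
  obtain ⟨w, hw⟩ := hR.surj b a hba
  obtain ⟨c, hc, hcw⟩ := hcon (fun v => ∃ x ∈ J, x ∈ e v) (by
    rintro u v huv ⟨c, hc, hcu⟩
    obtain ⟨_, d, hd, hdv⟩ := (hR.adj u v).1 huv
    refine ⟨d, ?_, hdv⟩
    by_cases hcd : c = d
    · exact hcd ▸ hc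
    · have := (Sym2.mem_and_mem_iff hcd).1 ⟨hcu, hd⟩
      have hadj : H.Adj c d := by have h2 := hR.edge u; rw [this] at h2; exact h2
      refine hJ.hJc c hc d (fun hdZ => hno d hdZ ⟨c, hc, hadj.symm⟩) hadj) v w ⟨x, hx, by simp [hv]⟩
  rw [hw, Sym2.mem_iff] at hcw
  rcases hcw with rfl | rfl
  · exact hJ.hJZ _ hc hs.right_mem
  · exact hJ.hJZ _ hc hs.left_mem

theorem glue_main (hR : Root L H e)
    (hcon : ∀ P : V → Prop, (∀ u v, L.Adj u v → P u → P v) → ∀ a b, P a → P b)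
    (hZ : MaxCyc H e S R Z)
    (hbr : ∀ J z, Comp H Z S J → z ∈ Z → Att H J z → ∀ X : Finset V,
      (∀ v, v ∈ X ↔ ∃ x ∈ J, x ∈ e v) → QS L e z z X) {z0 : W} (hz0 : z0 ∈ Z) (Y : Finset V)
    (hY : ∀ v, v ∈ Y ↔ ∀ x ∈ e v, x ∈ S) : QS L e z0 z0 Y := by
  classical
  obtain ⟨E, hE, hX⟩ := glue_cycle hR hZ.cyc hz0
  have hφ : ∀ v, ∃ z, v ∈ Y → z ∈ Z ∧ (∀ J, Comp H Z S J → (∃ x ∈ J, x ∈ e v) → Att H J z) ∧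
      ((¬ ∃ J, Comp H Z S J ∧ ∃ x ∈ J, x ∈ e v) → z ∈ e v) := by
    intro v
    by_cases hv : v ∈ Y
    · by_cases hJ : ∃ J, Comp H Z S J ∧ ∃ x ∈ J, x ∈ e v
      · obtain ⟨J, hJ, hx⟩ := hJ
        obtain ⟨z, hz, hza⟩ := exists_att hR hcon hZ hJ ⟨hx.choose, hx.choose_spec.1⟩
        refine ⟨z, fun _ => ⟨hz, fun J' hJ' hx' => ?_, fun h => absurd ⟨J, hJ, hx⟩ h⟩⟩
        rwa [← hJ.eq_of_edge hR hJ' hx hx']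
      · by_cases hz : ∃ z ∈ Z, z ∈ e v
        · obtain ⟨z, hz, hzv⟩ := hz
          exact ⟨z, fun _ => ⟨hz, fun J h1 h2 => absurd ⟨J, h1, h2⟩ hJ, fun _ => hzv⟩⟩
        · exfalso
          push Not at hz
          obtain ⟨x, hxv⟩ : ∃ x, x ∈ e v := ⟨_, Sym2.out_fst_mem (e v)⟩
          obtain ⟨y, hy, hxy⟩ := hR.other hxv
          obtain ⟨J, h1, h2⟩ := exists_comp hZ ((hY v).1 hv x hxv) (fun h => hz x h hxv)
            (fun h => hz y h (by simp [hy])) hxy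
          exact hJ ⟨J, h1, x, h2, hxv⟩
    · exact ⟨z0, fun h => absurd h hv⟩
  choose φ hφ using hφ
  have main := hX (fun z => Y.filter fun v => v ∉ E ∧ φ v = z) (by
    intro z z' hzz
    rw [Finset.disjoint_left]
    intro v h1 h2
    simp at h1 h2
    exact hzz (h1.2.2.symm.trans h2.2.2)) (by
    intro z
    rw [Finset.disjoint_left]
    intro v h1 h2
    simp at h1
    exact h1.2.1 h2) (by
    intro z hz
    let c : V → Set W := fun v => if h : ∃ J, Comp H Z S J ∧ ∃ x ∈ J, x ∈ e v then h.choose else ∅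
    have hc1 : ∀ v J, Comp H Z S J → (∃ x ∈ J, x ∈ e v) → c v = J := by
      intro v J h1 h2
      have h : ∃ J, Comp H Z S J ∧ ∃ x ∈ J, x ∈ e v := ⟨J, h1, h2⟩
      have : c v = h.choose := by simp only [c]; rw [dif_pos h]
      rw [this]
      exact h.choose_spec.1.eq_of_edge hR h1 h.choose_spec.2 h2
    refine QS.fiber hR c ?_
    intro i
    by_cases hi : ∃ v ∈ Y, v ∉ E ∧ φ v = z ∧ c v = i ∧ ∃ J, Comp H Z S J ∧ ∃ x ∈ J, x ∈ e v
    · obtain ⟨v, hvY, hvE, hvz, hvi, J, hJ, hx⟩ := hi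
      have hiJ : i = J := hvi.symm.trans (hc1 v J hJ hx)
      subst hiJ
      have hza : Att H i z := hvz ▸ (hφ v hvY).2.1 i hJ hx
      refine hbr i z hJ hz hza _ ?_
      intro w
      simp only [Finset.mem_filter]
      constructor
      · rintro ⟨⟨hwY, hwE, hwz⟩, hwi⟩
        by_cases hw : ∃ J, Comp H Z S J ∧ ∃ x ∈ J, x ∈ e w
        · obtain ⟨J, hJ', hx'⟩ := hw
          rw [← hwi, hc1 w J hJ' hx']; exact hx'
        · have : c w = ∅ := by simp only [c]; rw [dif_neg hw]
          obtain ⟨x, hx, _⟩ := hx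
          rw [← hwi, this] at hx
          exact absurd hx (by simp)
      · intro hw
        have hwY : w ∈ Y := by
          rw [hY]
          obtain ⟨x, hx, hxw⟩ := hw
          obtain ⟨y, hy, hxy⟩ := hR.other hxw
          intro t ht
          rw [hy, Sym2.mem_iff] at ht
          rcases ht with rfl | rfl
          · exact hJ.hJS _ hx
          · by_cases hyZ : t ∈ Z
            · exact hZ.sub _ hyZ
            · exact hJ.hJS _ (hJ.hJc x hx t hyZ hxy)
        refine ⟨⟨hwY, ?_, ?_⟩, hc1 w i hJ hw⟩
        · intro hwE
          obtain ⟨x, hx, hxw⟩ := hw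
          exact hJ.hJZ x hx (hE w hwE x hxw)
        · exact cyc_unique hR hZ hJ (hφ w hwY).1 hz ((hφ w hwY).2.1 i hJ hw) hza
    · push Not at hi
      refine QS.star hR ?_
      intro w hw
      simp only [Finset.mem_filter] at hw
      obtain ⟨⟨hwY, hwE, hwz⟩, hwi⟩ := hw
      rw [← hwz]
      refine (hφ w hwY).2.2 ?_
      rintro ⟨J, h1, x, h2, h3⟩
      exact hi w hwY hwE hwz hwi J h1 x h2 h3)
  convert main using 1
  ext v
  simp only [Finset.mem_union, Finset.mem_biUnion, Finset.mem_filter]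
  constructor
  · intro hv
    by_cases hvE : v ∈ E
    · exact Or.inl hvE
    · exact Or.inr ⟨φ v, (hφ v hv).1, hv, hvE, rfl⟩
  · rintro (h | ⟨z, _, h, _⟩)
    · exact (hY v).2 fun x hx => hZ.sub x (hE v h x hx)
    · exact h

theorem exists_max [Finite W] {Z0 : Finset W} (h0 : IsCyc H Z0) (h1 : ∀ z ∈ Z0, z ∈ S)
    (h2 : ∀ r ∈ R, r ∈ Z0) (leave : ∀ x ∈ S, ∀ y, y ∉ S → H.Adj x y → x ∈ R)
    (out : ∀ r ∈ R, ∃ b, b ∉ S ∧ H.Adj r b) (Rss : ∀ r ∈ R, ∀ r' ∈ R, r = r') :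
    ∃ Z, MaxCyc H e S R Z := by
  obtain ⟨Z, ⟨k1, k2, k3⟩, hm⟩ := Set.exists_max_image
    {Z : Finset W | IsCyc H Z ∧ (∀ z ∈ Z, z ∈ S) ∧ ∀ r ∈ R, r ∈ Z} (dom e) (Set.toFinite _)
    ⟨Z0, h0, h1, h2⟩
  exact ⟨Z, k1, k2, k3, fun Z' a b c => hm Z' ⟨a, b, c⟩, leave, out, Rss⟩

/-- The statement about branches. -/
def BranchSt (L : SimpleGraph V) (H : SimpleGraph W) (e : V → Sym2 W) (J : Set W) : Prop :=
  ∀ r, r ∉ J → (∀ x ∈ J, ∀ y ∈ J, JoinedIn' H J x y) → (∀ x ∈ J, ∀ y, H.Adj x y → y ∈ J ∨ y = r) →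
    (∃ b, b ∉ J ∧ H.Adj r b) → ∀ X : Finset V, (∀ v, v ∈ X ↔ ∃ x ∈ J, x ∈ e v) → QS L e r r X

theorem BranchSt.apply (hR : Root L H e) (hZ : MaxCyc H e S R Z) (hJ : Comp H Z S J)
    (hb : BranchSt L H e J) {z : W} (hz : z ∈ Z) (hza : Att H J z) (X : Finset V)
    (hX : ∀ v, v ∈ X ↔ ∃ x ∈ J, x ∈ e v) : QS L e z z X := by
  refine hb z (fun h => hJ.hJZ z h hz) hJ.conn ?_ ?_ X hX
  · intro x hx y hxy
    by_cases hy : y ∈ Z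
    · exact Or.inr (cyc_unique hR hZ hJ hy hz ⟨x, hx, hxy.symm⟩ hza)
    · exact Or.inl (hJ.hJc x hx y hy hxy)
  · obtain ⟨b, hb, hs⟩ := hZ.cyc.rotate hz
    exact ⟨b, fun h => hJ.hJZ b h hs.right_mem, hb.symm⟩

theorem branch [Finite W] (hR : Root L H e)
    (hcon : ∀ P : V → Prop, (∀ u v, L.Adj u v → P u → P v) → ∀ a b, P a → P b)
    (hcut : ∀ (v0 : V) (P : V → Prop), (∀ u v, u ≠ v0 → v ≠ v0 → L.Adj u v → P u → P v) →
      ∀ a b, a ≠ v0 → b ≠ v0 → P a → P b) : ∀ (n : ℕ) (J : Set W), J.ncard ≤ n → BranchSt L H e J := by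
  intro n
  induction n with
  | zero =>
    intro J hJ r _ _ _ _ X hX
    have : J = ∅ := by
      rw [← Set.ncard_eq_zero (Set.toFinite _)]; omega
    refine QS.star hR ?_
    intro v hv
    obtain ⟨x, hx, _⟩ := (hX v).1 hv
    rw [this] at hx
    exact absurd hx (by simp)
  | succ n ih =>
    intro J hJn r hrJ conn hN hout X hX
    by_cases hedge : ∃ x ∈ J, ∃ y ∈ J, H.Adj x y
    swap
    · refine QS.star hR ?_
      intro v hv
      obtain ⟨x, hx, hxv⟩ := (hX v).1 hv
      obtain ⟨y, hy, hxy⟩ := hR.other hxv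
      rcases hN x hx y hxy with h | rfl
      · exact absurd ⟨x, hx, y, h, hxy⟩ hedge
      · simp [hy]
    obtain ⟨x0, hx0, y0, hy0, hxy0⟩ := hedge
    obtain ⟨b, hbJ, hrb⟩ := hout
    obtain ⟨v1, hv1⟩ := hR.surj _ _ hxy0
    obtain ⟨v2, hv2⟩ := hR.surj _ _ hrb
    have hv2n : ¬ ∃ x ∈ J, x ∈ e v2 := by
      rintro ⟨x, hx, hxv⟩
      rw [hv2, Sym2.mem_iff] at hxv
      rcases hxv with rfl | rfl
      · exact hrJ hx
      · exact hbJ hx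
    -- two edges sharing a point, one of them meeting `J`
    have step : ∀ u v, L.Adj u v → (∃ x ∈ J, x ∈ e u) → (∃ x ∈ J, x ∈ e v) ∨
        (r ∈ e u ∧ ∃ j ∈ J, e u = s(r, j)) := by
      rintro u v huv ⟨c, hc, hcu⟩
      obtain ⟨_, d, hd, hdv⟩ := (hR.adj u v).1 huv
      by_cases hcd : c = d
      · exact Or.inl ⟨c, hc, hcd ▸ hdv⟩
      have he := (Sym2.mem_and_mem_iff hcd).1 ⟨hcu, hd⟩
      have hadj : H.Adj c d := by have h2 := hR.edge u; rw [he] at h2; exact h2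
      rcases hN c hc d hadj with h | rfl
      · exact Or.inl ⟨d, h, hdv⟩
      · exact Or.inr ⟨hd, c, hc, by rw [he, Sym2.eq_swap]⟩
    obtain ⟨j, hj, hrj, j', hj', hrj', hjj⟩ : ∃ j ∈ J, H.Adj r j ∧ ∃ j' ∈ J, H.Adj r j' ∧ j ≠ j' := by
      by_contra hno
      push Not at hno
      by_cases h1 : ∃ j ∈ J, H.Adj r j
      · obtain ⟨j, hj, hrj⟩ := h1
        obtain ⟨v0, hv0⟩ := hR.surj _ _ hrj
        refine hv2n (hcut v0 (fun v => ∃ x ∈ J, x ∈ e v) ?_ v1 v2 ?_ ?_ ⟨x0, hx0, by simp [hv1]⟩)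
        · intro u v hu hv huv hP
          rcases step u v huv hP with h | ⟨_, j', hj', hu'⟩
          · exact h
          · exfalso
            apply hu
            apply hR.inj
            have hadj : H.Adj r j' := by have h2 := hR.edge u; rw [hu'] at h2; exact h2
            rw [hu', hv0, hno j hj hrj j' hj' hadj]
        · rintro rfl
          rw [hv1, Sym2.eq_iff] at hv0
          grind
        · rintro rfl
          exact hv2n ⟨j, hj, by simp [hv0]⟩
      · push Not at h1
        refine hv2n (hcon (fun v => ∃ x ∈ J, x ∈ e v) ?_ v1 v2 ⟨x0, hx0, by simp [hv1]⟩)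
        intro u v huv hP
        rcases step u v huv hP with h | ⟨_, j', hj', hu'⟩
        · exact h
        · exfalso
          have hadj : H.Adj r j' := by have h2 := hR.edge u; rw [hu'] at h2; exact h2
          exact h1 j' hj' hadj
    obtain ⟨q, hq, hqs, hqJ⟩ := seg_of_joined (conn j hj j' hj') hj
    have hrq : r ∉ q := fun h => hrJ (hqJ r h)
    have hq2 : 2 ≤ q.card := by
      by_contra hlt
      have h1 : q.card = 1 := by
        have : 1 ≤ q.card := Multiset.card_pos_iff_exists_mem.2 ⟨_, hqs.left_mem⟩
        omega
      obtain ⟨w, rfl⟩ := Multiset.card_eq_one.1 h1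
      have a1 := hqs.left_mem
      have a2 := hqs.right_mem
      rw [Multiset.mem_singleton] at a1 a2
      exact hjj (a1.trans a2.symm)
    obtain ⟨Z, hZ⟩ : ∃ Z, MaxCyc H e (J ∪ {r}) {r} Z := by
      refine exists_max (Z0 := ⟨r ::ₘ q, Multiset.nodup_cons.2 ⟨hrq, hq⟩⟩) ⟨?_, r, j', hrj'.symm,
        Seg.cons hrj hqs⟩ ?_ ?_ ?_ ?_ ?_
      · simp only [Finset.card_mk, Multiset.card_cons]; omega
      · intro z hz
        rcases Multiset.mem_cons.1 hz with rfl | h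
        · exact Or.inr rfl
        · exact Or.inl (hqJ z h)
      · rintro _ rfl
        exact Multiset.mem_cons_self _ _
      · intro x hx y hy hxy
        rcases hx with hx | hx
        · exact absurd (hN x hx y hxy) hy
        · exact hx
      · rintro _ rfl
        refine ⟨b, ?_, hrb⟩
        rintro (h | h)
        · exact hbJ h
        · exact hrb.ne h.symm
      · rintro _ rfl _ rfl; rfl
    have hrZ : r ∈ Z := hZ.RZ r rfl
    refine glue_main hR hcon hZ ?_ hrZ X ?_
    · intro J' z hJ' hz hza X' hX'
      refine BranchSt.apply hR hZ hJ' (ih J' ?_) hz hza X' hX'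
      have hsub : J' ⊂ J := by
        have hss : J' ⊆ J := by
          intro x hx
          rcases hJ'.hJS x hx with h | h
          · exact h
          · rw [Set.mem_singleton_iff] at h
            subst h
            exact absurd hrZ (hJ'.hJZ _ hx)
        obtain ⟨t, ht, htr⟩ := Finset.exists_mem_ne (s := Z) (by have := hZ.cyc.1; omega) r
        refine Set.ssubset_iff_exists.2 ⟨hss, t, ?_, fun h => hJ'.hJZ t h ht⟩
        rcases hZ.sub t ht with h | h
        · exact h
        · exact absurd h htr
      have := Set.ncard_lt_ncard hsub (Set.toFinite _)
      omega
    · intro v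
      rw [hX]
      constructor
      · rintro ⟨x, hx, hxv⟩ t ht
        obtain ⟨y, hy, hxy⟩ := hR.other hxv
        rw [hy, Sym2.mem_iff] at ht
        rcases ht with rfl | rfl
        · exact Or.inl hx
        · exact hN x hx t hxy
      · intro h
        obtain ⟨x, hxv⟩ : ∃ x, x ∈ e v := ⟨_, Sym2.out_fst_mem (e v)⟩
        obtain ⟨y, hy, hxy⟩ := hR.other hxv
        rcases h x hxv with hx | hx
        · exact ⟨x, hx, hxv⟩
        · rcases h y (by simp [hy]) with hy' | hy'
          · exact ⟨y, hy', by simp [hy]⟩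
          · exact absurd (hx.trans hy'.symm) hxy.ne

theorem root_ham [Finite W] (h3 : 3 ≤ Fintype.card V) (hR : Root L H e)
    (hcon : ∀ P : V → Prop, (∀ u v, L.Adj u v → P u → P v) → ∀ a b, P a → P b)
    (hcut : ∀ (v0 : V) (P : V → Prop), (∀ u v, u ≠ v0 → v ≠ v0 → L.Adj u v → P u → P v) →
      ∀ a b, a ≠ v0 → b ≠ v0 → P a → P b) {v w : V} (hvw : L.Adj v w) : HamC L := by
  suffices hz : ∃ z, QS L e z z Finset.univ by
    obtain ⟨z, hz⟩ := hz
    rcases hz with ⟨h, _⟩ | ⟨a, b, hs, ha, hb⟩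
    · exact absurd (Finset.mem_univ v) (h ▸ Finset.notMem_empty v)
    · refine ⟨a, b, (hR.adj a b).2 ⟨?_, z, ha, hb⟩, hs⟩
      rintro rfl
      have h1 := hs.eq_single' Finset.univ.nodup
      have h2 : Fintype.card V = 1 := by
        have := congrArg Multiset.card h1
        simpa using this
      omega
  obtain ⟨hne, a, hav, haw⟩ := (hR.adj v w).1 hvw
  obtain ⟨x1, hx1, ax1⟩ := hR.other hav
  obtain ⟨x2, hx2, ax2⟩ := hR.other haw
  have hx12 : x1 ≠ x2 := by
    rintro rfl; exact hne (hR.inj (hx1.trans hx2.symm))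
  by_cases hstar : ∀ x, H.Adj a x → ∀ y, H.Adj x y → y = a
  · refine ⟨a, QS.star hR ?_⟩
    intro t _
    refine hcon (fun t => a ∈ e t) ?_ v t hav
    intro p q hpq hp
    obtain ⟨hpq', d, hdp, hdq⟩ := (hR.adj p q).1 hpq
    by_cases had : a = d
    · exact had ▸ hdq
    have hpe := (Sym2.mem_and_mem_iff had).1 ⟨hp, hdp⟩
    have hadj : H.Adj a d := by have h2 := hR.edge p; rw [hpe] at h2; exact h2
    obtain ⟨y, hy, hdy⟩ := hR.other hdq
    have := hstar d hadj y hdy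
    subst this
    simp [hy]
  push Not at hstar
  obtain ⟨x, hax, y, hxy, hya⟩ := hstar
  obtain ⟨z, haz, hzx⟩ : ∃ z, H.Adj a z ∧ z ≠ x := by
    by_cases h : x1 = x
    · exact ⟨x2, ax2, fun h' => hx12 (h.trans h'.symm)⟩
    · exact ⟨x1, ax1, h⟩
  obtain ⟨v0, hv0⟩ := hR.surj _ _ hax
  obtain ⟨vz, hvz⟩ := hR.surj _ _ haz
  obtain ⟨vy, hvy⟩ := hR.surj _ _ hxy
  let Q : W → W → Prop := fun s t => H.Adj s t ∧ s(s, t) ≠ s(a, x)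
  have stepQ : ∀ t, t ≠ v0 → ∀ c ∈ e t, ∀ d ∈ e t, Relation.ReflTransGen Q a c →
      Relation.ReflTransGen Q a d := by
    intro t ht c hc d hd hac
    by_cases hcd : c = d
    · exact hcd ▸ hac
    have hte := (Sym2.mem_and_mem_iff hcd).1 ⟨hc, hd⟩
    have hadj : H.Adj c d := by have h2 := hR.edge t; rw [hte] at h2; exact h2
    refine hac.tail ⟨hadj, ?_⟩
    rw [← hte, ← hv0]
    exact fun h => ht (hR.inj h)
  have hvzn : vz ≠ v0 := by
    rintro rfl
    rw [hvz, Sym2.eq_iff] at hv0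
    have := hax.ne
    grind
  have hvyn : vy ≠ v0 := by
    rintro rfl
    rw [hvy, Sym2.eq_iff] at hv0
    grind
  obtain ⟨c, hc, hac⟩ := hcut v0 (fun t => ∃ c ∈ e t, Relation.ReflTransGen Q a c) (by
    rintro p q hp hq hpq ⟨c, hc, hac⟩
    obtain ⟨_, d, hdp, hdq⟩ := (hR.adj p q).1 hpq
    exact ⟨d, hdq, stepQ p hp c hc d hdp hac⟩) vz vy hvzn hvyn
    ⟨a, by simp [hvz], Relation.ReflTransGen.refl⟩
  have hax' : Relation.ReflTransGen Q a x := stepQ vy hvyn c hc x (by simp [hvy]) hac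
  obtain ⟨m, hm, hs⟩ := seg_of_rtg hax'
  have hc3 : 3 ≤ m.card := by
    cases hs with
    | single => exact absurd rfl hax.ne
    | cons k1 k2 =>
      cases k2 with
      | single => exact absurd rfl k1.2
      | cons k3 k4 =>
        have : ∀ {s t : W} {m : Multiset W}, Seg Q s t m → 1 ≤ m.card := fun h =>
          Multiset.card_pos_iff_exists_mem.2 ⟨_, h.left_mem⟩
        have := this k4
        simp only [Multiset.card_cons]; omega
  obtain ⟨Z, hZ⟩ : ∃ Z, MaxCyc H e Set.univ ∅ Z :=
    exists_max (Z0 := ⟨m, hm⟩) ⟨hc3, a, x, hax.symm, hs.mono fun _ _ h => h.1⟩ (by simp) (by simp)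
      (by simp) (by simp) (by simp)
  obtain ⟨z0, hz0⟩ : Z.Nonempty := Finset.card_pos.1 (by have := hZ.cyc.1; omega)
  refine ⟨z0, glue_main hR hcon hZ ?_ hz0 _ (by simp)⟩
  intro J z hJ hz hza X hX
  exact BranchSt.apply hR hZ hJ (branch hR hcon hcut _ J le_rfl) hz hza X hX

end Main

/-- Broersma's conjecture: a 2-connected claw-free graph in which every endvertex of
each induced net has degree at least `(n-2)/3` is hamiltonian. -/
theorem broersma_conjecture {V : Type*} [Fintype V] [DecidableEq V] (G : SimpleGraph V)
    (h2conn : TwoConnected G) (hclaw : ClawFree G)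
    (hnet : ∀ f : Fin 6 → V, IsInducedCopy netGraph G f →
      ∀ i : Fin 6, 3 ≤ (i : ℕ) →
        ((Fintype.card V : ℝ) - 2) / 3 ≤ (G.neighborSet (f i)).ncard) :
    G.IsHamiltonian := by
  by_contra hno
  obtain ⟨h3, h2⟩ := h2conn
  have hn : ¬ HamC G := fun h => hno (h.isHamiltonian h3)
  obtain ⟨L, hGL, hL, hLn, hC, hD⟩ := exists_closure h3 hclaw hn
  have hN := NetHyp.of_hnet hnet
  have hcut : ∀ (v0 : V) (P : V → Prop), (∀ u v, u ≠ v0 → v ≠ v0 → L.Adj u v → P u → P v) →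
      ∀ a b, a ≠ v0 → b ≠ v0 → P a → P b := by
    intro v0 P hP a b ha hb hPa
    obtain ⟨p⟩ := (h2 v0).preconnected ⟨a, ha⟩ ⟨b, hb⟩
    have : ∀ (x y : {w | w ≠ v0}), (G.induce {w | w ≠ v0}).Walk x y → P x → P y := by
      intro x y p
      induction p with
      | nil => exact id
      | @cons x y z h _ ih => exact fun hx => ih (hP x y x.2 y.2 (hGL h) hx)
    exact this _ _ p hPa
  have third : ∀ a b : V, ∃ c, c ≠ a ∧ c ≠ b := by
    intro a b
    by_contra hcon
    push Not at hcon
    have : (Finset.univ : Finset V) ⊆ {a, b} := by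
      intro c _
      by_cases h : c = a
      · simp [h]
      · simp [hcon c h]
    have h1 := Finset.card_le_card this
    have h2 := Finset.card_le_two (a := a) (b := b)
    rw [Finset.card_univ] at h1
    omega
  have hcon : ∀ P : V → Prop, (∀ u v, L.Adj u v → P u → P v) → ∀ a b, P a → P b := by
    intro P hP a b
    obtain ⟨c, hca, hcb⟩ := third a b
    exact hcut c P (fun u v _ _ h => hP u v h) a b hca.symm hcb.symm
  have hnb : ∀ v, ∃ b, L.Adj v b := by
    intro v
    by_contra hno
    push Not at hno
    obtain ⟨c, hc, _⟩ := third v v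
    exact hc (hcon (fun x => x = v) (by
      rintro u w huw rfl
      exact absurd huw (hno w)) v c rfl)
  obtain ⟨H, e, hR⟩ := exists_root hclaw hGL hL hD hC hN hnb
  haveI : Nonempty V := Fintype.card_pos_iff.1 (by omega)
  obtain ⟨v⟩ := this
  obtain ⟨w, hvw⟩ := hnb v
  exact hLn (root_ham h3 hR hcon hcut hvw)
end

section
/- Let H be an essentially 2-edge-connected simple graph and let x be a vertex of H with degree at least 2. If the graph obtained from H by deleting x has at most 3 edges, then H has a dominating closed trail that contains x. -/
open SimpleGraph

/-- A dominating closed trail of `H`: a closed walk repeating no edge such that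
every edge of `H` has an endpoint in its support. -/
def IsDCT {V : Type*} (H : SimpleGraph V) {v : V} (w : H.Walk v v) : Prop :=
  w.IsTrail ∧ ∀ e ∈ H.edgeSet, ∃ u ∈ w.support, u ∈ e

/-- `H` is essentially 2-edge-connected: it is connected and, for every edge `e`,
at most one connected component of `H - e` contains an edge (i.e. any two edges
of `H - e` lie in the same component). -/
def EssentiallyTwoEdgeConnected {V : Type*} (H : SimpleGraph V) : Prop :=
  H.Connected ∧ ∀ e ∈ H.edgeSet, ∀ a ∈ (H.deleteEdges {e}).edgeSet,
    ∀ b ∈ (H.deleteEdges {e}).edgeSet,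
      ∀ u ∈ a, ∀ w ∈ b, (H.deleteEdges {e}).Reachable u w

/-- `H` with all edges at `x` removed. -/
def delV {V : Type*} (H : SimpleGraph V) (x : V) : SimpleGraph V where
  Adj a b := H.Adj a b ∧ a ≠ x ∧ b ≠ x
  symm := ⟨fun _ _ h => ⟨h.1.symm, h.2.2, h.2.1⟩⟩
  loopless := ⟨fun _ h => h.1.ne rfl⟩

lemma delV_le {V : Type*} (H : SimpleGraph V) (x : V) : delV H x ≤ H := fun _ _ h => h.1

lemma hit {V : Type*} (G : SimpleGraph V) {u x : V} (w : G.Walk u x) (hu : u ≠ x) :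
    ∃ y, G.Adj y x ∧ (delV G x).Reachable u y := by
  induction w with
  | nil => exact absurd rfl hu
  | @cons a b c h p ih =>
    by_cases hb : b = c
    · subst hb; exact ⟨a, h, Reachable.refl _⟩
    · obtain ⟨y, hy, hr⟩ := ih hb
      have hab : (delV G c).Adj a b := ⟨h, hu, hb⟩
      exact ⟨y, hy, hab.reachable.trans hr⟩

lemma walk_avoid {V : Type*} {H : SimpleGraph V} {x a b : V} (p : (delV H x).Walk a b)
    (e : Sym2 V) (he : e ∈ p.edges) : x ∉ e := by
  have := p.edges_subset_edgeSet he
  induction e with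
  | _ s t =>
    have h : (delV H x).Adj s t := this
    simp only [Sym2.mem_iff, not_or]
    exact ⟨h.2.1.symm, h.2.2.symm⟩

lemma mk_trail {V : Type*} {H : SimpleGraph V} {x a b : V} (p : (delV H x).Walk a b)
    (hp : p.IsTrail) (hab : a ≠ b) (ha : H.Adj a x) (hb : H.Adj b x) :
    ∃ w : H.Walk x x, w.IsTrail ∧ 0 < w.length ∧ (∀ z ∈ p.support, z ∈ w.support) ∧
      (∀ e ∈ w.edges, e ∈ p.edges ∨ e = s(x, a) ∨ e = s(b, x)) := by
  have hav := walk_avoid p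
  refine ⟨Walk.cons ha.symm ((p.mapLe (delV_le H x)).concat hb), ?_, ?_, ?_, ?_⟩
  · rw [Walk.isTrail_def] at hp ⊢
    simp only [Walk.edges_cons, Walk.edges_concat, Walk.edges_mapLe_eq_edges, List.nodup_cons,
      List.concat_eq_append, List.mem_append, List.mem_singleton, List.nodup_append, not_or]
    have hbx := hb.ne
    refine ⟨⟨fun h => hav _ h (by simp), ?_⟩, hp, by simp, ?_⟩
    · intro h
      simp only [Sym2.eq_iff] at h
      grind
    · rintro e he f rfl rfl
      exact hav _ he (by simp)
  · simp
  · intro z hz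
    simp [Walk.support_concat, hz]
  · intro e he
    simp only [Walk.edges_cons, Walk.edges_concat, Walk.edges_mapLe_eq_edges, List.mem_cons,
      List.concat_eq_append, List.mem_append, List.not_mem_nil, or_false] at he
    tauto

lemma trail_nbr {V : Type*} {H : SimpleGraph V} {x c : V} (w : H.Walk x x)
    (hw : w.IsTrail) (hc : c ∈ w.support) (hcx : c ≠ x) :
    ∃ r ∈ w.support, (delV H x).Adj c r := by
  classical
  obtain ⟨p, q, rfl⟩ := Walk.mem_support_iff_exists_append.1 hc
  have hpn : ¬ p.Nil := fun h => hcx h.eq.symm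
  have hqn : ¬ q.Nil := fun h => hcx h.eq
  have h1 := p.mk_penultimate_end_mem_edges hpn
  have h2 := q.mk_start_snd_mem_edges hqn
  have hd : s(p.penultimate, c) ≠ s(c, q.snd) := by
    rw [Walk.isTrail_def, Walk.edges_append, List.nodup_append] at hw
    exact hw.2.2 _ h1 _ h2
  by_cases h : q.snd = x
  · refine ⟨p.penultimate, ?_, (p.adj_penultimate hpn).symm, hcx, ?_⟩
    · rw [Walk.mem_support_append_iff]
      exact Or.inl (Walk.fst_mem_support_of_mem_edges _ h1)
    · intro h'
      rw [h, h'] at hd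
      exact hd Sym2.eq_swap
  · refine ⟨q.snd, ?_, q.adj_snd hqn, hcx, h⟩
    rw [Walk.mem_support_append_iff]
    exact Or.inr (Walk.snd_mem_support_of_mem_edges _ h2)

lemma delV_card {V : Type*} [Fintype V] (H : SimpleGraph V) (x : V)
    (hfew : ((H.induce {w | w ≠ x}).edgeSet).ncard ≤ 3) : (delV H x).edgeSet.ncard ≤ 3 := by
  classical
  refine le_trans ?_ hfew
  have : (delV H x).edgeSet ⊆
      (Sym2.map (Subtype.val : {w | w ≠ x} → V)) '' (H.induce {w | w ≠ x}).edgeSet := by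
    intro e he
    induction e with
    | _ s t =>
      have h : (delV H x).Adj s t := he
      exact ⟨s(⟨s, h.2.1⟩, ⟨t, h.2.2⟩), h.1, rfl⟩
  exact (Set.ncard_le_ncard this (Set.toFinite _)).trans (Set.ncard_image_le (Set.toFinite _))

/-- deleting an edge `e`, any endpoint of another edge still reaches `x`. -/
lemma reach_x {V : Type*} [Fintype V] {H : SimpleGraph V}
    (hH : EssentiallyTwoEdgeConnected H) {x : V}
    (hdeg : 2 ≤ (H.neighborSet x).ncard) {e : Sym2 V} (he : e ∈ H.edgeSet) {u v : V}
    (huv : H.Adj u v) (hne : s(u, v) ≠ e) : (H.deleteEdges {e}).Reachable u x := by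
  obtain ⟨y, z, hy, hz, hyz⟩ := (Set.one_lt_ncard_iff (Set.toFinite _)).1 hdeg
  have key : ∃ y, H.Adj x y ∧ s(x, y) ≠ e := by
    by_cases h : s(x, y) = e
    · refine ⟨z, hz, fun h' => hyz ?_⟩
      rw [← h'] at h
      exact Sym2.congr_right.1 h
    · exact ⟨y, hy, h⟩
  obtain ⟨y, hy, hye⟩ := key
  refine hH.2 e he s(u, v) ?_ s(x, y) ?_ u (by simp) x (by simp)
  · simp [huv, hne]
  · simp [hy, hye]

lemma caseA {V : Type*} [Fintype V] (H : SimpleGraph V)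
    (hH : EssentiallyTwoEdgeConnected H) (x : V)
    (hdeg : 2 ≤ (H.neighborSet x).ncard)
    (hfew : (delV H x).edgeSet.ncard ≤ 3) {a b u v : V}
    (hab : (delV H x).Adj a b) (hbu : (delV H x).Adj b u) (huv : (delV H x).Adj u v)
    (hau : a ≠ u) (hav : a ≠ v) (hbv : b ≠ v) :
    ∃ (v : V) (w : H.Walk v v), IsDCT H w ∧ x ∈ w.support := by
  classical
  have n1 := hab.ne
  have n2 := hbu.ne
  have n3 := huv.ne
  have hE : ({s(a, b), s(b, u), s(u, v)} : Set (Sym2 V)) = (delV H x).edgeSet := by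
    refine Set.eq_of_subset_of_ncard_le ?_ ?_ (Set.toFinite _)
    · rintro e (rfl | rfl | rfl)
      exacts [hab, hbu, huv]
    · refine hfew.trans (le_of_eq ?_)
      symm
      refine Set.ncard_eq_three.2 ⟨_, _, _, ?_, ?_, ?_, rfl⟩ <;>
        simp only [ne_eq, Sym2.eq_iff] <;> grind
  have hK : ∀ s t, (delV H x).Adj s t → s(s, t) = s(a, b) ∨ s(s, t) = s(b, u) ∨ s(s, t) = s(u, v) := by
    intro s t h
    have : s(s, t) ∈ (delV H x).edgeSet := h
    rw [← hE] at this
    simpa using this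
  -- endpoints
  have hr1 : (H.deleteEdges {s(b, u)}).Reachable b x :=
    reach_x hH hdeg hbu.1 hab.1.symm (by simp only [ne_eq, Sym2.eq_iff]; grind)
  have hr2 : (H.deleteEdges {s(b, u)}).Reachable u x :=
    reach_x hH hdeg hbu.1 huv.1 (by simp only [ne_eq, Sym2.eq_iff]; grind)
  have step : ∀ s t, (delV (H.deleteEdges {s(b, u)}) x).Adj s t →
      s(s, t) = s(a, b) ∨ s(s, t) = s(u, v) := by
    rintro s t ⟨h, h1, h2⟩
    rw [deleteEdges_adj] at h
    have := hK s t ⟨h.1, h1, h2⟩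
    have h3 := h.2
    simp only [Set.mem_singleton_iff] at h3
    tauto
  have inv : ∀ s t, (delV (H.deleteEdges {s(b, u)}) x).Walk s t →
      ((s = a ∨ s = b) → (t = a ∨ t = b)) ∧ ((s = u ∨ s = v) → (t = u ∨ t = v)) := by
    intro s t w
    induction w with
    | nil => exact ⟨id, id⟩
    | cons h p ih =>
      have := step _ _ h
      simp only [Sym2.eq_iff] at this
      grind
  obtain ⟨w1⟩ := hr1
  obtain ⟨w2⟩ := hr2
  obtain ⟨y1, hy1, ⟨p1⟩⟩ := hit _ w1 hab.2.2
  obtain ⟨y2, hy2, ⟨p2⟩⟩ := hit _ w2 huv.2.1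
  have c1 := (inv _ _ p1).1 (Or.inr rfl)
  have c2 := (inv _ _ p2).2 (Or.inl rfl)
  have hy1' : H.Adj y1 x := (deleteEdges_le _) hy1
  have hy2' : H.Adj y2 x := (deleteEdges_le _) hy2
  have hp : ∃ p : (delV H x).Walk y1 y2, p.IsPath ∧ b ∈ p.support ∧ u ∈ p.support := by
    rcases c1 with rfl | rfl <;> rcases c2 with rfl | rfl
    · exact ⟨.cons hab (.cons hbu .nil), by simp [*], by simp, by simp⟩
    · exact ⟨.cons hab (.cons hbu (.cons huv .nil)), by simp [*], by simp, by simp⟩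
    · exact ⟨.cons hbu .nil, by simp [*], by simp, by simp⟩
    · exact ⟨.cons hbu (.cons huv .nil), by simp [*], by simp, by simp⟩
  obtain ⟨p, hp, hpb, hpu⟩ := hp
  have hne : y1 ≠ y2 := by grind
  obtain ⟨w, hw, -, hs, -⟩ := mk_trail p hp.isTrail hne hy1' hy2'
  refine ⟨x, w, ⟨hw, ?_⟩, by simp⟩
  intro e he
  induction e with
  | _ s t =>
    have he : H.Adj s t := he
    by_cases h1 : s = x
    · exact ⟨x, by simp, by simp [h1]⟩
    by_cases h2 : t = x
    · exact ⟨x, by simp, by simp [h2]⟩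
    rcases hK s t ⟨he, h1, h2⟩ with h | h | h <;> rw [h]
    · exact ⟨b, hs _ hpb, by simp⟩
    · exact ⟨b, hs _ hpb, by simp⟩
    · exact ⟨u, hs _ hpu, by simp⟩

/-- If `H` is essentially 2-edge-connected, `x` has degree at least 2, and `H - x`
has at most 3 edges, then `H` has a dominating closed trail through `x`. -/
theorem dct_through_vertex {V : Type*} [Fintype V] (H : SimpleGraph V)
    (hH : EssentiallyTwoEdgeConnected H) (x : V)
    (hdeg : 2 ≤ (H.neighborSet x).ncard)
    (hfew : ((H.induce {w | w ≠ x}).edgeSet).ncard ≤ 3) :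
    ∃ (v : V) (w : H.Walk v v), IsDCT H w ∧ x ∈ w.support := by
  classical
  have hfew' := delV_card H x hfew
  by_cases hA : ∃ a b u v : V, (delV H x).Adj a b ∧ (delV H x).Adj b u ∧ (delV H x).Adj u v ∧
      a ≠ u ∧ a ≠ v ∧ b ≠ v
  · obtain ⟨a, b, u, v, h1, h2, h3, h4, h5, h6⟩ := hA
    exact caseA H hH x hdeg hfew' h1 h2 h3 h4 h5 h6
  -- a longest closed trail at `x`
  obtain ⟨T, hT, hmax⟩ : ∃ T : H.Walk x x, T.IsTrail ∧
      ∀ T' : H.Walk x x, T'.IsTrail → T'.length ≤ T.length := by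
    let P : ℕ → Prop := fun n => ∃ w : H.Walk x x, w.IsTrail ∧ w.length = n
    have hb : ∀ w : H.Walk x x, w.IsTrail → w.length ≤ H.edgeFinset.card :=
      fun w hw => hw.length_le_card_edgeFinset
    obtain ⟨T, hT, hl⟩ : P (Nat.findGreatest P H.edgeFinset.card) :=
      Nat.findGreatest_spec (P := P) (Nat.zero_le _) ⟨Walk.nil, by simp, rfl⟩
    refine ⟨T, hT, fun T' hT' => ?_⟩
    rw [hl]
    exact Nat.le_findGreatest (hb T' hT') ⟨T', hT', rfl⟩
  refine ⟨x, T, ⟨hT, ?_⟩, by simp⟩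
  by_contra hcon
  push Not at hcon
  obtain ⟨e, he, hnd⟩ := hcon
  induction e with
  | _ u v =>
  have huv : H.Adj u v := he
  have hu : u ∉ T.support := fun h => hnd u h (by simp)
  have hv : v ∉ T.support := fun h => hnd v h (by simp)
  have hux : u ≠ x := by rintro rfl; exact hu (by simp)
  have hvx : v ≠ x := by rintro rfl; exact hv (by simp)
  have inv : ∀ s t, (delV H x).Walk s t →
      (s ∉ T.support ∧ ∃ r, r ∉ T.support ∧ (delV H x).Adj s r) →
      (t ∉ T.support ∧ ∃ r, r ∉ T.support ∧ (delV H x).Adj t r) := by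
    intro s t w
    induction w with
    | nil => exact id
    | @cons s z t h p ih =>
      rintro ⟨hs, r, hr, hsr⟩
      refine ih ⟨fun hz => ?_, s, hs, h.symm⟩
      obtain ⟨q, hq, hzq⟩ := trail_nbr T hT hz h.2.2
      refine hA ⟨r, s, z, q, hsr.symm, h, hzq, ?_, ?_, ?_⟩
      · rintro rfl; exact hr hz
      · rintro rfl; exact hr hq
      · rintro rfl; exact hs hq
  have hC : ∀ t, (delV H x).Reachable u t → t ∉ T.support := by
    rintro t ⟨w⟩
    exact (inv u t w ⟨hu, v, hv, huv, hux, hvx⟩).1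
  obtain ⟨w1⟩ := hH.1.preconnected u x
  obtain ⟨y1, hy1, hr1⟩ := hit H w1 hux
  obtain ⟨w2⟩ := reach_x hH hdeg (e := s(y1, x)) hy1 huv
    (by simp only [ne_eq, Sym2.eq_iff]; grind)
  obtain ⟨y2, hy2, ⟨p2⟩⟩ := hit _ w2 hux
  rw [deleteEdges_adj] at hy2
  have hr2 : (delV H x).Reachable u y2 :=
    Reachable.mono (G := delV (H.deleteEdges {s(y1, x)}) x)
      (fun _ _ h => ⟨(deleteEdges_le _) h.1, h.2⟩) ⟨p2⟩
  have hne : y1 ≠ y2 := by rintro rfl; exact hy2.2 rfl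
  obtain ⟨p, hp⟩ := (hr1.symm.trans hr2).exists_isPath
  obtain ⟨T', hT', hlen, -, hed⟩ := mk_trail p hp.isTrail hne hy1 hy2.1
  have hbig : (T.append T').IsTrail := by
    rw [Walk.isTrail_def] at hT hT' ⊢
    rw [Walk.edges_append, List.nodup_append]
    refine ⟨hT, hT', ?_⟩
    rintro e heT f heT' rfl
    have : ∃ z ∈ e, (delV H x).Reachable u z := by
      rcases hed e heT' with h | rfl | rfl
      · induction e with
        | _ s t =>
          have := p.fst_mem_support_of_mem_edges h
          exact ⟨s, by simp, hr1.trans ⟨p.takeUntil s this⟩⟩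
      · exact ⟨y1, by simp, hr1⟩
      · exact ⟨y2, by simp, hr2⟩
    obtain ⟨z, hz, hr⟩ := this
    exact hC z hr (Walk.mem_support_of_mem_edges heT hz)
  have := hmax _ hbig
  rw [Walk.length_append] at this
  omega
end
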